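/- arXiv:2105.06848 — 4 statements merged into one kernel-verified Lean document; each statement's English description precedes it below -/
import Mathlib

section
/- Fix 1/2 < σ₀ < 1 and a nonnegative integer m. For almost all ω ∈ Ω = ∏_p γ_p (with product Haar measure), the Dirichlet series η̃_m(s, ω) = ∑_{n=2}^∞ Λ(n) ω(n) / (n^s (log n)^{m+1}) converges and defines a holomorphic function on the half-plane Re(s) > σ₀. -/
open Complex MeasureTheory Filter

noncomputable instance : MeasurableSpace Circle := borel Circle
instance : BorelSpace Circle := ⟨rfl⟩

/-- `ω(n) = ∏_{p^r ∥ n} ω(p)^r` for `ω` a point of `∏_p γ_p`. -/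
noncomputable def omegaMul (ω : Nat.Primes → Circle) (n : ℕ) : ℂ :=
  ∏ p ∈ n.primeFactors,
    if h : p.Prime then ((ω ⟨p, h⟩ : ℂ) ^ (n.factorization p)) else 1

lemma diff_cpow_bound (w : ℂ) (d : ℝ) (hw : d ≤ w.re) (hd : 0 < d) (i : ℕ) (hi : 1 ≤ i) :
    ‖((i + 1 : ℕ) : ℂ) ^ (-w) - (i : ℂ) ^ (-w)‖ ≤ ‖w‖ * (i : ℝ) ^ (-1 - d) := by
  have hi' : (1 : ℝ) ≤ i := by exact_mod_cast hi
  have key := norm_image_sub_le_of_norm_deriv_le_segment' (a := (i : ℝ)) (b := (i : ℝ) + 1)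
    (f := fun t : ℝ => (t : ℂ) ^ (-w)) (f' := fun t : ℝ => (-w) * (t : ℂ) ^ (-w - 1))
    (C := ‖w‖ * (i : ℝ) ^ (-1 - d))
    (fun x hx => by
      have hx0 : 0 < x := by linarith [hx.1]
      have h1 : HasDerivAt (fun z : ℂ => z ^ (-w)) ((-w) * (x : ℂ) ^ (-w - 1)) (x : ℂ) := by
        have := (hasDerivAt_id (x : ℂ)).cpow_const (c := -w) (Or.inl (by simpa using hx0))
        simpa using this
      exact h1.comp_ofReal.hasDerivWithinAt)
    (fun x hx => by
      have hx0 : 0 < x := by linarith [hx.1]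
      rw [norm_mul, norm_neg, norm_cpow_eq_rpow_re_of_pos hx0]
      refine mul_le_mul_of_nonneg_left ?_ (norm_nonneg _)
      have e : (-w - 1).re = -w.re - 1 := by simp
      rw [e]
      calc x ^ (-w.re - 1) ≤ x ^ (-1 - d) :=
            Real.rpow_le_rpow_of_exponent_le (by linarith [hx.1]) (by linarith)
        _ ≤ (i : ℝ) ^ (-1 - d) :=
            Real.rpow_le_rpow_of_nonpos (by linarith) hx.1 (by linarith))
    ((i : ℝ) + 1) (by constructor <;> linarith)
  simpa using key

lemma abel_locunif (σ₀ : ℝ) (b : ℕ → ℂ) (M : ℝ)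
    (hM : ∀ N, ‖∑ n ∈ Finset.range N, b n‖ ≤ M) :
    ∃ f : ℂ → ℂ, TendstoLocallyUniformlyOn
      (fun (N : ℕ) (s : ℂ) => ∑ n ∈ Finset.range N, (n : ℂ) ^ (-(s - σ₀)) * b n)
        f atTop {s : ℂ | σ₀ < s.re} := by
  have hM0 : 0 ≤ M := (norm_nonneg _).trans (hM 0)
  set B : ℕ → ℂ := fun N => ∑ n ∈ Finset.range N, b n with hB
  set D : ℕ → ℂ → ℂ := fun i s =>
    (((i + 1 : ℕ) : ℂ) ^ (-(s - σ₀)) - (i : ℂ) ^ (-(s - σ₀))) * B (i + 1) with hD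
  refine ⟨fun s => 0 - ∑' i, D i s, ?_⟩
  have hsum : ∀ (N : ℕ) (s : ℂ), ∑ n ∈ Finset.range N, (n : ℂ) ^ (-(s - σ₀)) * b n
      = ((N - 1 : ℕ) : ℂ) ^ (-(s - σ₀)) * B N - ∑ i ∈ Finset.range (N - 1), D i s := by
    intro N s
    have := Finset.sum_range_by_parts (fun n : ℕ => (n : ℂ) ^ (-(s - σ₀))) b N
    exact this
  simp_rw [hsum]
  rw [tendstoLocallyUniformlyOn_iff_forall_isCompact
    (isOpen_lt continuous_const Complex.continuous_re)]
  intro K hK hKc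
  obtain ⟨R, hR⟩ := (hKc.image (f := fun s : ℂ => ‖s - σ₀‖) (by fun_prop)).bddAbove
  have hR' : ∀ s ∈ K, ‖s - σ₀‖ ≤ R := fun s hs => hR ⟨s, hs, rfl⟩
  obtain ⟨d, hd, hdK⟩ : ∃ d > 0, ∀ s ∈ K, d ≤ (s - σ₀).re := by
    rcases K.eq_empty_or_nonempty with h | h
    · exact ⟨1, one_pos, by simp [h]⟩
    · obtain ⟨s0, hs0, hmin⟩ := hKc.exists_isMinOn h Complex.continuous_re.continuousOn
      refine ⟨s0.re - σ₀, sub_pos.2 (hK hs0), fun s hs => ?_⟩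
      have := hmin hs
      simp at this ⊢
      exact this
  have hsumm : Summable (fun i : ℕ => (R * M) * (i : ℝ) ^ (-1 - d)) :=
    (Real.summable_nat_rpow.2 (by linarith)).mul_left _
  have hu := tendstoUniformlyOn_tsum_nat_eventually (f := D) (s := K) hsumm (by
    filter_upwards [eventually_ge_atTop 1] with i hi s hs
    simp only [hD, norm_mul]
    calc _ ≤ (‖s - σ₀‖ * (i : ℝ) ^ (-1 - d)) * M :=
          mul_le_mul (diff_cpow_bound _ d (hdK s hs) hd i hi) (hM _) (norm_nonneg _)
            (by positivity)
      _ ≤ (R * (i : ℝ) ^ (-1 - d)) * M := by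
          gcongr
          exact hR' s hs
      _ = _ := by ring)
  have hu' : TendstoUniformlyOn (fun N s => ∑ i ∈ Finset.range (N - 1), D i s)
      (fun s => ∑' i, D i s) atTop K :=
    fun v hv => (tendsto_sub_atTop_nat 1).eventually (hu v hv)
  have h0 : TendstoUniformlyOn (fun (N : ℕ) (s : ℂ) =>
      ((N - 1 : ℕ) : ℂ) ^ (-(s - σ₀)) * B N) (fun _ => 0) atTop K := by
    rw [Metric.tendstoUniformlyOn_iff]
    intro ε hε
    have ht : Tendsto (fun N : ℕ => ((N - 1 : ℕ) : ℝ) ^ (-d) * M) atTop (nhds 0) := by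
      have := ((tendsto_rpow_neg_atTop hd).comp
        (tendsto_natCast_atTop_atTop.comp (tendsto_sub_atTop_nat 1))).mul_const M
      simpa using this
    filter_upwards [ht.eventually_lt_const hε, eventually_ge_atTop 2] with N hN hN2 s hs
    rw [dist_zero_left, norm_mul]
    refine lt_of_le_of_lt ?_ hN
    have h1 : (1 : ℝ) ≤ ((N - 1 : ℕ) : ℝ) := by exact_mod_cast (by omega : 1 ≤ N - 1)
    refine mul_le_mul ?_ (hM _) (norm_nonneg _) (by positivity)
    rw [Complex.norm_natCast_cpow_of_pos (by omega)]
    refine Real.rpow_le_rpow_of_exponent_le h1 ?_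
    have := hdK s hs
    rw [neg_re]
    linarith
  exact h0.sub hu'
abbrev PP := Nat.Primes → Circle

/-- restriction to primes below `n` -/
def restrP (n : ℕ) (ω : PP) : {p : Nat.Primes // p.1 < n} → Circle := fun p => ω p.1

noncomputable def filtP : Filtration ℕ (inferInstance : MeasurableSpace PP) where
  seq n := MeasurableSpace.comap (restrP n) inferInstance
  mono' := by
    intro i j hij
    have : restrP i = (fun (x : {p : Nat.Primes // p.1 < j} → Circle)
      (p : {p : Nat.Primes // p.1 < i}) => x ⟨p.1, p.2.trans_le hij⟩) ∘ restrP j := rfl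
    simp only
    rw [this, ← MeasurableSpace.comap_comp]
    refine MeasurableSpace.comap_mono ?_
    rw [← measurable_iff_comap_le]
    fun_prop
  le' := by
    intro i
    rw [← measurable_iff_comap_le]
    unfold restrP
    fun_prop

/-- the flip element -/
noncomputable def flipP (p : Nat.Primes) : PP := Function.update 1 p (Circle.exp Real.pi)

def mkP (n : ℕ) (h : n.Prime) : Nat.Primes := ⟨n, h⟩

noncomputable def evalP (n : ℕ) (ω : PP) : ℂ := if h : n.Prime then (ω (mkP n h) : ℂ) else 0

noncomputable def Yp (u : ℕ → ℂ) (n : ℕ) (ω : PP) : ℝ := (u n * evalP n ω).re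

noncomputable def Xp (u : ℕ → ℂ) (n : ℕ) (ω : PP) : ℝ := ∑ k ∈ Finset.range n, Yp u k ω

lemma evalP_flip_self (p : Nat.Primes) (ω : PP) : evalP p.1 (flipP p * ω) = - evalP p.1 ω := by
  have hp : p.1.Prime := p.2
  have e : mkP p.1 hp = p := rfl
  simp only [evalP, hp, dite_true, e, flipP, Pi.mul_apply, Function.update_self, Circle.coe_mul,
    Circle.coe_exp, Complex.exp_pi_mul_I]
  ring

lemma evalP_flip_ne (p : Nat.Primes) (n : ℕ) (h : n ≠ p.1) (ω : PP) :
    evalP n (flipP p * ω) = evalP n ω := by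
  unfold evalP
  split_ifs with hn
  · have : mkP n hn ≠ p := fun e => h (by rw [← e]; rfl)
    simp only [flipP, Pi.mul_apply, Function.update_of_ne this, Pi.one_apply, one_mul]
  · rfl

lemma evalP_norm_le (n : ℕ) (ω : PP) : ‖evalP n ω‖ ≤ 1 := by
  unfold evalP
  split_ifs
  · exact (Circle.norm_coe _).le
  · simp

lemma evalP_meas_filt (n k : ℕ) (h : k < n) : Measurable[filtP n] (evalP k) := by
  by_cases hk : k.Prime
  · have : evalP k = (fun x : {p : Nat.Primes // p.1 < n} → Circle =>
        ((x ⟨mkP k hk, h⟩ : Circle) : ℂ)) ∘ restrP n := by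
      funext ω
      simp [evalP, hk, restrP]
    rw [this]
    refine Measurable.comp ?_ (comap_measurable (restrP n))
    exact (show Continuous (fun z : Circle => (z : ℂ)) by fun_prop).measurable.comp (measurable_pi_apply _)
  · have : evalP k = fun _ => 0 := by
      funext ω
      simp [evalP, hk]
    rw [this]
    exact measurable_const

lemma Yp_meas_filt (u : ℕ → ℂ) (n k : ℕ) (h : k < n) : Measurable[filtP n] (Yp u k) :=
  Complex.measurable_re.comp ((evalP_meas_filt n k h).const_mul (u k))

lemma Xp_meas_filt (u : ℕ → ℂ) (n : ℕ) : Measurable[filtP n] (Xp u n) := by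
  unfold Xp
  exact Finset.measurable_fun_sum _ (fun k hk => Yp_meas_filt u n k (Finset.mem_range.1 hk))

lemma Yp_meas (u : ℕ → ℂ) (n : ℕ) : Measurable (Yp u n) :=
  (Yp_meas_filt u (n + 1) n (by omega)).mono (filtP.le _) le_rfl

lemma Xp_meas (u : ℕ → ℂ) (n : ℕ) : Measurable (Xp u n) :=
  (Xp_meas_filt u n).mono (filtP.le _) le_rfl

lemma Yp_bound (u : ℕ → ℂ) (n : ℕ) (ω : PP) : |Yp u n ω| ≤ ‖u n‖ := by
  refine (Complex.abs_re_le_norm _).trans ?_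
  rw [norm_mul]
  exact mul_le_of_le_one_right (norm_nonneg _) (evalP_norm_le n ω)

lemma Xp_bound (u : ℕ → ℂ) (n : ℕ) (ω : PP) : |Xp u n ω| ≤ ∑ k ∈ Finset.range n, ‖u k‖ :=
  (Finset.abs_sum_le_sum_abs _ _).trans (Finset.sum_le_sum fun k _ => Yp_bound u k ω)

section
variable (μ : Measure PP) [IsProbabilityMeasure μ] [μ.IsHaarMeasure]

lemma integral_zero_of_anti (f : PP → ℝ) (g : PP) (h : ∀ ω, f (g * ω) = - f ω) :
    ∫ ω, f ω ∂μ = 0 := by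
  have h1 := integral_mul_left_eq_self (μ := μ) f g
  simp_rw [h, integral_neg] at h1
  linarith

lemma cross_zero (u : ℕ → ℂ) (n : ℕ) (Z : PP → ℝ)
    (hZ : ∀ (p : Nat.Primes), p.1 = n → ∀ ω, Z (flipP p * ω) = Z ω) :
    ∫ ω, Z ω * Yp u n ω ∂μ = 0 := by
  by_cases hn : n.Prime
  · refine integral_zero_of_anti μ _ (flipP (mkP n hn)) (fun ω => ?_)
    rw [hZ (mkP n hn) rfl]
    have := evalP_flip_self (mkP n hn) ω
    change evalP n _ = - evalP n ω at this
    simp only [Yp, this, mul_neg, neg_re]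
  · simp [Yp, evalP, hn]

lemma Xp_int (u : ℕ → ℂ) (n : ℕ) : Integrable (Xp u n) μ :=
  Integrable.of_bound (Xp_meas u n).aestronglyMeasurable _
    (ae_of_all _ fun ω => by simpa using Xp_bound u n ω)

lemma Yp_int (u : ℕ → ℂ) (n : ℕ) : Integrable (Yp u n) μ :=
  Integrable.of_bound (Yp_meas u n).aestronglyMeasurable _
    (ae_of_all _ fun ω => by simpa using Yp_bound u n ω)

lemma Xp_mart (u : ℕ → ℂ) : Martingale (Xp u) filtP μ := by
  refine martingale_of_setIntegral_eq_succ
    (fun n => (Xp_meas_filt u n).stronglyMeasurable) (Xp_int μ u) ?_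
  intro n s hs
  have hs' : MeasurableSet s := filtP.le n s hs
  have e : ∀ ω, Xp u (n + 1) ω = Xp u n ω + Yp u n ω := fun ω => by
    simp [Xp, Finset.sum_range_succ]
  simp_rw [e]
  rw [integral_add (Xp_int μ u n).integrableOn (Yp_int μ u n).integrableOn]
  have : ∫ ω in s, Yp u n ω ∂μ = 0 := by
    rw [← integral_indicator hs']
    have e2 : s.indicator (Yp u n) = fun ω => s.indicator (fun _ => (1 : ℝ)) ω * Yp u n ω := by
      funext ω
      by_cases h : ω ∈ s <;> simp [h]
    rw [e2]
    refine cross_zero μ u n _ ?_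
    intro p hp ω
    obtain ⟨t, -, rfl⟩ := hs
    have : restrP n (flipP p * ω) = restrP n ω := by
      funext q
      have : q.1 ≠ p := fun e => by
        have := q.2
        rw [e, hp] at this
        exact lt_irrefl _ this
      simp [restrP, flipP, Function.update_of_ne this]
    have e3 : flipP p * ω ∈ restrP n ⁻¹' t ↔ ω ∈ restrP n ⁻¹' t := by
      rw [Set.mem_preimage, Set.mem_preimage, this]
    by_cases hm : ω ∈ restrP n ⁻¹' t
    · rw [Set.indicator_of_mem hm, Set.indicator_of_mem (e3.2 hm)]
    · rw [Set.indicator_of_notMem hm, Set.indicator_of_notMem (fun h => hm (e3.1 h))]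
  rw [this, add_zero]

lemma Xp_sq (u : ℕ → ℂ) (n : ℕ) :
    ∫ ω, (Xp u n ω) ^ 2 ∂μ ≤ ∑ k ∈ Finset.range n, ‖u k‖ ^ 2 := by
  induction n with
  | zero => simp [Xp]
  | succ n ih =>
    have e : ∀ ω, (Xp u (n + 1) ω) ^ 2
        = ((Xp u n ω) ^ 2 + 2 * (Xp u n ω * Yp u n ω)) + (Yp u n ω) ^ 2 := fun ω => by
      simp only [Xp, Finset.sum_range_succ]
      ring
    have i1 : Integrable (fun ω => (Xp u n ω) ^ 2) μ :=
      Integrable.of_bound ((Xp_meas u n).pow_const 2).aestronglyMeasurable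
        ((∑ k ∈ Finset.range n, ‖u k‖) ^ 2)
        (ae_of_all _ fun ω => by
          rw [norm_pow]
          exact pow_le_pow_left₀ (norm_nonneg _) (Xp_bound u n ω) 2)
    have i3 : Integrable (fun ω => (Yp u n ω) ^ 2) μ :=
      Integrable.of_bound ((Yp_meas u n).pow_const 2).aestronglyMeasurable (‖u n‖ ^ 2)
        (ae_of_all _ fun ω => by
          rw [norm_pow]
          exact pow_le_pow_left₀ (norm_nonneg _) (Yp_bound u n ω) 2)
    have i2 : Integrable (fun ω => 2 * (Xp u n ω * Yp u n ω)) μ := by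
      refine Integrable.const_mul ?_ 2
      exact Integrable.of_bound ((Xp_meas u n).mul (Yp_meas u n)).aestronglyMeasurable
        ((∑ k ∈ Finset.range n, ‖u k‖) * ‖u n‖)
        (ae_of_all _ fun ω => by
          rw [norm_mul]
          exact mul_le_mul (Xp_bound u n ω) (Yp_bound u n ω) (norm_nonneg _)
            (Finset.sum_nonneg fun _ _ => norm_nonneg _))
    simp_rw [e]
    rw [integral_add (f := fun ω => (Xp u n ω) ^ 2 + 2 * (Xp u n ω * Yp u n ω)) (i1.add i2) i3,
      integral_add i1 i2, integral_const_mul,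
      cross_zero μ u n (Xp u n) ?_, Finset.sum_range_succ]
    · have : ∫ ω, (Yp u n ω) ^ 2 ∂μ ≤ ∫ ω, ‖u n‖ ^ 2 ∂μ := by
        refine integral_mono i3 (integrable_const _) (fun ω => ?_)
        exact sq_le_sq' (abs_le.1 (Yp_bound u n ω)).1 (abs_le.1 (Yp_bound u n ω)).2
      simp at this
      linarith
    · intro p hp ω
      unfold Xp
      refine Finset.sum_congr rfl fun k hk => ?_
      have hk' := Finset.mem_range.1 hk
      simp only [Yp]
      rw [evalP_flip_ne p k (by omega)]

lemma Xp_conv (u : ℕ → ℂ) (hu : Summable fun n => ‖u n‖ ^ 2) :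
    ∀ᵐ ω ∂μ, ∃ c, Tendsto (fun n => Xp u n ω) atTop (nhds c) := by
  set C : ℝ := 1 + ∑' n, ‖u n‖ ^ 2 with hC
  refine (Xp_mart μ u).submartingale.exists_ae_tendsto_of_bdd (R := C.toNNReal) ?_
  intro n
  rw [eLpNorm_one_eq_lintegral_enorm, ← ofReal_integral_norm_eq_lintegral_enorm (Xp_int μ u n)]
  refine ENNReal.ofReal_le_ofReal ?_
  have i1 : Integrable (fun ω => (Xp u n ω) ^ 2) μ :=
    Integrable.of_bound ((Xp_meas u n).pow_const 2).aestronglyMeasurable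
      ((∑ k ∈ Finset.range n, ‖u k‖) ^ 2)
      (ae_of_all _ fun ω => by
        rw [norm_pow]
        exact pow_le_pow_left₀ (norm_nonneg _) (Xp_bound u n ω) 2)
  calc ∫ ω, ‖Xp u n ω‖ ∂μ ≤ ∫ ω, (1 + (Xp u n ω) ^ 2) ∂μ := by
        refine integral_mono (Xp_int μ u n).norm ((integrable_const _).add i1) (fun ω => ?_)
        simp only [Real.norm_eq_abs]
        nlinarith [sq_abs (Xp u n ω), sq_nonneg (|Xp u n ω| - 1)]
    _ = 1 + ∫ ω, (Xp u n ω) ^ 2 ∂μ := by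
        rw [integral_add (integrable_const _) i1]
        simp
    _ ≤ C := by
        have := (Xp_sq μ u n).trans (hu.sum_le_tsum _ fun _ _ => by positivity)
        linarith

lemma prime_bdd (u : ℕ → ℂ) (hu : Summable fun n => ‖u n‖ ^ 2) :
    ∀ᵐ ω ∂μ, ∃ M : ℝ, ∀ N, ‖∑ n ∈ Finset.range N, u n * evalP n ω‖ ≤ M := by
  have hu2 : Summable fun n => ‖(-I) * u n‖ ^ 2 := by simpa using hu
  filter_upwards [Xp_conv μ u hu, Xp_conv μ (fun n => (-I) * u n) hu2] with ω h1 h2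
  obtain ⟨c1, h1⟩ := h1
  obtain ⟨c2, h2⟩ := h2
  obtain ⟨M1, hM1⟩ := h1.norm.bddAbove_range
  obtain ⟨M2, hM2⟩ := h2.norm.bddAbove_range
  refine ⟨M1 + M2, fun N => ?_⟩
  have a1 : ‖Xp u N ω‖ ≤ M1 := hM1 ⟨N, rfl⟩
  have a2 : ‖Xp (fun n => (-I) * u n) N ω‖ ≤ M2 := hM2 ⟨N, rfl⟩
  refine (Complex.norm_le_abs_re_add_abs_im _).trans (add_le_add ?_ ?_)
  · rw [Complex.re_sum]
    exact a1
  · rw [Complex.im_sum]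
    refine le_trans (le_of_eq ?_) a2
    rw [Real.norm_eq_abs]
    congr 1
    unfold Xp Yp
    refine Finset.sum_congr rfl fun k _ => ?_
    rw [mul_assoc]
    simp

end
noncomputable def aC (m n : ℕ) : ℝ := ArithmeticFunction.vonMangoldt n / (Real.log n) ^ (m + 1)

lemma aC_nonneg (m n : ℕ) : 0 ≤ aC m n :=
  div_nonneg ArithmeticFunction.vonMangoldt_nonneg (pow_nonneg (Real.log_natCast_nonneg n) _)

lemma aC_le (m n : ℕ) : aC m n ≤ ((Real.log 2) ^ m)⁻¹ := by
  have h2 : 0 < Real.log 2 := Real.log_pos (by norm_num)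
  unfold aC
  rcases lt_or_ge n 2 with h | h
  · interval_cases n <;> simp <;> positivity
  · have hl : Real.log 2 ≤ Real.log n := Real.log_le_log (by norm_num) (by exact_mod_cast h)
    have hl0 : 0 < Real.log n := h2.trans_le hl
    calc _ ≤ Real.log n / (Real.log n) ^ (m + 1) := by
          gcongr
          exact ArithmeticFunction.vonMangoldt_le_log
      _ = ((Real.log n) ^ m)⁻¹ := by
          rw [pow_succ]
          field_simp
      _ ≤ _ := by gcongr

lemma omegaMul_norm (ω : Nat.Primes → Circle) (n : ℕ) : ‖omegaMul ω n‖ = 1 := by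
  unfold omegaMul
  rw [norm_prod]
  refine Finset.prod_eq_one fun p _ => ?_
  split_ifs
  · rw [norm_pow, Circle.norm_coe, one_pow]
  · simp

lemma omegaMul_prime (ω : Nat.Primes → Circle) (n : ℕ) (hn : n.Prime) :
    omegaMul ω n = evalP n ω := by
  unfold omegaMul evalP
  rw [hn.primeFactors, Finset.prod_singleton, dif_pos hn, dif_pos hn, hn.factorization_self,
    pow_one]
  rfl

/-- proper prime powers contribute an absolutely convergent sum -/
lemma summable_nonprime (σ : ℝ) (hσ : 1 / 2 < σ) (F : ℕ → ℝ) (C : ℝ)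
    (hF0 : ∀ n, 0 ≤ F n) (hFz : ∀ n, ¬ IsPrimePow n → F n = 0) (hFp : ∀ n, n.Prime → F n = 0)
    (hF : ∀ n, F n ≤ C * (n : ℝ) ^ (-σ)) : Summable F := by
  have hsupp : Function.support F ⊆ {n | IsPrimePow n} := by
    intro n hn
    by_contra h
    exact hn (hFz n h)
  rw [← summable_subtype_iff_indicator.trans
    (by rw [Set.indicator_eq_self.2 hsupp] : _ ↔ Summable F)]
  refine (Nat.Primes.prodNatEquiv.summable_iff (f := fun x => F x.1)).1 ?_
  have hC : 0 ≤ C := by simpa using (hF0 1).trans (hF 1)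
  have hr : (2 : ℝ) ^ (-σ) < 1 := Real.rpow_lt_one_of_one_lt_of_neg (by norm_num) (by linarith)
  have hr0 : (0 : ℝ) < (2 : ℝ) ^ (-σ) := by positivity
  have s1 : Summable (fun p : Nat.Primes => (p : ℝ) ^ (-2 * σ)) :=
    (Real.summable_nat_rpow.2 (by linarith)).comp_injective Nat.Primes.coe_nat_injective
  have s2 : Summable (fun k : ℕ => ((2 : ℝ) ^ (-σ)) ^ k) :=
    summable_geometric_of_lt_one hr0.le hr
  have s3 := (s1.mul_of_nonneg s2 (fun p => by positivity) (fun k => by positivity)).mul_left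
    (C * ((2 : ℝ) ^ (-σ))⁻¹)
  refine Summable.of_nonneg_of_le (fun x => hF0 _) ?_ s3
  rintro ⟨p, k⟩
  have hp : p.1.Prime := p.2
  change F (p.1 ^ (k + 1)) ≤ C * ((2 : ℝ) ^ (-σ))⁻¹ * ((p.1 : ℝ) ^ (-2 * σ) * ((2 : ℝ) ^ (-σ)) ^ k)
  have hp2 : (2 : ℝ) ≤ p.1 := by exact_mod_cast hp.two_le
  have hp0 : (0 : ℝ) < p.1 := by linarith
  rcases k with _ | k
  · rw [zero_add, pow_one, hFp _ hp]
    positivity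
  · refine (hF _).trans ?_
    rw [mul_assoc]
    refine mul_le_mul_of_nonneg_left ?_ hC
    have e1 : (((p.1 ^ (k + 1 + 1) : ℕ)) : ℝ) ^ (-σ) = (p.1 : ℝ) ^ (-2 * σ) * ((p.1 : ℝ) ^ (-σ)) ^ k := by
      push_cast
      rw [← Real.rpow_natCast, ← Real.rpow_natCast, ← Real.rpow_mul hp0.le, ← Real.rpow_mul hp0.le,
        ← Real.rpow_add hp0]
      congr 1
      push_cast
      ring
    have e2 : ((2 : ℝ) ^ (-σ))⁻¹ * ((p.1 : ℝ) ^ (-2 * σ) * ((2 : ℝ) ^ (-σ)) ^ (k + 1))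
        = (p.1 : ℝ) ^ (-2 * σ) * ((2 : ℝ) ^ (-σ)) ^ k := by
      field_simp
      exact pow_succ' _ _
    rw [e1, e2]
    gcongr ?_ * ?_ ^ k
    exact Real.rpow_le_rpow_of_nonpos (by norm_num) hp2 (by linarith)

theorem random_eta_holomorphic_ae
    (σ₀ : ℝ) (hσ₀ : 1 / 2 < σ₀) (hσ₀' : σ₀ < 1) (m : ℕ)
    (μ : Measure (Nat.Primes → Circle)) [IsProbabilityMeasure μ] [μ.IsHaarMeasure] :
    ∀ᵐ ω ∂μ, ∃ f : ℂ → ℂ,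
      DifferentiableOn ℂ f {s : ℂ | σ₀ < s.re} ∧
      TendstoLocallyUniformlyOn
        (fun (N : ℕ) (s : ℂ) => ∑ n ∈ Finset.range N,
          (ArithmeticFunction.vonMangoldt n : ℂ) * omegaMul ω n /
            ((n : ℂ) ^ s * (((Real.log n) ^ (m + 1) : ℝ) : ℂ)))
        f atTop {s : ℂ | σ₀ < s.re} := by
  set v : ℕ → ℝ := fun n => aC m n * (n : ℝ) ^ (-σ₀) with hv
  have hv0 : ∀ n, 0 ≤ v n := fun n => mul_nonneg (aC_nonneg m n) (by positivity)
  set C : ℝ := ((Real.log 2) ^ m)⁻¹ with hC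
  have hvC : ∀ n, v n ≤ C * (n : ℝ) ^ (-σ₀) := fun n =>
    mul_le_mul_of_nonneg_right (aC_le m n) (by positivity)
  have hsq : Summable fun n => ‖(v n : ℂ)‖ ^ 2 := by
    have s1 : Summable (fun n : ℕ => C ^ 2 * (n : ℝ) ^ (-2 * σ₀)) :=
      (Real.summable_nat_rpow.2 (by linarith)).mul_left _
    refine Summable.of_nonneg_of_le (fun n => by positivity) (fun n => ?_) s1
    rw [Complex.norm_real, Real.norm_of_nonneg (hv0 n)]
    calc v n ^ 2 ≤ (C * (n : ℝ) ^ (-σ₀)) ^ 2 := pow_le_pow_left₀ (hv0 n) (hvC n) 2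
      _ = _ := by
        rw [mul_pow, ← Real.rpow_natCast ((n : ℝ) ^ (-σ₀)), ← Real.rpow_mul (by positivity)]
        congr 2
        push_cast
        ring
  have hnp : Summable fun n => if n.Prime then 0 else v n := by
    refine summable_nonprime σ₀ hσ₀ _ C (fun n => ?_) (fun n hn => ?_) (fun n hn => ?_)
      (fun n => ?_)
    · split_ifs
      · exact le_rfl
      · exact hv0 n
    · split_ifs
      · rfl
      · simp [hv, aC, ArithmeticFunction.vonMangoldt_apply, hn]
    · simp [hn]
    · split_ifs
      · exact (hv0 n).trans (hvC n)
      · exact hvC n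
  filter_upwards [prime_bdd μ (fun n => (v n : ℂ)) hsq] with ω hω
  obtain ⟨M, hM⟩ := hω
  have hbd : ∀ N, ‖∑ n ∈ Finset.range N, (v n : ℂ) * omegaMul ω n‖
      ≤ M + ∑' n, (if n.Prime then 0 else v n) := by
    intro N
    have e : ∀ n, (v n : ℂ) * omegaMul ω n = (v n : ℂ) * evalP n ω
        + (if n.Prime then 0 else (v n : ℂ) * omegaMul ω n) := by
      intro n
      split_ifs with hn
      · rw [omegaMul_prime ω n hn, add_zero]
      · simp [evalP, hn]
    rw [Finset.sum_congr rfl (fun n _ => e n), Finset.sum_add_distrib]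
    refine (norm_add_le _ _).trans (add_le_add (hM N) ?_)
    refine (norm_sum_le _ _).trans (le_trans (Finset.sum_le_sum fun n _ => ?_)
      (hnp.sum_le_tsum (Finset.range N) fun n _ => ?_))
    · split_ifs
      · simp
      · rw [norm_mul, omegaMul_norm, mul_one, Complex.norm_real, Real.norm_of_nonneg (hv0 n)]
    · split_ifs
      · exact le_rfl
      · exact hv0 n
  obtain ⟨f, hf⟩ := abel_locunif σ₀ _ _ hbd
  have hterm : ∀ (n : ℕ) (s : ℂ), (ArithmeticFunction.vonMangoldt n : ℂ) * omegaMul ω n /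
            ((n : ℂ) ^ s * (((Real.log n) ^ (m + 1) : ℝ) : ℂ))
      = (n : ℂ) ^ (-(s - σ₀)) * ((v n : ℂ) * omegaMul ω n) := by
    intro n s
    rcases Nat.eq_zero_or_pos n with rfl | hn
    · simp [hv, aC]
    · have hn0 : (n : ℂ) ≠ 0 := by exact_mod_cast hn.ne'
      have e1 : ((n : ℂ) ^ s)⁻¹ = (n : ℂ) ^ (-(s - σ₀)) * (n : ℂ) ^ (-(σ₀ : ℂ)) := by
        rw [← cpow_neg, ← cpow_add _ _ hn0]
        congr 1
        ring
      have e2 : (((n : ℝ) ^ (-σ₀) : ℝ) : ℂ) = (n : ℂ) ^ (-(σ₀ : ℂ)) := by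
        rw [Complex.ofReal_cpow (by positivity)]
        simp
      rw [div_eq_mul_inv, mul_inv, e1]
      simp only [hv, aC, Complex.ofReal_mul, Complex.ofReal_div, e2]
      rw [div_eq_mul_inv]
      ring
  have hf' : TendstoLocallyUniformlyOn
        (fun (N : ℕ) (s : ℂ) => ∑ n ∈ Finset.range N,
          (ArithmeticFunction.vonMangoldt n : ℂ) * omegaMul ω n /
            ((n : ℂ) ^ s * (((Real.log n) ^ (m + 1) : ℝ) : ℂ)))
        f atTop {s : ℂ | σ₀ < s.re} := by
    simp_rw [hterm]
    exact hf
  refine ⟨f, ?_, hf'⟩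
  refine hf.differentiableOn (Eventually.of_forall fun N => ?_)
    (isOpen_lt continuous_const Complex.continuous_re)
  refine DifferentiableOn.fun_sum fun n _ => ?_
  intro s hs
  refine DifferentiableAt.differentiableWithinAt ?_
  refine DifferentiableAt.mul_const ?_ _
  refine DifferentiableAt.const_cpow (by fun_prop) (Or.inr ?_)
  intro h
  have h' := congrArg Complex.re h
  have hs' : σ₀ < s.re := hs
  simp at h'
  linarith
end

section
/- Fix 1/2 < σ₀ < 1 and a nonnegative integer m. For almost all ω ∈ Ω, the identity ∑_{n=2}^∞ Λ(n) ω(n) / (n^s (log n)^{m+1}) = ∑_p Li_{m+1}(p^{-s} ω(p)) / (log p)^m holds for all s with Re(s) > σ₀, where the right-hand sum is over primes p. -/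
open Complex MeasureTheory Filter

/-- The polylogarithm `Li_{m+1}(z) = ∑_{k=1}^∞ z^k / k^{m+1}` for `|z| < 1`. -/
noncomputable def polylog (m : ℕ) (z : ℂ) : ℂ :=
  ∑' k : ℕ, z ^ (k + 1) / ((k : ℂ) + 1) ^ (m + 1)


/-- Partial sums of `φ (ω p)` over primes `p < N`. -/
noncomputable def primeSum (φ : Circle → ℝ) (ω : Nat.Primes → Circle) (N : ℕ) : ℝ :=
  ∑ n ∈ Finset.range N, if h : n.Prime then φ (ω ⟨n, h⟩) else 0

lemma primeSum_measurable (φ : Circle → ℝ) (hφ : Continuous φ) (N : ℕ) :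
    Measurable (fun ω => primeSum φ ω N) := by
  unfold primeSum
  refine Finset.measurable_sum _ fun n _ => ?_
  by_cases h : n.Prime
  · simp only [h, dite_true]
    exact hφ.measurable.comp (measurable_pi_apply _)
  · simp only [h, dite_false]
    exact measurable_const

lemma primeSum_mgf (μ : Measure (Nat.Primes → Circle)) [IsProbabilityMeasure μ]
    [μ.IsHaarMeasure] (φ : Circle → ℝ) (hφ : Continuous φ) (hneg : ∀ z, φ (-z) = -φ z)
    (hb : ∀ z, |φ z| ≤ 1) (t : ℝ) (N : ℕ) :
    ∫⁻ ω, ENNReal.ofReal (Real.exp (t * primeSum φ ω N)) ∂μ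
      ≤ ENNReal.ofReal (Real.exp (t ^ 2 / 2 * N)) := by
  induction N with
  | zero => simp [primeSum]
  | succ N ih =>
    have hmono : Real.exp (t ^ 2 / 2 * N) ≤ Real.exp (t ^ 2 / 2 * (N + 1 : ℕ)) := by
      apply Real.exp_le_exp.mpr
      push_cast
      nlinarith [sq_nonneg t]
    by_cases h : N.Prime
    · set q : Nat.Primes := ⟨N, h⟩ with hq
      have hsucc : ∀ ω, primeSum φ ω (N + 1) = primeSum φ ω N + φ (ω q) := by
        intro ω
        simp [primeSum, Finset.sum_range_succ, h, hq]
      set g : Nat.Primes → Circle := Pi.mulSingle q (-1) with hg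
      have hgS : ∀ ω, primeSum φ (g * ω) N = primeSum φ ω N := by
        intro ω
        unfold primeSum
        refine Finset.sum_congr rfl fun n hn => ?_
        split_ifs with hp
        · have : (⟨n, hp⟩ : Nat.Primes) ≠ q := by
            intro e
            have := congrArg Subtype.val e
            simp [hq] at this
            simp [this] at hn
          have e : (g * ω) (⟨n, hp⟩ : Nat.Primes) = ω (⟨n, hp⟩ : Nat.Primes) := by
            rw [hg]
            exact (congrArg (· * ω (⟨n, hp⟩ : Nat.Primes))
              (Pi.mulSingle_eq_of_ne this _)).trans (one_mul _)
          exact congrArg φ e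
        · rfl
      have hgq : ∀ ω, φ ((g * ω) q) = - φ (ω q) := by
        intro ω
        simp [hg, hneg]
      have hm : Measurable (fun ω => ENNReal.ofReal (Real.exp (t * primeSum φ ω (N + 1)))) :=
        ENNReal.measurable_ofReal.comp
          (Real.measurable_exp.comp ((primeSum_measurable φ hφ _).const_mul t))
      have hmN : Measurable (fun ω => ENNReal.ofReal (Real.exp (t * primeSum φ ω N))) :=
        ENNReal.measurable_ofReal.comp
          (Real.measurable_exp.comp ((primeSum_measurable φ hφ _).const_mul t))
      have hinv := lintegral_mul_left_eq_self (μ := μ)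
        (fun ω => ENNReal.ofReal (Real.exp (t * primeSum φ ω (N + 1)))) g
      have h2 : 2 * ∫⁻ ω, ENNReal.ofReal (Real.exp (t * primeSum φ ω (N + 1))) ∂μ
          ≤ 2 * (ENNReal.ofReal (Real.exp (t ^ 2 / 2)) *
            ∫⁻ ω, ENNReal.ofReal (Real.exp (t * primeSum φ ω N)) ∂μ) := by
        rw [two_mul]
        nth_rewrite 1 [← hinv]
        rw [← lintegral_add_right _ hm, ← mul_assoc, ← lintegral_const_mul _ hmN]
        refine lintegral_mono fun ω => ?_
        rw [show (2 : ENNReal) = ENNReal.ofReal 2 by simp, ← ENNReal.ofReal_mul (by norm_num),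
          ← ENNReal.ofReal_mul (by positivity),
          ← ENNReal.ofReal_add (by positivity) (by positivity)]
        apply ENNReal.ofReal_le_ofReal
        rw [hsucc, hsucc, hgS, hgq, mul_add, mul_add, Real.exp_add, Real.exp_add]
        have h1 : Real.exp (t * -φ (ω q)) + Real.exp (t * φ (ω q)) ≤ 2 * Real.exp (t ^ 2 / 2) := by
          have e1 := Real.cosh_le_exp_half_sq (t * φ (ω q))
          rw [Real.cosh_eq] at e1
          have e2 : Real.exp ((t * φ (ω q)) ^ 2 / 2) ≤ Real.exp (t ^ 2 / 2) := by
            apply Real.exp_le_exp.mpr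
            have : (φ (ω q)) ^ 2 ≤ 1 := (sq_le_one_iff_abs_le_one _).mpr (hb _)
            nlinarith [sq_nonneg t]
          rw [mul_neg]
          linarith
        nlinarith [Real.exp_pos (t * primeSum φ ω N)]
      have h3 := (ENNReal.mul_le_mul_iff_right (by norm_num) (by norm_num)).mp h2
      refine h3.trans ((mul_le_mul_right ih _).trans ?_)
      rw [← ENNReal.ofReal_mul (by positivity), ← Real.exp_add]
      apply ENNReal.ofReal_le_ofReal
      apply Real.exp_le_exp.mpr
      push_cast
      linarith
    · have hsucc : ∀ ω, primeSum φ ω (N + 1) = primeSum φ ω N := by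
        intro ω
        simp [primeSum, Finset.sum_range_succ, h]
      simp only [hsucc]
      exact ih.trans (ENNReal.ofReal_le_ofReal hmono)

lemma primeSum_ae_le (μ : Measure (Nat.Primes → Circle)) [IsProbabilityMeasure μ]
    [μ.IsHaarMeasure] (φ : Circle → ℝ) (hφ : Continuous φ) (hneg : ∀ z, φ (-z) = -φ z)
    (hb : ∀ z, |φ z| ≤ 1) (a : ℝ) (ha : 1 / 2 < a) :
    ∀ᵐ ω ∂μ, ∀ᶠ N : ℕ in atTop, primeSum φ ω N ≤ (N : ℝ) ^ a := by
  have key : ∀ N : ℕ, 1 ≤ N → μ {ω | (N : ℝ) ^ a ≤ primeSum φ ω N} ≤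
      ENNReal.ofReal (Real.exp (1 / 2) * Real.exp (-1 * (N : ℝ) ^ (a - 1 / 2))) := by
    intro N hN
    have hN0 : (0 : ℝ) < N := by exact_mod_cast hN
    set t : ℝ := (N : ℝ) ^ (-(1 / 2) : ℝ) with ht
    have htpos : 0 < t := Real.rpow_pos_of_pos hN0 _
    have hm : Measurable (fun ω => ENNReal.ofReal (Real.exp (t * primeSum φ ω N))) :=
      ENNReal.measurable_ofReal.comp
        (Real.measurable_exp.comp ((primeSum_measurable φ hφ _).const_mul t))
    have h1 := (mul_meas_ge_le_lintegral (μ := μ) hm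
      (ENNReal.ofReal (Real.exp (t * (N : ℝ) ^ a)))).trans
      (primeSum_mgf μ φ hφ hneg hb t N)
    have hsub : {ω | (N : ℝ) ^ a ≤ primeSum φ ω N} ⊆
        {ω | ENNReal.ofReal (Real.exp (t * (N : ℝ) ^ a)) ≤
          ENNReal.ofReal (Real.exp (t * primeSum φ ω N))} := by
      intro ω hω
      exact ENNReal.ofReal_le_ofReal (Real.exp_le_exp.mpr
        (mul_le_mul_of_nonneg_left hω htpos.le))
    have h2 := (mul_le_mul_right (measure_mono (μ := μ) hsub) _).trans h1
    have e1 : t * (N : ℝ) ^ a = (N : ℝ) ^ (a - 1 / 2) := by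
      rw [ht, ← Real.rpow_add hN0]; congr 1; ring
    have e2 : t ^ 2 / 2 * N = 1 / 2 := by
      rw [ht, ← Real.rpow_natCast, ← Real.rpow_mul hN0.le]
      norm_num [Real.rpow_neg_one]
      field_simp
    rw [e1, e2] at h2
    have h3 := mul_le_mul_right h2
      (ENNReal.ofReal (Real.exp (-1 * (N : ℝ) ^ (a - 1 / 2))))
    rw [← mul_assoc, ← ENNReal.ofReal_mul (by positivity), ← Real.exp_add,
      ← ENNReal.ofReal_mul (by positivity)] at h3
    simp only [neg_mul, one_mul, neg_add_cancel, Real.exp_zero, ENNReal.ofReal_one] at h3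
    rw [mul_comm (Real.exp (1/2))]
    simpa using h3
  have hsum : Summable (fun N : ℕ => Real.exp (1 / 2) * Real.exp (-1 * (N : ℝ) ^ (a - 1 / 2))) := by
    apply Summable.mul_left
    have hapos : 0 < a - 1 / 2 := by linarith
    have o := (isLittleO_exp_neg_mul_rpow_atTop one_pos (-2 / (a - 1 / 2))).comp_tendsto
      ((tendsto_rpow_atTop hapos).comp tendsto_natCast_atTop_atTop)
    refine summable_of_isBigO_nat (g := fun n : ℕ => (n : ℝ) ^ (-2 : ℝ))
      (Real.summable_nat_rpow.mpr (by norm_num)) (o.isBigO.trans_eventuallyEq ?_)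
    filter_upwards with n
    simp only [Function.comp]
    rw [← Real.rpow_mul (by positivity)]
    congr 1
    rw [mul_div_cancel₀ _ hapos.ne']
  have hfin : (∑' N : ℕ, μ {ω | ((N + 1 : ℕ) : ℝ) ^ a ≤ primeSum φ ω (N + 1)}) ≠ ⊤ := by
    have hs1 := (summable_nat_add_iff 1).mpr hsum
    refine ne_top_of_le_ne_top ?_ (ENNReal.tsum_le_tsum fun N => key (N + 1) (by omega))
    exact hs1.tsum_ofReal_ne_top
  filter_upwards [ae_eventually_notMem hfin] with ω hω
  obtain ⟨M, hM⟩ := eventually_atTop.mp hω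
  filter_upwards [eventually_ge_atTop (M + 1)] with N hN
  have h1 := hM (N - 1) (by omega)
  rw [Nat.sub_add_cancel (by omega)] at h1
  simp only [not_le] at h1
  exact h1.le

/-- The coefficient sequence `ω(p)` on primes and `0` elsewhere. -/
noncomputable def primeCoeff (ω : Nat.Primes → Circle) (n : ℕ) : ℂ :=
  if h : n.Prime then (ω ⟨n, h⟩ : ℂ) else 0

lemma primeCoeff_sum (ω : Nat.Primes → Circle) (N : ℕ) :
    ∑ n ∈ Finset.range N, primeCoeff ω n =
      (primeSum (fun z => (z : ℂ).re) ω N : ℂ) + (primeSum (fun z => (z : ℂ).im) ω N : ℂ) * I := by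
  unfold primeSum
  push_cast
  rw [Finset.sum_mul, ← Finset.sum_add_distrib]
  refine Finset.sum_congr rfl fun n _ => ?_
  unfold primeCoeff
  split_ifs
  · simp [Complex.re_add_im]
  · simp

lemma primeSum_neg (φ : Circle → ℝ) (ω : Nat.Primes → Circle) (N : ℕ) :
    primeSum (fun z => -φ z) ω N = - primeSum φ ω N := by
  unfold primeSum
  rw [← Finset.sum_neg_distrib]
  refine Finset.sum_congr rfl fun n _ => ?_
  split_ifs <;> simp

lemma primeCoeff_isBigO (μ : Measure (Nat.Primes → Circle)) [IsProbabilityMeasure μ]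
    [μ.IsHaarMeasure] (a : ℝ) (ha : 1 / 2 < a) :
    ∀ᵐ ω ∂μ, (fun n : ℕ => ∑ k ∈ Finset.Icc 0 n, primeCoeff ω k) =O[atTop]
      fun n : ℕ => (n : ℝ) ^ a := by
  have cre : Continuous (fun z : Circle => (z : ℂ).re) := by fun_prop
  have cim : Continuous (fun z : Circle => (z : ℂ).im) := by fun_prop
  have bre : ∀ z : Circle, |(z : ℂ).re| ≤ 1 := fun z =>
    (Complex.abs_re_le_norm _).trans (Circle.norm_coe z).le
  have bim : ∀ z : Circle, |(z : ℂ).im| ≤ 1 := fun z =>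
    (Complex.abs_im_le_norm _).trans (Circle.norm_coe z).le
  filter_upwards [primeSum_ae_le μ (fun z => (z : ℂ).re) cre (by simp) bre a ha,
    primeSum_ae_le μ (fun z => -(z : ℂ).re) cre.neg (by simp) (by simpa using bre) a ha,
    primeSum_ae_le μ (fun z => (z : ℂ).im) cim (by simp) bim a ha,
    primeSum_ae_le μ (fun z => -(z : ℂ).im) cim.neg (by simp) (by simpa using bim) a ha]
    with ω h1 h2 h3 h4
  refine Asymptotics.IsBigO.of_bound 3 ?_
  filter_upwards [h1, h2, h3, h4, eventually_ge_atTop 1] with N h1 h2 h3 h4 hN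
  rw [primeSum_neg] at h2 h4
  rw [← Nat.range_succ_eq_Icc_zero, Finset.sum_range_succ]
  have hN1 : (1 : ℝ) ≤ (N : ℝ) ^ a := Real.one_le_rpow (by exact_mod_cast hN) (by linarith)
  have hc : ‖primeCoeff ω N‖ ≤ 1 := by
    unfold primeCoeff
    split_ifs
    · exact (Circle.norm_coe _).le
    · simp
  refine (norm_add_le _ _).trans ?_
  rw [primeCoeff_sum]
  have e1 : ‖((primeSum (fun z => (z : ℂ).re) ω N : ℝ) : ℂ)‖ ≤ (N : ℝ) ^ a := by
    rw [Complex.norm_real, Real.norm_eq_abs, abs_le]; constructor <;> linarith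
  have e2 : ‖((primeSum (fun z => (z : ℂ).im) ω N : ℝ) : ℂ) * I‖ ≤ (N : ℝ) ^ a := by
    rw [norm_mul, Complex.norm_I, mul_one, Complex.norm_real, Real.norm_eq_abs, abs_le]
    constructor <;> linarith
  have e3 := norm_add_le ((primeSum (fun z => (z : ℂ).re) ω N : ℝ) : ℂ)
    (((primeSum (fun z => (z : ℂ).im) ω N : ℝ) : ℂ) * I)
  rw [Real.norm_eq_abs, abs_of_nonneg (by linarith)]
  linarith

lemma dirichlet_converges {f : ℕ → ℂ} (hf : f 0 = 0) {r : ℝ} (hr : 0 ≤ r) {s : ℂ}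
    (hs : r < s.re)
    (hO : (fun n ↦ ∑ k ∈ Finset.Icc 0 n, f k) =O[atTop] fun n : ℕ ↦ (n : ℝ) ^ r) :
    ∃ l : ℂ, Tendsto (fun N : ℕ => ∑ k ∈ Finset.range N, (k : ℂ) ^ (-s) * f k) atTop (nhds l) := by
  have h₁ : (-s - 1).re + r < -1 := by
    rwa [sub_re, one_re, neg_re, neg_sub_left, neg_add_lt_iff_lt_add, add_neg_cancel_comm]
  have h₂ : s ≠ 0 := ne_zero_of_re_pos (hr.trans_lt hs)
  have h₃ (t : ℝ) (ht : t ∈ Set.Ici 1) : DifferentiableAt ℝ (fun x : ℝ ↦ (x : ℂ) ^ (-s)) t :=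
    differentiableAt_id.ofReal_cpow_const (zero_lt_one.trans_le ht).ne' (neg_ne_zero.mpr h₂)
  suffices ∃ l : ℂ, Tendsto (fun N : ℕ => ∑ k ∈ Finset.Icc 0 N, (k : ℂ) ^ (-s) * f k)
      atTop (nhds l) by
    obtain ⟨l, hl⟩ := this
    refine ⟨l, (tendsto_add_atTop_iff_nat 1).mp ?_⟩
    simpa only [Nat.range_succ_eq_Icc_zero] using hl
  refine ⟨_,
    tendsto_sum_mul_atTop_nhds_one_sub_integral₀ (f := fun x ↦ (x : ℂ) ^ (-s)) (l := 0) f hf h₃ ?_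
      ?_ ?_ (integrableAtFilter_rpow_atTop_iff.mpr h₁)⟩
  · refine (Iff.mpr integrableOn_Ici_iff_integrableOn_Ioi <|
      integrableOn_Ioi_deriv_ofReal_cpow zero_lt_one
        (by simpa using! hr.trans_lt hs)).locallyIntegrableOn
  · have hlim : Tendsto (fun n : ℕ ↦ (n : ℝ) ^ (-(s.re - r))) atTop (nhds 0) :=
      (tendsto_rpow_neg_atTop (by rwa [sub_pos])).comp tendsto_natCast_atTop_atTop
    refine (Asymptotics.IsBigO.mul_atTop_rpow_natCast_of_isBigO_rpow (-s.re) _ _ ?_ hO ?_).trans_tendsto hlim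
    · exact Asymptotics.isBigO_norm_left.mp <| (norm_ofReal_cpow_eventually_eq_atTop _).isBigO.natCast_atTop
    · linarith
  · refine .mul_atTop_rpow_of_isBigO_rpow (-(s + 1).re) r _ ?_ ?_ (by rw [← neg_re, neg_add'])
    · simpa [-neg_add_rev, neg_add'] using! isBigO_deriv_ofReal_cpow_const_atTop _
    · exact (hO.comp_tendsto tendsto_nat_floor_atTop).trans <|
        Asymptotics.isEquivalent_nat_floor.isBigO.rpow hr (eventually_ge_atTop 0)

lemma dirichlet_log_converges {z : ℕ → ℂ} (h0 : z 0 = 0) (h1 : z 1 = 0) (m : ℕ) {l : ℂ}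
    (h : Tendsto (fun N : ℕ => ∑ k ∈ Finset.range N, z k) atTop (nhds l)) :
    ∃ l' : ℂ, Tendsto (fun N : ℕ => ∑ k ∈ Finset.range N, z k / ((Real.log k ^ m : ℝ) : ℂ))
      atTop (nhds l') := by
  rcases Nat.eq_zero_or_pos m with rfl | hm
  · exact ⟨l, by simpa using h⟩
  obtain ⟨b, hb⟩ := h.norm.bddAbove_range
  have hb' : ∀ n, ‖∑ i ∈ Finset.range n, z i‖ ≤ b := fun n => hb ⟨n, rfl⟩
  set g : ℕ → ℝ := fun n => (Real.log (max n 2) ^ m)⁻¹ with hg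
  have hpos : ∀ n : ℕ, 0 < Real.log (max (n : ℝ) 2) := fun n =>
    Real.log_pos (lt_of_lt_of_le (by norm_num) (le_max_right _ _))
  have hga : Antitone g := by
    intro i j hij
    have : Real.log (max (i : ℝ) 2) ≤ Real.log (max (j : ℝ) 2) := by
      apply Real.log_le_log (by positivity)
      exact max_le_max (by exact_mod_cast hij) le_rfl
    exact inv_anti₀ (pow_pos (hpos i) _) (pow_le_pow_left₀ (hpos i).le this _)
  have hg0 : Tendsto g atTop (nhds 0) := by
    refine tendsto_inv_atTop_zero.comp ((tendsto_pow_atTop hm.ne').comp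
      (Real.tendsto_log_atTop.comp ?_))
    exact tendsto_atTop_mono (fun n => le_max_left _ _) tendsto_natCast_atTop_atTop
  obtain ⟨l', hl'⟩ := cauchySeq_tendsto_of_complete
    (hga.cauchySeq_series_mul_of_tendsto_zero_of_bounded hg0 hb')
  refine ⟨l', hl'.congr fun N => Finset.sum_congr rfl fun k _ => ?_⟩
  rcases Nat.lt_or_ge k 2 with hk | hk
  · interval_cases k <;> simp [h0, h1]
  · have : max (k : ℝ) 2 = k := max_eq_left (by exact_mod_cast hk)
    simp only [hg, this, Complex.real_smul]
    push_cast
    rw [div_eq_mul_inv, mul_comm]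

lemma primeCoeff_prime (ω : Nat.Primes → Circle) (p : Nat.Primes) :
    primeCoeff ω (p : ℕ) = (ω p : ℂ) := dif_pos p.2

lemma omegaMul_prime_pow (ω : Nat.Primes → Circle) (p : Nat.Primes) (j : ℕ) :
    omegaMul ω ((p : ℕ) ^ (j + 1)) = (ω p : ℂ) ^ (j + 1) := by
  unfold omegaMul
  rw [Nat.primeFactors_prime_pow (Nat.succ_ne_zero j) p.2, Finset.prod_singleton, dif_pos p.2,
    Nat.factorization_pow]
  have : (p : ℕ).factorization p = 1 := p.2.factorization_self
  simp [this]
  rfl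

/-- Summand of the von Mangoldt side. -/
noncomputable def lTerm (ω : Nat.Primes → Circle) (m : ℕ) (s : ℂ) (n : ℕ) : ℂ :=
  (ArithmeticFunction.vonMangoldt n : ℂ) * omegaMul ω n /
            ((n : ℂ) ^ s * (((Real.log n) ^ (m + 1) : ℝ) : ℂ))

/-- Summand of the double series. -/
noncomputable def dTerm (ω : Nat.Primes → Circle) (m : ℕ) (s : ℂ) (p : Nat.Primes) (j : ℕ) : ℂ :=
  (((p : ℕ) : ℂ) ^ (-s) * (ω p : ℂ)) ^ (j + 1) / ((j : ℂ) + 1) ^ (m + 1) /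
    (((Real.log (p : ℕ)) ^ m : ℝ) : ℂ)

lemma lTerm_prime_pow (ω : Nat.Primes → Circle) (m : ℕ) (s : ℂ) (p : Nat.Primes) (j : ℕ) :
    lTerm ω m s ((p : ℕ) ^ (j + 1)) = dTerm ω m s p j := by
  unfold lTerm dTerm
  rw [ArithmeticFunction.vonMangoldt_apply_pow (Nat.succ_ne_zero j),
    ArithmeticFunction.vonMangoldt_apply_prime p.2, omegaMul_prime_pow]
  have hlog : ((Real.log (p : ℕ) : ℝ) : ℂ) ≠ 0 := by
    exact_mod_cast (Real.log_pos (by exact_mod_cast p.2.one_lt)).ne'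
  have hp0 : (((p : ℕ) : ℂ)) ≠ 0 := by exact_mod_cast p.2.ne_zero
  have hps : (((p : ℕ) : ℂ)) ^ s ≠ 0 := by simp [Complex.cpow_eq_zero_iff, hp0]
  have h1 : (((p : ℕ) ^ (j + 1) : ℕ) : ℂ) ^ s = (((p : ℕ) : ℂ) ^ s) ^ (j + 1) := by
    push_cast
    rw [← Complex.natCast_cpow_natCast_mul, ← Complex.cpow_nat_mul]
  have h2 : Real.log (((p : ℕ) ^ (j + 1) : ℕ) : ℝ) = (j + 1) * Real.log (p : ℕ) := by
    push_cast
    rw [Real.log_pow]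
    push_cast
    rfl
  have hj : ((j : ℂ) + 1) ≠ 0 := by exact_mod_cast Nat.succ_ne_zero j
  rw [h1, h2, Complex.cpow_neg]
  clear h1 h2
  generalize Real.log (p : ℕ) = y at *
  push_cast
  rw [mul_pow, mul_pow, inv_pow]
  field_simp
  ring

lemma norm_z (ω : Nat.Primes → Circle) (s : ℂ) (p : Nat.Primes) :
    ‖((p : ℕ) : ℂ) ^ (-s) * (ω p : ℂ)‖ = ((p : ℕ) : ℝ) ^ (-s.re) := by
  rw [norm_mul, Circle.norm_coe, mul_one, Complex.norm_natCast_cpow_of_pos p.2.pos, Complex.neg_re]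

lemma norm_z_le (ω : Nat.Primes → Circle) (s : ℂ) (hs : 0 < s.re) (p : Nat.Primes) :
    ‖((p : ℕ) : ℂ) ^ (-s) * (ω p : ℂ)‖ ≤ (2 : ℝ) ^ (-s.re) := by
  rw [norm_z]
  exact Real.rpow_le_rpow_of_nonpos (by norm_num) (by exact_mod_cast p.2.two_le) (by linarith)

lemma dTerm_norm_le (ω : Nat.Primes → Circle) (m : ℕ) (s : ℂ) (hs : 0 < s.re) (p : Nat.Primes)
    (j : ℕ) : ‖dTerm ω m s p (j + 1)‖ ≤
      ((Real.log 2 ^ m)⁻¹ * ((p : ℕ) : ℝ) ^ (-(2 * s.re))) * ((2 : ℝ) ^ (-s.re)) ^ j := by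
  have hl2 : 0 < Real.log 2 := Real.log_pos (by norm_num)
  have hlp : Real.log 2 ≤ Real.log (p : ℕ) :=
    Real.log_le_log (by norm_num) (by exact_mod_cast p.2.two_le)
  have hlm : Real.log 2 ^ m ≤ Real.log (p : ℕ) ^ m := pow_le_pow_left₀ hl2.le hlp _
  unfold dTerm
  rw [norm_div, norm_div, norm_pow, norm_pow, Complex.norm_real, Real.norm_of_nonneg (by positivity)]
  have hj : ‖(((j + 1 : ℕ) : ℂ) + 1)‖ = (j : ℝ) + 2 := by
    rw [show (((j + 1 : ℕ) : ℂ) + 1) = ((j + 2 : ℕ) : ℂ) by push_cast; ring, Complex.norm_natCast]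
    push_cast; ring
  rw [hj]
  set x := ‖((p : ℕ) : ℂ) ^ (-s) * (ω p : ℂ)‖ with hx
  have hx0 : 0 ≤ x := norm_nonneg _
  have hxle := norm_z_le ω s hs p
  have hx2 : x ^ 2 = ((p : ℕ) : ℝ) ^ (-(2 * s.re)) := by
    rw [hx, norm_z, ← Real.rpow_natCast, ← Real.rpow_mul (by positivity)]
    congr 1; push_cast; ring
  rw [← hx2, div_eq_mul_inv]
  have h1 : x ^ (j + 1 + 1) / ((j : ℝ) + 2) ^ (m + 1) ≤ x ^ 2 * ((2 : ℝ) ^ (-s.re)) ^ j := by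
    refine (div_le_self (by positivity) (one_le_pow₀ (by linarith [(Nat.cast_nonneg j : (0:ℝ) ≤ j)]))).trans ?_
    rw [show j + 1 + 1 = 2 + j by ring, pow_add]
    gcongr
  calc _ ≤ (x ^ 2 * ((2 : ℝ) ^ (-s.re)) ^ j) * (Real.log 2 ^ m)⁻¹ := by
        gcongr
    _ = _ := by ring

lemma dTerm_summable (ω : Nat.Primes → Circle) (m : ℕ) (s : ℂ) (hs : 1 / 2 < s.re) :
    Summable (fun x : Nat.Primes × ℕ => dTerm ω m s x.1 (x.2 + 1)) := by
  have h1 : Summable (fun p : Nat.Primes => (Real.log 2 ^ m)⁻¹ * ((p : ℕ) : ℝ) ^ (-(2 * s.re))) :=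
    (Nat.Primes.summable_rpow.mpr (by linarith)).mul_left _
  have h2 : Summable (fun j : ℕ => ((2 : ℝ) ^ (-s.re)) ^ j) :=
    summable_geometric_of_lt_one (by positivity)
      (Real.rpow_lt_one_of_one_lt_of_neg (by norm_num) (by linarith))
  have hl2 : 0 < Real.log 2 := Real.log_pos (by norm_num)
  exact Summable.of_norm_bounded
    (h1.mul_of_nonneg h2 (fun _ => by positivity) (fun _ => by positivity))
    (fun x => dTerm_norm_le ω m s (by linarith) x.1 x.2)

/-- Summand of the polylogarithm side. -/
noncomputable def rTerm (ω : Nat.Primes → Circle) (m : ℕ) (s : ℂ) (p : ℕ) : ℂ :=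
  if h : p.Prime then
            polylog m ((p : ℂ) ^ (-s) * (ω ⟨p, h⟩ : ℂ)) / (((Real.log p) ^ m : ℝ) : ℂ)
          else 0

lemma rTerm_prime (ω : Nat.Primes → Circle) (m : ℕ) (s : ℂ) (hs : 1 / 2 < s.re)
    (p : Nat.Primes) :
    rTerm ω m s p = dTerm ω m s p 0 + ∑' j, dTerm ω m s p (j + 1) := by
  have hsum : Summable (fun j => dTerm ω m s p (j + 1)) :=
    (dTerm_summable ω m s hs).prod_factor p
  rw [← ((summable_nat_add_iff 1).mp hsum).tsum_eq_zero_add]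
  unfold rTerm
  rw [dif_pos p.2]
  unfold polylog dTerm
  rw [tsum_div_const]
  rfl

lemma lTerm_hasSum (ω : Nat.Primes → Circle) (m : ℕ) (s : ℂ) (hs : 1 / 2 < s.re) :
    HasSum (fun n : ℕ => if n.Prime then 0 else lTerm ω m s n)
      (∑' x : Nat.Primes × ℕ, dTerm ω m s x.1 (x.2 + 1)) := by
  have hinj : Function.Injective (fun x : Nat.Primes × ℕ => (x.1 : ℕ) ^ (x.2 + 1 + 1)) := by
    rintro ⟨p, j⟩ ⟨q, k⟩ h
    simp only at h
    have hpq : (p : ℕ) = q := by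
      have : (p : ℕ) ∣ q := p.2.dvd_of_dvd_pow (h ▸ dvd_pow_self _ (Nat.succ_ne_zero _))
      exact (Nat.prime_dvd_prime_iff_eq p.2 q.2).mp this
    have hpq' : p = q := Subtype.ext hpq
    subst hpq'
    have := Nat.pow_right_injective p.2.two_le h
    simp at this
    simp [this]
  refine (hinj.hasSum_iff ?_).mp ?_
  · intro n hn
    by_cases hp : n.Prime
    · simp [hp]
    · simp only [hp, if_false]
      by_contra hne
      apply hn
      have hpp : IsPrimePow n := by
        rw [← ArithmeticFunction.vonMangoldt_ne_zero_iff]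
        intro h0
        exact hne (by simp [lTerm, h0])
      obtain ⟨p, k, hpr, hk, rfl⟩ := hpp
      have hpr' := hpr.nat_prime
      have hk1 : k ≠ 1 := by
        rintro rfl
        exact hp (by simpa using hpr')
      refine ⟨(⟨p, hpr'⟩, k - 2), ?_⟩
      show p ^ (k - 2 + 1 + 1) = p ^ k
      congr 1
      omega
  · have : ((fun n : ℕ => if n.Prime then 0 else lTerm ω m s n) ∘
        fun x : Nat.Primes × ℕ => (x.1 : ℕ) ^ (x.2 + 1 + 1)) =
        fun x => dTerm ω m s x.1 (x.2 + 1) := by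
      funext x
      have : ¬ ((x.1 : ℕ) ^ (x.2 + 1 + 1)).Prime := Nat.Prime.not_prime_pow (by omega)
      simp only [Function.comp, this, if_false]
      exact lTerm_prime_pow ω m s x.1 (x.2 + 1)
    rw [this]
    exact (dTerm_summable ω m s hs).hasSum

lemma rTerm_hasSum (ω : Nat.Primes → Circle) (m : ℕ) (s : ℂ) (hs : 1 / 2 < s.re) :
    HasSum (fun n : ℕ => if n.Prime then rTerm ω m s n - lTerm ω m s n else 0)
      (∑' x : Nat.Primes × ℕ, dTerm ω m s x.1 (x.2 + 1)) := by
  have hinj : Function.Injective (fun p : Nat.Primes => (p : ℕ)) := Subtype.val_injective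
  refine (hinj.hasSum_iff ?_).mp ?_
  · intro n hn
    have : ¬ n.Prime := fun h => hn ⟨⟨n, h⟩, rfl⟩
    simp [this]
  · have hS := dTerm_summable ω m s hs
    have := hS.hasSum.prod_fiberwise (fun p => (hS.prod_factor p).hasSum)
    convert this using 1
    funext p
    have hp : (p : ℕ).Prime := p.2
    simp only [Function.comp, hp, if_true]
    have h1 := lTerm_prime_pow ω m s p 0
    rw [zero_add, pow_one] at h1
    rw [rTerm_prime ω m s hs, h1]
    ring

theorem random_eta_eq_sum_polylog_ae
    (σ₀ : ℝ) (hσ₀ : 1 / 2 < σ₀) (hσ₀' : σ₀ < 1) (m : ℕ)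
    (μ : Measure (Nat.Primes → Circle)) [IsProbabilityMeasure μ] [μ.IsHaarMeasure] :
    ∀ᵐ ω ∂μ, ∀ s : ℂ, σ₀ < s.re → ∃ L : ℂ,
      Tendsto (fun N : ℕ => ∑ n ∈ Finset.range N,
          (ArithmeticFunction.vonMangoldt n : ℂ) * omegaMul ω n /
            ((n : ℂ) ^ s * (((Real.log n) ^ (m + 1) : ℝ) : ℂ)))
        atTop (nhds L) ∧
      Tendsto (fun N : ℕ => ∑ p ∈ Finset.range N,
          if h : p.Prime then
            polylog m ((p : ℂ) ^ (-s) * (ω ⟨p, h⟩ : ℂ)) / (((Real.log p) ^ m : ℝ) : ℂ)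
          else 0)
        atTop (nhds L) := by
  filter_upwards [primeCoeff_isBigO μ σ₀ hσ₀] with ω hω s hs
  have hs2 : 1 / 2 < s.re := hσ₀.trans hs
  have hc0 : primeCoeff ω 0 = 0 := dif_neg Nat.not_prime_zero
  have hc1 : primeCoeff ω 1 = 0 := dif_neg Nat.not_prime_one
  obtain ⟨l, hl⟩ := dirichlet_converges hc0 (by linarith) hs hω
  obtain ⟨A, hA⟩ := dirichlet_log_converges (by rw [hc0, mul_zero]) (by rw [hc1, mul_zero]) m hl
  have hA' : ∀ n : ℕ, (n : ℂ) ^ (-s) * primeCoeff ω n / ((Real.log n ^ m : ℝ) : ℂ) =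
      if n.Prime then lTerm ω m s n else 0 := by
    intro n
    by_cases hn : n.Prime
    · have h1 := lTerm_prime_pow ω m s ⟨n, hn⟩ 0
      have h2 := primeCoeff_prime ω ⟨n, hn⟩
      have h3 : ((⟨n, hn⟩ : Nat.Primes) : ℕ) = n := rfl
      rw [zero_add, pow_one, h3] at h1
      rw [h3] at h2
      rw [if_pos hn, h1, h2]
      unfold dTerm
      simp
    · rw [if_neg hn, primeCoeff, dif_neg hn]
      simp
  simp only [hA'] at hA
  refine ⟨A + ∑' x : Nat.Primes × ℕ, dTerm ω m s x.1 (x.2 + 1), ?_, ?_⟩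
  · refine (hA.add (lTerm_hasSum ω m s hs2).tendsto_sum_nat).congr fun N => ?_
    rw [← Finset.sum_add_distrib]
    refine Finset.sum_congr rfl fun n _ => ?_
    change _ = lTerm ω m s n
    split_ifs <;> simp
  · refine (hA.add (rTerm_hasSum ω m s hs2).tendsto_sum_nat).congr fun N => ?_
    rw [← Finset.sum_add_distrib]
    refine Finset.sum_congr rfl fun n _ => ?_
    change _ = rTerm ω m s n
    by_cases hn : n.Prime
    · simp [hn]
    · simp [hn, rTerm]
end

section
/- Let 0 < η and suppose M η < π where M > 0. Let f be an entire function of exponential type with limsup_{y → ∞} (log |f(iy)|)/y ≤ M and limsup_{y → ∞} (log |f(-iy)|)/y ≤ M. Let (ξ_n) be a sequence of positive reals with |ξ_m - ξ_n| ≥ (η/2)|m - n| for all m, n, and ξ_n / n → η. Then limsup_{n → ∞} (log |f(ξ_n)|)/ξ_n = limsup_{r → ∞} (log |f(r)|)/r. -/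
open Complex Filter

/-- `log(x)/r` valued in `EReal`, with the convention `log 0 = -∞`. -/
noncomputable def elogDiv (x r : ℝ) : EReal :=
  ((r⁻¹ : ℝ) : EReal) * (if x = 0 then ⊥ else ((Real.log x : ℝ) : EReal))


lemma exists_div {ι : Type*} [DecidableEq ι] (s : Finset ι) (a : ι → ℂ) (ha : Set.InjOn a s) :
    ∀ (N : ℂ → ℂ), Differentiable ℂ N → (∀ i ∈ s, N (a i) = 0) →
    ∃ q : ℂ → ℂ, Differentiable ℂ q ∧ ∀ w, N w = q w * ∏ i ∈ s, (w - a i) := by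
  induction s using Finset.induction_on with
  | empty => intro N hN _; exact ⟨N, hN, by simp⟩
  | insert j s hj ih =>
    intro N hN h0
    have hd : Differentiable ℂ (dslope N (a j)) := by
      rw [← differentiableOn_univ] at hN ⊢
      exact (Complex.differentiableOn_dslope (by simp)).2 hN
    have hNd : ∀ w, N w = (w - a j) * dslope N (a j) w := by
      intro w
      have := sub_smul_dslope N (a j) w
      rw [h0 j (by simp), sub_zero, smul_eq_mul] at this
      exact this.symm
    obtain ⟨q, hq, hqe⟩ := ih (ha.mono (by simp)) (dslope N (a j)) hd (by
      intro i hi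
      have h1 := hNd (a i)
      rw [h0 i (by simp [hi])] at h1
      have h2 : a i - a j ≠ 0 := by
        intro h
        have := ha (by simp [hi]) (by simp) (sub_eq_zero.1 h)
        exact hj (this ▸ hi)
      simpa [h2] using h1.symm)
    refine ⟨q, hq, fun w => ?_⟩
    rw [hNd, hqe, Finset.prod_insert hj]; ring

lemma maxRect (D : ℂ → ℂ) (a b c d K : ℝ) (hab : a < b) (hcd : c < d)
    (hD : ∀ z : ℂ, a ≤ z.re → z.re ≤ b → c ≤ z.im → z.im ≤ d → DifferentiableAt ℂ D z)
    (hK : ∀ z : ℂ, a ≤ z.re → z.re ≤ b → c ≤ z.im → z.im ≤ d →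
      (z.re = a ∨ z.re = b ∨ z.im = c ∨ z.im = d) → ‖D z‖ ≤ K)
    (z : ℂ) (h1 : a ≤ z.re) (h2 : z.re ≤ b) (h3 : c ≤ z.im) (h4 : z.im ≤ d) : ‖D z‖ ≤ K := by
  have hcl : closure (Set.Ioo a b ×ℂ Set.Ioo c d) = Set.Icc a b ×ℂ Set.Icc c d := by
    rw [Complex.closure_reProdIm, closure_Ioo hab.ne, closure_Ioo hcd.ne]
  refine Complex.norm_le_of_forall_mem_frontier_norm_le (U := Set.Ioo a b ×ℂ Set.Ioo c d) ?_ ?_ ?_ ?_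
  · exact (Metric.isBounded_Ioo a b).reProdIm (Metric.isBounded_Ioo c d)
  · apply DifferentiableOn.diffContOnCl
    rw [hcl]
    intro z hz
    rw [Complex.mem_reProdIm] at hz
    exact (hD z hz.1.1 hz.1.2 hz.2.1 hz.2.2).differentiableWithinAt
  · intro z hz
    have ho : IsOpen (Set.Ioo a b ×ℂ Set.Ioo c d) := isOpen_Ioo.reProdIm isOpen_Ioo
    rw [ho.frontier_eq, hcl] at hz
    obtain ⟨hz1, hz2⟩ := hz
    rw [Complex.mem_reProdIm] at hz1 hz2
    obtain ⟨⟨p1, p2⟩, p3, p4⟩ := hz1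
    refine hK z p1 p2 p3 p4 ?_
    by_contra hcon
    push Not at hcon
    obtain ⟨q1, q2, q3, q4⟩ := hcon
    exact hz2 ⟨⟨lt_of_le_of_ne p1 q1.symm, lt_of_le_of_ne p2 q2⟩,
      lt_of_le_of_ne p3 q3.symm, lt_of_le_of_ne p4 q4⟩
  · rw [hcl, Complex.mem_reProdIm]; exact ⟨⟨h1, h2⟩, h3, h4⟩

lemma sqrt_tele (r : ℝ) (hr : 0 ≤ r) : 1 / √(r + 1) ≤ 2 * (√(r + 1) - √r) := by
  have h1 : 0 < √(r + 1) := Real.sqrt_pos.2 (by linarith)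
  rw [div_le_iff₀ h1]
  have h2 := Real.sq_sqrt (show 0 ≤ r + 1 by linarith)
  have h3 := Real.sq_sqrt hr
  nlinarith [sq_nonneg (√(r + 1) - √r)]

lemma sqrt_sum (L m : ℕ) (h1 : L ≤ m) (h2 : m ≤ 3 * L) :
    ∑ n ∈ Finset.Icc L (3 * L), 1 / √(|(n : ℝ) - m| + 1) ≤ 4 * √(2 * L + 1) := by
  have key : ∀ n : ℕ, 1 / √(|(n : ℝ) - m| + 1) ≤
      (2 * √(((n + 1 : ℕ) : ℝ) - m) - 2 * √((m : ℝ) - ((n + 1 : ℕ) : ℝ)))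
        - (2 * √((n : ℝ) - m) - 2 * √((m : ℝ) - n)) := by
    intro n
    push_cast
    rcases le_or_gt m n with h | h
    · have h' : (m : ℝ) ≤ n := by exact_mod_cast h
      rw [abs_of_nonneg (by linarith), Real.sqrt_eq_zero_of_nonpos (show (m : ℝ) - (n + 1) ≤ 0 by linarith),
        Real.sqrt_eq_zero_of_nonpos (show (m : ℝ) - n ≤ 0 by linarith)]
      have := sqrt_tele ((n : ℝ) - m) (by linarith)
      rw [show (n : ℝ) + 1 - m = n - m + 1 by ring]
      linarith
    · have h' : (n : ℝ) + 1 ≤ m := by exact_mod_cast h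
      rw [abs_of_nonpos (by linarith), Real.sqrt_eq_zero_of_nonpos (show (n : ℝ) + 1 - m ≤ 0 by linarith),
        Real.sqrt_eq_zero_of_nonpos (show (n : ℝ) - m ≤ 0 by linarith)]
      have := sqrt_tele ((m : ℝ) - (n + 1)) (by linarith)
      rw [show (m : ℝ) - (n + 1) + 1 = m - n by ring] at this
      have h3 : 1 / √(-((n : ℝ) - m) + 1) ≤ 1 / √((m : ℝ) - n) := by
        apply one_div_le_one_div_of_le (Real.sqrt_pos.2 (by linarith))
        apply Real.sqrt_le_sqrt; linarith
      linarith
  calc _ ≤ ∑ n ∈ Finset.Icc L (3 * L), ((2 * √(((n + 1 : ℕ) : ℝ) - m) - 2 * √((m : ℝ) - ((n + 1 : ℕ) : ℝ)))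
        - (2 * √((n : ℝ) - m) - 2 * √((m : ℝ) - n))) := Finset.sum_le_sum fun n _ => key n
    _ = (2 * √(((3 * L + 1 : ℕ) : ℝ) - m) - 2 * √((m : ℝ) - ((3 * L + 1 : ℕ) : ℝ)))
        - (2 * √((L : ℝ) - m) - 2 * √((m : ℝ) - L)) := by
      rw [← Finset.Ico_add_one_right_eq_Icc]
      exact Finset.sum_Ico_sub (fun n : ℕ => 2 * √((n : ℝ) - m) - 2 * √((m : ℝ) - n)) (by omega)
    _ ≤ 4 * √(2 * L + 1) := by
      have h1' : (L : ℝ) ≤ m := by exact_mod_cast h1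
      have h2' : (m : ℝ) ≤ 3 * L := by exact_mod_cast h2
      have a1 : √(((3 * L + 1 : ℕ) : ℝ) - m) ≤ √(2 * L + 1) := by
        apply Real.sqrt_le_sqrt; push_cast; linarith
      have a2 : √((m : ℝ) - L) ≤ √(2 * L + 1) := by
        apply Real.sqrt_le_sqrt; linarith
      have a3 := Real.sqrt_nonneg ((m : ℝ) - ((3 * L + 1 : ℕ) : ℝ))
      have a4 := Real.sqrt_nonneg ((L : ℝ) - m)
      linarith

lemma one_add_le_exp_sqrt (y : ℝ) (hy : 0 ≤ y) : 1 + y ≤ Real.exp (2 * √y) := by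
  have h1 := Real.add_one_le_exp (√y)
  have h2 : Real.exp (2 * √y) = Real.exp (√y) ^ 2 := by rw [← Real.exp_nat_mul]; norm_num
  rw [h2]
  have h3 := Real.sq_sqrt hy
  have h4 := Real.sqrt_nonneg y
  nlinarith

lemma prod_bound (L m : ℕ) (h1 : L ≤ m) (h2 : m ≤ 3 * L) (T : ℝ) (hT : 0 ≤ T)
    (s : Finset ℕ) (hs : s ⊆ Finset.Icc L (3 * L)) :
    ∏ n ∈ s, (1 + 16 * T / (|(n : ℝ) - m| + 1)) ≤ Real.exp (32 * (√T * √(2 * L + 1))) := by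
  have hpos : ∀ n : ℕ, 0 ≤ 16 * T / (|(n : ℝ) - m| + 1) := fun n => by positivity
  calc _ ≤ ∏ n ∈ Finset.Icc L (3 * L), (1 + 16 * T / (|(n : ℝ) - m| + 1)) := by
        refine Finset.prod_le_prod_of_subset_of_one_le hs ?_ ?_
        · intro n _; linarith [hpos n]
        · intro n _ _; linarith [hpos n]
    _ ≤ ∏ n ∈ Finset.Icc L (3 * L), Real.exp (8 * √T * (1 / √(|(n : ℝ) - m| + 1))) := by
        apply Finset.prod_le_prod
        · intro n _; linarith [hpos n]
        · intro n _
          refine (one_add_le_exp_sqrt _ (hpos n)).trans ?_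
          apply Real.exp_le_exp.2
          rw [Real.sqrt_div (by positivity), Real.sqrt_mul (by norm_num),
            show √(16 : ℝ) = 4 by rw [show (16 : ℝ) = 4 ^ 2 by norm_num]; exact Real.sqrt_sq (by norm_num)]
          apply le_of_eq; ring
    _ = Real.exp (8 * √T * ∑ n ∈ Finset.Icc L (3 * L), 1 / √(|(n : ℝ) - m| + 1)) := by
        rw [← Real.exp_sum, Finset.mul_sum]
    _ ≤ _ := by
        apply Real.exp_le_exp.2
        have := sqrt_sum L m h1 h2
        have h := Real.sqrt_nonneg T
        nlinarith [mul_le_mul_of_nonneg_left this h]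


lemma sin_normSq (z : ℂ) : ‖Complex.sin z‖ ^ 2 = Real.sin z.re ^ 2 + Real.sinh z.im ^ 2 := by
  rw [← Complex.normSq_eq_norm_sq]
  have h : Complex.sin z = ((Real.sin z.re * Real.cosh z.im : ℝ) : ℂ)
      + ((Real.cos z.re * Real.sinh z.im : ℝ) : ℂ) * I := by
    rw [Complex.sin_eq]; push_cast; ring
  rw [h, Complex.normSq_add_mul_I]
  have h1 := Real.sin_sq_add_cos_sq z.re
  have h2 := Real.cosh_sq z.im
  have h3 : Real.cos z.re ^ 2 = 1 - Real.sin z.re ^ 2 := by linarith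
  rw [mul_pow, mul_pow, h2, h3]; ring

lemma sin_upper (z : ℂ) : ‖Complex.sin z‖ ≤ Real.exp |z.im| := by
  have h := sin_normSq z
  have h1 : Real.sin z.re ^ 2 ≤ 1 := Real.sin_sq_le_one _
  have h2 := Real.cosh_sq z.im
  have h3 : Real.cosh z.im ≤ Real.exp |z.im| := by
    rw [← Real.cosh_abs, Real.cosh_eq]
    have : Real.exp (-|z.im|) ≤ Real.exp |z.im| := Real.exp_le_exp.2 (by linarith [abs_nonneg z.im])
    linarith
  have h4 := Real.cosh_pos z.im
  refine le_trans ?_ h3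
  refine le_of_sq_le_sq ?_ h4.le
  linarith

lemma sin_lower_side (z : ℂ) (h1 : Real.sin z.re ^ 2 = 1) : Real.exp |z.im| / 4 ≤ ‖Complex.sin z‖ := by
  have h := sin_normSq z
  have h2 := Real.cosh_sq z.im
  have h3 : Real.exp |z.im| / 4 ≤ Real.cosh z.im := by
    rw [← Real.cosh_abs, Real.cosh_eq]
    have := Real.exp_pos (-|z.im|)
    have := Real.exp_pos (|z.im|)
    linarith
  refine h3.trans ?_
  refine le_of_sq_le_sq ?_ (norm_nonneg _)
  linarith

lemma sin_lower_top (z : ℂ) (h1 : 1 ≤ |z.im|) : Real.exp |z.im| / 4 ≤ ‖Complex.sin z‖ := by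
  have h := sin_normSq z
  have h3 : Real.exp |z.im| / 4 ≤ Real.sinh |z.im| := by
    rw [Real.sinh_eq]
    have h5 : Real.exp (-|z.im|) * Real.exp |z.im| = 1 := by rw [← Real.exp_add]; simp
    have h6 := Real.add_one_le_exp |z.im|
    have := Real.exp_pos (-|z.im|)
    nlinarith
  refine h3.trans ?_
  have h7 : Real.sinh |z.im| ^ 2 = Real.sinh z.im ^ 2 := by
    rcases abs_cases z.im with ⟨h, _⟩ | ⟨h, _⟩ <;> rw [h]
    rw [Real.sinh_neg]; ring
  refine le_of_sq_le_sq ?_ (norm_nonneg _)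
  have := sq_nonneg (Real.sin z.re)
  linarith

lemma sin_half (k : ℤ) : Real.sin (Real.pi * (k + 1 / 2)) ^ 2 = 1 := by
  have h : Real.cos (Real.pi * (k + 1 / 2)) = 0 := by
    rw [Real.cos_eq_zero_iff]; exact ⟨k, by ring⟩
  have := Real.sin_sq_add_cos_sq (Real.pi * (k + 1 / 2))
  rw [h] at this; linarith

/-- boundary of the rectangle -/
def RectBdry (L : ℕ) (w : ℂ) : Prop :=
  (L : ℝ) - 1 / 2 ≤ w.re ∧ w.re ≤ 3 * L + 1 / 2 ∧ -(L : ℝ) ≤ w.im ∧ w.im ≤ L ∧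
    (w.re = (L : ℝ) - 1 / 2 ∨ w.re = 3 * L + 1 / 2 ∨ w.im = -(L : ℝ) ∨ w.im = L)

def BoxBdry (L : ℕ) (w : ℂ) : Prop :=
  2 * (L : ℝ) - 3 / 2 ≤ w.re ∧ w.re ≤ 2 * L + 3 / 2 ∧ -(1 / 2 : ℝ) ≤ w.im ∧ w.im ≤ 1 / 2 ∧
    (w.re = 2 * (L : ℝ) - 3 / 2 ∨ w.re = 2 * L + 3 / 2 ∨ w.im = -(1 / 2 : ℝ) ∨ w.im = 1 / 2)

lemma sin_rect (L : ℕ) (hL : 1 ≤ L) (w : ℂ) (hw : RectBdry L w) :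
    Real.exp (Real.pi * |w.im|) / 4 ≤ ‖Complex.sin (Real.pi * w)‖ := by
  have him : ((Real.pi : ℂ) * w).im = Real.pi * w.im := by simp
  have hre : ((Real.pi : ℂ) * w).re = Real.pi * w.re := by simp
  have habs : |((Real.pi : ℂ) * w).im| = Real.pi * |w.im| := by
    rw [him, abs_mul, abs_of_pos Real.pi_pos]
  have hL' : (1 : ℝ) ≤ L := by exact_mod_cast hL
  rw [← habs]
  have htop : |w.im| = L → Real.exp |((Real.pi : ℂ) * w).im| / 4 ≤ ‖Complex.sin (Real.pi * w)‖ := by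
    intro h
    apply sin_lower_top
    rw [habs, h]
    nlinarith [Real.pi_gt_three]
  obtain ⟨-, -, -, -, h | h | h | h⟩ := hw
  · apply sin_lower_side
    rw [hre, h]
    have := sin_half ((L : ℤ) - 1)
    push_cast at this
    rw [show (L : ℝ) - 1 / 2 = L - 1 + 1 / 2 by ring]; exact this
  · apply sin_lower_side
    rw [hre, h]
    have := sin_half (3 * (L : ℤ))
    push_cast at this
    exact this
  · apply htop; rw [h, abs_neg, abs_of_nonneg (by positivity)]
  · apply htop; rw [h, abs_of_nonneg (by positivity)]

lemma S_lower0 (V : Finset ℕ) (S : ℂ → ℂ) (hS : Differentiable ℂ S)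
    (hSe : ∀ w, Complex.sin (Real.pi * w) = S w * ∏ n ∈ V, (w - (n : ℂ)))
    (p : ℕ) (hp : p ∈ V) (t : ℝ) (ht : |t - p| ≤ 1 / 2) :
    2 ≤ ‖S t‖ * ∏ n ∈ V.erase p, |t - n| := by
  have main : ∀ t : ℝ, |t - p| ≤ 1 / 2 → t ≠ p → 2 ≤ ‖S t‖ * ∏ n ∈ V.erase p, |t - n| := by
    intro t ht hne
    have h1 : |Real.sin (Real.pi * t)| = ‖S t‖ * ∏ n ∈ V, |t - n| := by
      have := congrArg norm (hSe t)
      rw [norm_mul, norm_prod] at this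
      rw [← Complex.ofReal_mul, ← Complex.ofReal_sin, Complex.norm_real, Real.norm_eq_abs] at this
      rw [this]
      congr 1
      apply Finset.prod_congr rfl
      intro n _
      rw [← Complex.ofReal_natCast, ← Complex.ofReal_sub, Complex.norm_real, Real.norm_eq_abs]
    have h2 : |Real.sin (Real.pi * t)| = |Real.sin (Real.pi * (t - p))| := by
      rw [mul_sub, mul_comm Real.pi (p : ℝ), Real.sin_sub_nat_mul_pi, abs_mul]
      simp
    have h3 : 2 * |t - p| ≤ |Real.sin (Real.pi * (t - p))| := by
      have h := Real.mul_abs_le_abs_sin (x := Real.pi * (t - p)) (by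
        rw [abs_mul, abs_of_pos Real.pi_pos]; nlinarith [Real.pi_pos])
      rw [abs_mul, abs_of_pos Real.pi_pos] at h
      have : 2 / Real.pi * (Real.pi * |t - p|) = 2 * |t - p| := by
        field_simp
      linarith
    rw [← Finset.mul_prod_erase V _ hp] at h1
    have h4 : 0 < |t - p| := abs_pos.2 (sub_ne_zero.2 hne)
    have h5 : 2 * |t - p| ≤ (‖S t‖ * ∏ n ∈ V.erase p, |t - n|) * |t - p| := by
      calc _ ≤ _ := h3
        _ = _ := by rw [← h2, h1]; ring
    exact le_of_mul_le_mul_right h5 h4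
  by_cases hne : t = p
  · have hc : Continuous fun t : ℝ => ‖S t‖ * ∏ n ∈ V.erase p, |t - n| := by
      have := hS.continuous
      fun_prop
    have hlim := (hc.tendsto t).mono_left (nhdsWithin_le_nhds (s := {t}ᶜ))
    refine ge_of_tendsto hlim ?_
    have : ∀ᶠ s in nhdsWithin t {t}ᶜ, s ∈ Metric.ball t (1/2) :=
      mem_nhdsWithin_of_mem_nhds (Metric.ball_mem_nhds t (by norm_num))
    filter_upwards [this, self_mem_nhdsWithin] with s hs hs2
    rw [Metric.mem_ball, Real.dist_eq] at hs
    rw [hne] at hs hs2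
    exact main s hs.le hs2
  · exact main t ht hne

lemma S_lower (L : ℕ) (S : ℂ → ℂ) (hS : Differentiable ℂ S)
    (hSe : ∀ w, Complex.sin (Real.pi * w) = S w * ∏ n ∈ Finset.Icc L (3 * L), (w - (n : ℂ)))
    (t : ℝ) (h1 : (L : ℝ) - 1 / 2 < t) (h2 : t < 3 * L + 1 / 2) :
    2 ≤ ‖S t‖ * ∏ n ∈ Finset.Icc L (3 * L), (|t - n| + 1) := by
  have hr := abs_sub_round t
  obtain ⟨ha, hb⟩ := abs_le.1 hr
  have e1 : (L : ℤ) ≤ round t := by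
    have : (L : ℝ) - 1 < (round t : ℤ) := by linarith
    have : (L : ℤ) - 1 < round t := by exact_mod_cast this
    omega
  have e2 : round t ≤ 3 * (L : ℤ) := by
    have : ((round t : ℤ) : ℝ) < 3 * L + 1 := by linarith
    have : round t < 3 * (L : ℤ) + 1 := by exact_mod_cast this
    omega
  obtain ⟨p, hp⟩ := Int.eq_ofNat_of_zero_le (show 0 ≤ round t by omega)
  rw [hp] at hr e1 e2
  have hpV : p ∈ Finset.Icc L (3 * L) := by rw [Finset.mem_Icc]; omega
  have h := S_lower0 _ S hS hSe p hpV t (by exact_mod_cast hr)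
  refine h.trans ?_
  apply mul_le_mul_of_nonneg_left _ (norm_nonneg _)
  rw [← Finset.mul_prod_erase _ (fun n : ℕ => |t - n| + 1) hpV]
  have a1 : ∏ n ∈ (Finset.Icc L (3 * L)).erase p, |t - n| ≤ ∏ n ∈ (Finset.Icc L (3 * L)).erase p, (|t - n| + 1) :=
    Finset.prod_le_prod (fun _ _ => abs_nonneg _) (fun _ _ => by linarith)
  have a2 : 0 ≤ ∏ n ∈ (Finset.Icc L (3 * L)).erase p, |t - n| := Finset.prod_nonneg (fun _ _ => abs_nonneg _)
  have a3 := abs_nonneg (t - p)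
  nlinarith


lemma rect_dist (L b : ℕ) (hbL : 2 * b ≤ L) (n : ℕ) (h1 : L + b ≤ n) (h2 : n ≤ 3 * L - b)
    (w : ℂ) (hw : RectBdry L w) : (b : ℝ) ≤ ‖w - n‖ := by
  have h1' : (L : ℝ) + b ≤ n := by exact_mod_cast h1
  have h2' : (n : ℝ) + b ≤ 3 * L := by
    have : n + b ≤ 3 * L := by omega
    exact_mod_cast this
  have h3' : 2 * (b : ℝ) ≤ L := by exact_mod_cast hbL
  have hb0 : (0 : ℝ) ≤ b := by positivity
  have e1 := Complex.abs_re_le_norm (w - n)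
  have e2 := Complex.abs_im_le_norm (w - n)
  simp only [sub_re, natCast_re, sub_im, natCast_im, sub_zero] at e1 e2
  obtain ⟨-, -, -, -, h | h | h | h⟩ := hw
  · have := neg_abs_le (w.re - n); linarith
  · have := le_abs_self (w.re - n); linarith
  · have := neg_abs_le (w.im); linarith
  · have := le_abs_self (w.im); linarith

lemma rect_dist_upper (L : ℕ) (hL : 1 ≤ L) (n : ℕ) (h1 : L ≤ n) (h2 : n ≤ 3 * L)
    (w : ℂ) (hw : RectBdry L w) : ‖w - n‖ ≤ 4 * L := by
  have h1' : (L : ℝ) ≤ n := by exact_mod_cast h1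
  have h2' : (n : ℝ) ≤ 3 * L := by exact_mod_cast h2
  have h3' : (1 : ℝ) ≤ L := by exact_mod_cast hL
  have e1 := Complex.norm_le_abs_re_add_abs_im (w - n)
  simp only [sub_re, natCast_re, sub_im, natCast_im, sub_zero] at e1
  obtain ⟨a1, a2, a3, a4, -⟩ := hw
  have b1 : |w.re - n| ≤ 2 * L + 1 / 2 := abs_le.2 ⟨by linarith, by linarith⟩
  have b2 : |w.im| ≤ L := abs_le.2 ⟨by linarith, by linarith⟩
  linarith

lemma box_dist (L n : ℕ) (w : ℂ) (hw : BoxBdry L w) :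
    (|(n : ℝ) - (2 * L : ℕ)| + 1) / 6 ≤ ‖w - n‖ ∧ |(n : ℝ) - (2 * L : ℕ)| - 3 / 2 ≤ ‖w - n‖
      ∧ 1 / 2 ≤ ‖w - n‖ := by
  have e1 := Complex.abs_re_le_norm (w - n)
  have e2 := Complex.abs_im_le_norm (w - n)
  simp only [sub_re, natCast_re, sub_im, natCast_im, sub_zero] at e1 e2
  obtain ⟨a1, a2, a3, a4, a5⟩ := hw
  push_cast
  have k1 : |(n : ℝ) - 2 * L| - 3 / 2 ≤ ‖w - n‖ := by
    have : |(n : ℝ) - 2 * L| ≤ |w.re - n| + 3 / 2 := by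
      rcases abs_cases ((n : ℝ) - 2 * L) with ⟨h, _⟩ | ⟨h, _⟩ <;> rw [h]
      · have := neg_abs_le (w.re - n); linarith
      · have := le_abs_self (w.re - n); linarith
    linarith
  have k2 : 1 / 2 ≤ ‖w - n‖ := by
    have aux : ∀ j : ℤ, (1 : ℝ) / 2 ≤ |(j : ℝ) + 1 / 2| := by
      intro j
      rcases le_or_gt 0 j with h | h
      · have : (0 : ℝ) ≤ j := by exact_mod_cast h
        rw [abs_of_nonneg (by linarith)]; linarith
      · have : (j : ℝ) ≤ -1 := by exact_mod_cast (show j ≤ -1 by omega)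
        rw [abs_of_nonpos (by linarith)]; linarith
    rcases a5 with h | h | h | h
    · have := aux (2 * (L : ℤ) - 2 - n)
      push_cast at this
      rw [show 2 * (L : ℝ) - 2 - n + 1 / 2 = w.re - n by rw [h]; ring] at this
      linarith
    · have := aux (2 * (L : ℤ) + 1 - n)
      push_cast at this
      rw [show 2 * (L : ℝ) + 1 - n + 1 / 2 = w.re - n by rw [h]; ring] at this
      linarith
    · have := neg_abs_le (w.im); linarith
    · have := le_abs_self (w.im); linarith
  refine ⟨?_, k1, k2⟩
  rcases le_or_gt |(n : ℝ) - 2 * L| 2 with h | h <;> linarith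

lemma sep_ratio (T r d x : ℝ) (hT : 1 ≤ T) (hr : 1 ≤ r) (hd1 : r / 2 ≤ d) (hd2 : r - 2 * T ≤ d)
    (hx : x ≤ r + T) : x + 1 ≤ (1 + 16 * T / (r + 1)) * d := by
  have h1 : x + 1 ≤ r + 2 * T := by linarith
  have h2 : 8 * T / r ≤ 16 * T / (r + 1) := by
    rw [div_le_div_iff₀ (by linarith) (by linarith)]; nlinarith
  have h3 : r + 2 * T ≤ (1 + 8 * T / r) * d := by
    have e : (1 + 8 * T / r) * d = d + 8 * T * (d / r) := by field_simp
    have e2 : 1 / 2 ≤ d / r := by rw [le_div_iff₀ (by linarith)]; linarith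
    rw [e]
    nlinarith
  have h4 : (1 + 8 * T / r) * d ≤ (1 + 16 * T / (r + 1)) * d := by
    apply mul_le_mul_of_nonneg_right _ (by linarith)
    linarith
  linarith

section
variable (L b : ℕ) (T : ℝ) (ξ : ℕ → ℝ)

/-- inner window -/
abbrev Wn : Finset ℕ := Finset.Icc (L + b) (3 * L - b)
/-- full window -/
abbrev Vn : Finset ℕ := Finset.Icc L (3 * L)
end

lemma W_sub (L b : ℕ) : Wn L b ⊆ Vn L := by
  intro n; simp only [Finset.mem_Icc]; omega

lemma edge_card (L b : ℕ) (hbL : 2 * b ≤ L) : (Vn L \ Wn L b).card = 2 * b := by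
  rw [Finset.card_sdiff_of_subset (W_sub L b)]
  simp only [Nat.card_Icc]; omega

lemma rect_ratio (L b : ℕ) (T : ℝ) (ξ : ℕ → ℝ) (hb : 1 ≤ b) (hbL : 2 * b ≤ L) (hT : 1 ≤ T)
    (hTb : 2 * T ≤ b) (hξ : ∀ n, L ≤ n → n ≤ 3 * L → |ξ n - n| ≤ T) (w : ℂ) (hw : RectBdry L w) :
    ∏ n ∈ Vn L, ‖w - n‖ ≤ (1 + 2 * T / b) ^ (2 * L + 1) * (4 * L) ^ (2 * b) * ∏ n ∈ Wn L b, ‖w - ξ n‖ := by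
  have hb' : (1 : ℝ) ≤ b := by exact_mod_cast hb
  rw [← Finset.prod_sdiff (W_sub L b)]
  have h1 : ∏ n ∈ Vn L \ Wn L b, ‖w - n‖ ≤ (4 * L) ^ (2 * b) := by
    rw [← edge_card L b hbL, ← Finset.prod_const]
    apply Finset.prod_le_prod (fun _ _ => norm_nonneg _)
    intro n hn
    have := (Finset.mem_sdiff.1 hn).1
    rw [Finset.mem_Icc] at this
    exact rect_dist_upper L (by omega) n this.1 this.2 w hw
  have h2 : ∏ n ∈ Wn L b, ‖w - n‖ ≤ (1 + 2 * T / b) ^ (2 * L + 1) * ∏ n ∈ Wn L b, ‖w - ξ n‖ := by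
    calc ∏ n ∈ Wn L b, ‖w - n‖ ≤ ∏ n ∈ Wn L b, ((1 + 2 * T / b) * ‖w - ξ n‖) := by
          apply Finset.prod_le_prod (fun _ _ => norm_nonneg _)
          intro n hn
          have hn' := W_sub L b hn
          rw [Finset.mem_Icc] at hn hn'
          have a1 := rect_dist L b hbL n hn.1 hn.2 w hw
          have a2 := hξ n hn'.1 hn'.2
          have a3 : ‖w - n‖ ≤ ‖w - ξ n‖ + T := by
            have : w - n = (w - ξ n) + ((ξ n - n : ℝ) : ℂ) := by push_cast; ring
            rw [this]
            refine (norm_add_le _ _).trans ?_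
            rw [Complex.norm_real, Real.norm_eq_abs]; linarith
          have a4 : (b : ℝ) / 2 ≤ ‖w - ξ n‖ := by linarith
          have a5 : 2 * T / b * ‖w - ξ n‖ = 2 * T * (‖w - ξ n‖ / b) := by field_simp
          have a6 : 1 / 2 ≤ ‖w - ξ n‖ / b := by rw [le_div_iff₀ (by linarith)]; linarith
          nlinarith
      _ = (1 + 2 * T / b) ^ (Wn L b).card * ∏ n ∈ Wn L b, ‖w - ξ n‖ := by
          rw [Finset.prod_mul_distrib, Finset.prod_const]
      _ ≤ _ := by
          apply mul_le_mul_of_nonneg_right _ (Finset.prod_nonneg fun _ _ => norm_nonneg _)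
          apply pow_le_pow_right₀
          · have : 0 ≤ 2 * T / b := by positivity
            linarith
          · simp only [Nat.card_Icc]; omega
  calc _ ≤ (4 * (L : ℝ)) ^ (2 * b) * ((1 + 2 * T / b) ^ (2 * L + 1) * ∏ n ∈ Wn L b, ‖w - ξ n‖) := by
        apply mul_le_mul h1 h2 (Finset.prod_nonneg fun _ _ => norm_nonneg _) (by positivity)
    _ = _ := by ring

lemma box_ratio (L b : ℕ) (T : ℝ) (ξ : ℕ → ℝ) (hL : 6 ≤ L) (hbL : 2 * b ≤ L) (hT : 1 ≤ T)
    (hξ : ∀ n, L ≤ n → n ≤ 3 * L → |ξ n - n| ≤ T) (w : ℂ) (hw : BoxBdry L w)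
    (s : Finset ℕ) (hs : s ⊆ Wn L b) :
    (L / 4 : ℝ) ^ (2 * b) * ∏ n ∈ s, ‖w - ξ n‖ ≤
      Real.exp (32 * (√T * √(2 * L + 1))) * ((∏ n ∈ Vn L \ Wn L b, ‖w - n‖) * ∏ n ∈ s, ‖w - n‖) := by
  have hL' : (6 : ℝ) ≤ L := by exact_mod_cast hL
  have h1 : (L / 4 : ℝ) ^ (2 * b) ≤ ∏ n ∈ Vn L \ Wn L b, ‖w - n‖ := by
    rw [← edge_card L b hbL, ← Finset.prod_const]
    apply Finset.prod_le_prod (fun _ _ => by positivity)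
    intro n hn
    rw [Finset.mem_sdiff, Finset.mem_Icc, Finset.mem_Icc] at hn
    have hb2 := (box_dist L n w hw).2.1
    push_cast at hb2
    have h3 : (L : ℝ) / 2 ≤ |(n : ℝ) - 2 * L| := by
      have hbL' : 2 * (b : ℝ) ≤ L := by exact_mod_cast hbL
      rcases (show n < L + b ∨ 3 * L < n + b by omega) with h | h
      · have : (n : ℝ) < L + b := by exact_mod_cast h
        have := neg_abs_le ((n : ℝ) - 2 * L); linarith
      · have : 3 * (L : ℝ) < n + b := by exact_mod_cast h
        have := le_abs_self ((n : ℝ) - 2 * L); linarith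
    linarith
  have h2 : ∏ n ∈ s, ‖w - ξ n‖ ≤ Real.exp (32 * (√T * √(2 * L + 1))) * ∏ n ∈ s, ‖w - n‖ := by
    calc ∏ n ∈ s, ‖w - ξ n‖ ≤ ∏ n ∈ s, ((1 + 16 * T / (|(n : ℝ) - (2 * L : ℕ)| + 1)) * ‖w - n‖) := by
          apply Finset.prod_le_prod (fun _ _ => norm_nonneg _)
          intro n hn
          have hn' := W_sub L b (hs hn)
          rw [Finset.mem_Icc] at hn'
          have a1 := (box_dist L n w hw).1
          have a2 := hξ n hn'.1 hn'.2
          have a3 : ‖w - ξ n‖ ≤ ‖w - n‖ + T := by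
            have : w - ξ n = (w - n) + ((n - ξ n : ℝ) : ℂ) := by push_cast; ring
            rw [this]
            refine (norm_add_le _ _).trans ?_
            rw [Complex.norm_real, Real.norm_eq_abs, abs_sub_comm]; linarith
          set r := |(n : ℝ) - (2 * L : ℕ)|
          have hr : 0 ≤ r := abs_nonneg _
          have a5 : 16 * T / (r + 1) * ‖w - n‖ = 16 * T * (‖w - n‖ / (r + 1)) := by field_simp
          have a6 : 1 / 6 ≤ ‖w - n‖ / (r + 1) := by rw [le_div_iff₀ (by linarith)]; linarith
          nlinarith
      _ = (∏ n ∈ s, (1 + 16 * T / (|(n : ℝ) - (2 * L : ℕ)| + 1))) * ∏ n ∈ s, ‖w - n‖ := by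
          rw [Finset.prod_mul_distrib]
      _ ≤ _ := by
          apply mul_le_mul_of_nonneg_right _ (Finset.prod_nonneg fun _ _ => norm_nonneg _)
          exact prod_bound L (2 * L) (by omega) (by omega) T (by linarith) s (hs.trans (W_sub L b))
  calc _ ≤ (∏ n ∈ Vn L \ Wn L b, ‖w - n‖) * (Real.exp (32 * (√T * √(2 * L + 1))) * ∏ n ∈ s, ‖w - n‖) :=
        mul_le_mul h1 h2 (Finset.prod_nonneg fun _ _ => norm_nonneg _)
          (Finset.prod_nonneg fun _ _ => norm_nonneg _)
    _ = _ := by ring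

lemma node_ratio (L b : ℕ) (T : ℝ) (ξ : ℕ → ℝ) (hbL : 2 * b ≤ L) (hT : 1 ≤ T)
    (hTb : 2 * T ≤ b) (hξ : ∀ n, L ≤ n → n ≤ 3 * L → |ξ n - n| ≤ T)
    (hsep : ∀ m n : ℕ, (1 / 2) * |(m : ℝ) - n| ≤ |ξ m - ξ n|) (m : ℕ) (hm : m ∈ Wn L b) :
    ∏ n ∈ Vn L, (|ξ m - n| + 1) ≤ (2 * T) * (4 * L) ^ (2 * b) *
      Real.exp (32 * (√T * √(2 * L + 1))) * ∏ n ∈ (Wn L b).erase m, |ξ m - ξ n| := by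
  have hmV := W_sub L b hm
  have hmV' := Finset.mem_Icc.1 hmV
  have hxm := hξ m hmV'.1 hmV'.2
  have hbL' : 2 * (b : ℝ) ≤ L := by exact_mod_cast hbL
  have htri : ∀ n : ℕ, |ξ m - n| ≤ |(n : ℝ) - m| + T := by
    intro n
    have := abs_sub_le (ξ m) m n
    rw [abs_sub_comm (m : ℝ) n] at this; linarith
  rw [← Finset.prod_sdiff (W_sub L b)]
  have h1 : ∏ n ∈ Vn L \ Wn L b, (|ξ m - n| + 1) ≤ (4 * L) ^ (2 * b) := by
    rw [← edge_card L b hbL, ← Finset.prod_const]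
    apply Finset.prod_le_prod (fun _ _ => by positivity)
    intro n hn
    have hn' := (Finset.mem_sdiff.1 hn).1
    rw [Finset.mem_Icc] at hn'
    have := htri n
    have c1 : (L : ℝ) ≤ m := by exact_mod_cast hmV'.1
    have c2 : (m : ℝ) ≤ 3 * L := by exact_mod_cast hmV'.2
    have c3 : (L : ℝ) ≤ n := by exact_mod_cast hn'.1
    have c4 : (n : ℝ) ≤ 3 * L := by exact_mod_cast hn'.2
    have : |(n : ℝ) - m| ≤ 2 * L := abs_le.2 ⟨by linarith, by linarith⟩
    linarith
  have h2 : ∏ n ∈ Wn L b, (|ξ m - n| + 1) ≤ (2 * T) *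
      (Real.exp (32 * (√T * √(2 * L + 1))) * ∏ n ∈ (Wn L b).erase m, |ξ m - ξ n|) := by
    rw [← Finset.mul_prod_erase _ _ hm]
    apply mul_le_mul _ _ (Finset.prod_nonneg fun _ _ => by positivity) (by linarith)
    · linarith
    calc ∏ n ∈ (Wn L b).erase m, (|ξ m - n| + 1)
        ≤ ∏ n ∈ (Wn L b).erase m, ((1 + 16 * T / (|(n : ℝ) - m| + 1)) * |ξ m - ξ n|) := by
          apply Finset.prod_le_prod (fun _ _ => by positivity)
          intro n hn
          rw [Finset.mem_erase] at hn
          have hnV := Finset.mem_Icc.1 (W_sub L b hn.2)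
          have hxn := hξ n hnV.1 hnV.2
          apply sep_ratio T _ _ _ hT
          · have : (1 : ℤ) ≤ |(n : ℤ) - m| := by
              apply Int.one_le_abs; have := hn.1; omega
            exact_mod_cast this
          · have := hsep m n
            rw [abs_sub_comm (m : ℝ) n] at this; linarith
          · have e1 := abs_sub_le (n : ℝ) (ξ n) m
            have e2 := abs_sub_le (ξ n) (ξ m) m
            rw [abs_sub_comm (n : ℝ) (ξ n)] at e1
            rw [abs_sub_comm (ξ n) (ξ m)] at e2
            linarith
          · exact htri n
      _ = (∏ n ∈ (Wn L b).erase m, (1 + 16 * T / (|(n : ℝ) - m| + 1))) * ∏ n ∈ (Wn L b).erase m, |ξ m - ξ n| := by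
          rw [Finset.prod_mul_distrib]
      _ ≤ _ := by
          apply mul_le_mul_of_nonneg_right _ (Finset.prod_nonneg fun _ _ => abs_nonneg _)
          exact prod_bound L m hmV'.1 hmV'.2 T (by linarith) _
            ((Finset.erase_subset _ _).trans (W_sub L b))
  calc _ ≤ (4 * (L : ℝ)) ^ (2 * b) * ((2 * T) *
      (Real.exp (32 * (√T * √(2 * L + 1))) * ∏ n ∈ (Wn L b).erase m, |ξ m - ξ n|)) :=
        mul_le_mul h1 h2 (Finset.prod_nonneg fun _ _ => by positivity) (by positivity)
    _ = _ := by ring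


lemma local_bound (L b : ℕ) (T Y y : ℝ) (ξ : ℕ → ℝ) (hL : 6 ≤ L) (hb : 1 ≤ b) (hbL : 2 * b ≤ L)
    (hT : 1 ≤ T) (hTb : 2 * T ≤ b) (hξ : ∀ n, L ≤ n → n ≤ 3 * L → |ξ n - n| ≤ T)
    (hsep : ∀ m n : ℕ, (1 / 2) * |(m : ℝ) - n| ≤ |ξ m - ξ n|)
    (h : ℂ → ℂ) (hh : Differentiable ℂ h) (hY0 : 0 ≤ Y) (hy0 : 0 ≤ y)
    (hY : ∀ w, RectBdry L w → ‖h w‖ ≤ Y * ‖Complex.sin (Real.pi * w)‖)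
    (hy : ∀ m, L ≤ m → m ≤ 3 * L → ‖h (ξ m)‖ ≤ y)
    (w : ℂ) (hw : BoxBdry L w) :
    ‖h w‖ ≤ Real.exp Real.pi * Real.exp (32 * (√T * √(2 * L + 1))) * 16 ^ (2 * b) *
      (Y * (1 + 2 * T / b) ^ (2 * L + 1) +
        4 * T * (2 * L + 1) * y * Real.exp (32 * (√T * √(2 * L + 1)))) := by
  have hL' : (6 : ℝ) ≤ L := by exact_mod_cast hL
  have hb' : (1 : ℝ) ≤ b := by exact_mod_cast hb
  have hbL' : 2 * (b : ℝ) ≤ L := by exact_mod_cast hbL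
  set Pb := Real.exp (32 * (√T * √(2 * L + 1))) with hPb
  have hPb0 : 0 < Pb := Real.exp_pos _
  obtain ⟨S, hS, hSe⟩ := exists_div (Vn L) (fun n : ℕ => (n : ℂ))
    (fun a _ b _ hab => Nat.cast_injective hab) (fun w => Complex.sin (Real.pi * w)) (by fun_prop) (by
      intro i _
      show Complex.sin (Real.pi * (i : ℂ)) = 0
      rw [mul_comm]; exact Complex.sin_nat_mul_pi i)
  have hξinj : Function.Injective ξ := by
    intro m n hmn
    have := hsep m n
    rw [hmn, sub_self, abs_zero] at this
    have h2 : |(m : ℝ) - n| = 0 := le_antisymm (by linarith) (abs_nonneg _)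
    exact_mod_cast sub_eq_zero.1 (abs_eq_zero.1 h2)
  have hξinjC : Function.Injective (fun n : ℕ => (ξ n : ℂ)) := fun m n hmn => hξinj (Complex.ofReal_injective hmn)
  have hloc : ∀ m ∈ Wn L b, (L : ℝ) - 1 / 2 < ξ m ∧ ξ m < 3 * L + 1 / 2 := by
    intro m hm
    have hmV := Finset.mem_Icc.1 (W_sub L b hm)
    have hx := abs_le.1 (hξ m hmV.1 hmV.2)
    rw [Finset.mem_Icc] at hm
    have h1 : (L : ℝ) + b ≤ m := by exact_mod_cast hm.1
    have h2 : (m : ℝ) + b ≤ 3 * L := by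
      have : m + b ≤ 3 * L := by omega
      exact_mod_cast this
    constructor <;> linarith [hx.1, hx.2]
  have hS0 : ∀ z : ℂ, (L : ℝ) - 1 / 2 ≤ z.re → z.re ≤ 3 * L + 1 / 2 → -(L : ℝ) ≤ z.im → z.im ≤ L → S z ≠ 0 := by
    intro z h1 h2 h3 h4 h0
    have hsz := hSe z
    rw [h0, zero_mul] at hsz
    by_cases hbd : RectBdry L z
    · have := sin_rect L (by omega) z hbd
      rw [hsz, norm_zero] at this
      linarith [Real.exp_pos (Real.pi * |z.im|)]
    · have hn : z.re ≠ (L : ℝ) - 1 / 2 ∧ z.re ≠ 3 * L + 1 / 2 := by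
        constructor
        · intro he; exact hbd ⟨h1, h2, h3, h4, Or.inl he⟩
        · intro he; exact hbd ⟨h1, h2, h3, h4, Or.inr (Or.inl he)⟩
      have him : z.im = 0 := by
        have h5 := sin_normSq (Real.pi * z)
        rw [hsz, norm_zero] at h5
        have h6 : Real.sinh ((Real.pi : ℂ) * z).im = 0 := by
          have := sq_nonneg (Real.sin ((Real.pi : ℂ) * z).re)
          have := sq_nonneg (Real.sinh ((Real.pi : ℂ) * z).im)
          have : Real.sinh ((Real.pi : ℂ) * z).im ^ 2 = 0 := by linarith
          exact pow_eq_zero_iff (two_ne_zero) |>.1 this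
        rw [Real.sinh_eq_zero] at h6
        simpa [Real.pi_ne_zero] using h6
      have hz : z = (z.re : ℂ) := by apply Complex.ext <;> simp [him]
      have := S_lower L S hS hSe z.re (lt_of_le_of_ne h1 hn.1.symm) (lt_of_le_of_ne h2 hn.2)
      rw [← hz, h0, norm_zero, zero_mul] at this
      linarith
  let P : Finset ℕ → ℂ → ℂ := fun s w => ∏ n ∈ s, (w - (ξ n : ℂ))
  have hPd : ∀ s, Differentiable ℂ (P s) := by
    intro s
    show Differentiable ℂ (fun w => ∏ n ∈ s, (w - (ξ n : ℂ)))
    fun_prop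
  let c : ℕ → ℂ := fun m => S (ξ m) * P ((Wn L b).erase m) (ξ m)
  have hc : ∀ m ∈ Wn L b, 1 ≤ T * (4 * L) ^ (2 * b) * Pb * ‖c m‖ := by
    intro m hm
    have h1 := S_lower L S hS hSe (ξ m) (hloc m hm).1 (hloc m hm).2
    have h2 := node_ratio L b T ξ hbL hT hTb hξ hsep m hm
    have h3 : ‖c m‖ = ‖S (ξ m)‖ * ∏ n ∈ (Wn L b).erase m, |ξ m - ξ n| := by
      show ‖S (ξ m) * ∏ n ∈ (Wn L b).erase m, ((ξ m : ℂ) - ξ n)‖ = _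
      rw [norm_mul, norm_prod]
      congr 1
      apply Finset.prod_congr rfl
      intro n _
      rw [← Complex.ofReal_sub, Complex.norm_real, Real.norm_eq_abs]
    have h4 := h1.trans (mul_le_mul_of_nonneg_left h2 (norm_nonneg (S (ξ m))))
    rw [h3]
    nlinarith
  have hc0 : ∀ m ∈ Wn L b, c m ≠ 0 := by
    intro m hm h0
    have := hc m hm
    rw [h0, norm_zero, mul_zero] at this; linarith
  have hcinv : ∀ m ∈ Wn L b, ‖h (ξ m) / c m‖ ≤ y * (T * (4 * L) ^ (2 * b) * Pb) := by
    intro m hm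
    have hmV := Finset.mem_Icc.1 (W_sub L b hm)
    rw [norm_div, div_le_iff₀ (norm_pos_iff.2 (hc0 m hm))]
    have h1 := hy m hmV.1 hmV.2
    have h2 := hc m hm
    nlinarith
  let N : ℂ → ℂ := fun w => h w - ∑ m ∈ Wn L b, (h (ξ m) / c m) * (S w * P ((Wn L b).erase m) w)
  have hNd : Differentiable ℂ N := by
    apply hh.sub
    apply Differentiable.fun_sum
    intro m _
    exact ((hS.mul (hPd _)).const_mul _)
  have hN0 : ∀ i ∈ Wn L b, N (ξ i) = 0 := by
    intro i hi
    show h (ξ i) - ∑ m ∈ Wn L b, (h (ξ m) / c m) * (S (ξ i) * P ((Wn L b).erase m) (ξ i)) = 0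
    rw [Finset.sum_eq_single i]
    · show h (ξ i) - h (ξ i) / c i * c i = 0
      rw [div_mul_cancel₀ _ (hc0 i hi), sub_self]
    · intro m hm hmi
      have : P ((Wn L b).erase m) (ξ i) = 0 := by
        apply Finset.prod_eq_zero (i := i)
        · exact Finset.mem_erase.2 ⟨hmi.symm, hi⟩
        · simp
      rw [this, mul_zero, mul_zero]
    · intro hi'; exact absurd hi hi'
  obtain ⟨q, hq, hqe⟩ := exists_div (Wn L b) (fun n : ℕ => (ξ n : ℂ)) (hξinjC.injOn) N hNd hN0
  have hqe' : ∀ z, N z = q z * P (Wn L b) z := hqe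
  have hPer : ∀ m ∈ Wn L b, ∀ z, P (Wn L b) z = (z - ξ m) * P ((Wn L b).erase m) z := by
    intro m hm z
    exact (Finset.mul_prod_erase (Wn L b) (fun n => z - (ξ n : ℂ)) hm).symm
  have hWcard : ((Wn L b).card : ℝ) ≤ 2 * L + 1 := by
    have : (Wn L b).card ≤ 2 * L + 1 := by simp only [Nat.card_Icc]; omega
    exact_mod_cast this
  set K := (4 * (L : ℝ)) ^ (2 * b) * (Y * (1 + 2 * T / b) ^ (2 * L + 1) + 2 * T * (2 * L + 1) * y * Pb) with hK
  have hbound : ∀ z, RectBdry L z → ‖q z / S z‖ ≤ K := by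
    intro z hz
    have hSz : S z ≠ 0 := hS0 z hz.1 hz.2.1 hz.2.2.1 hz.2.2.2.1
    have hdist : ∀ m ∈ Wn L b, 1 / 2 ≤ ‖z - ξ m‖ := by
      intro m hm
      have hmV := Finset.mem_Icc.1 (W_sub L b hm)
      rw [Finset.mem_Icc] at hm
      have a1 := rect_dist L b hbL m hm.1 hm.2 z hz
      have a2 := hξ m hmV.1 hmV.2
      have a3 : ‖z - m‖ ≤ ‖z - ξ m‖ + T := by
        have : z - m = (z - ξ m) + ((ξ m - m : ℝ) : ℂ) := by push_cast; ring
        rw [this]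
        refine (norm_add_le _ _).trans ?_
        rw [Complex.norm_real, Real.norm_eq_abs]; linarith
      linarith
    have hne : ∀ m ∈ Wn L b, z - ξ m ≠ 0 := by
      intro m hm h0
      have := hdist m hm
      rw [h0, norm_zero] at this; linarith
    have hPz : ∀ s ⊆ Wn L b, P s z ≠ 0 := fun s hs => Finset.prod_ne_zero_iff.2 fun m hm => hne m (hs hm)
    have hid : q z / S z = h z / (P (Wn L b) z * S z) - ∑ m ∈ Wn L b, (h (ξ m) / c m) / (z - ξ m) := by
      have e1 : q z = N z / P (Wn L b) z := by
        rw [hqe' z, mul_div_cancel_right₀ _ (hPz _ subset_rfl)]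
      rw [e1, div_div]
      show (h z - ∑ m ∈ Wn L b, (h (ξ m) / c m) * (S z * P ((Wn L b).erase m) z)) / _ = _
      rw [sub_div, Finset.sum_div]
      congr 1
      apply Finset.sum_congr rfl
      intro m hm
      rw [hPer m hm z]
      have := hPz _ (Finset.erase_subset m (Wn L b))
      have := hne m hm
      field_simp
    rw [hid]
    refine (norm_sub_le _ _).trans ?_
    have b1 : ‖h z / (P (Wn L b) z * S z)‖ ≤ Y * (1 + 2 * T / b) ^ (2 * L + 1) * (4 * L) ^ (2 * b) := by
      rw [norm_div, norm_mul, div_le_iff₀ (mul_pos (norm_pos_iff.2 (hPz _ subset_rfl)) (norm_pos_iff.2 hSz))]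
      have e1 := hY z hz
      have e2 := congrArg norm (hSe z)
      rw [norm_mul, norm_prod] at e2
      have e3 := rect_ratio L b T ξ hb hbL hT hTb hξ z hz
      have e4 : ‖P (Wn L b) z‖ = ∏ n ∈ Wn L b, ‖z - ξ n‖ := norm_prod _ _
      rw [e2] at e1
      rw [e4]
      refine e1.trans ?_
      calc Y * (‖S z‖ * ∏ n ∈ Vn L, ‖z - n‖) ≤ Y * (‖S z‖ * ((1 + 2 * T / b) ^ (2 * L + 1) * (4 * L) ^ (2 * b) * ∏ n ∈ Wn L b, ‖z - ξ n‖)) := by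
            gcongr
        _ = _ := by ring
    have b2 : ‖∑ m ∈ Wn L b, (h (ξ m) / c m) / (z - ξ m)‖ ≤ (2 * L + 1) * (2 * (y * (T * (4 * L) ^ (2 * b) * Pb))) := by
      refine (norm_sum_le _ _).trans ?_
      have : ∀ m ∈ Wn L b, ‖(h (ξ m) / c m) / (z - ξ m)‖ ≤ 2 * (y * (T * (4 * L) ^ (2 * b) * Pb)) := by
        intro m hm
        have d1 := hdist m hm
        have d2 := hcinv m hm
        rw [norm_div, div_le_iff₀ (by linarith)]
        have : 0 ≤ y * (T * (4 * L) ^ (2 * b) * Pb) := by positivity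
        nlinarith
      refine (Finset.sum_le_card_nsmul _ _ _ this).trans ?_
      rw [nsmul_eq_mul]
      apply mul_le_mul_of_nonneg_right hWcard
      positivity
    refine (add_le_add b1 b2).trans (le_of_eq ?_)
    rw [hK]; ring
  obtain ⟨w1, w2, w3, w4, -⟩ := id hw
  have hqS : ‖q w / S w‖ ≤ K := by
    apply maxRect (fun z => q z / S z) ((L : ℝ) - 1 / 2) (3 * L + 1 / 2) (-L) L K
      (by linarith) (by linarith)
    · intro z h1 h2 h3 h4
      exact (hq z).div (hS z) (hS0 z h1 h2 h3 h4)
    · intro z h1 h2 h3 h4 h5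
      exact hbound z ⟨h1, h2, h3, h4, h5⟩
    all_goals linarith
  have hSw : S w ≠ 0 := hS0 w (by linarith) (by linarith) (by linarith) (by linarith)
  have hsinw : ‖Complex.sin (Real.pi * w)‖ ≤ Real.exp Real.pi := by
    refine (sin_upper _).trans (Real.exp_le_exp.2 ?_)
    have : ((Real.pi : ℂ) * w).im = Real.pi * w.im := by simp
    rw [this, abs_mul, abs_of_pos Real.pi_pos]
    have : |w.im| ≤ 1 := abs_le.2 ⟨by linarith, by linarith⟩
    nlinarith [Real.pi_pos]
  have hQ : ‖Complex.sin (Real.pi * w)‖ = ‖S w‖ * ((∏ n ∈ Vn L \ Wn L b, ‖w - n‖) * ∏ n ∈ Wn L b, ‖w - n‖) := by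
    rw [Finset.prod_sdiff (W_sub L b), hSe w, norm_mul, norm_prod]
  set A := (L / 4 : ℝ) ^ (2 * b) with hA
  have hA0 : 0 < A := by positivity
  have hSP : A * ‖S w * P (Wn L b) w‖ ≤ Pb * Real.exp Real.pi := by
    have e := box_ratio L b T ξ hL hbL hT hξ w hw (Wn L b) subset_rfl
    have e4 : ‖P (Wn L b) w‖ = ∏ n ∈ Wn L b, ‖w - ξ n‖ := norm_prod _ _
    rw [norm_mul, e4]
    calc A * (‖S w‖ * ∏ n ∈ Wn L b, ‖w - ξ n‖) = ‖S w‖ * (A * ∏ n ∈ Wn L b, ‖w - ξ n‖) := by ring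
      _ ≤ ‖S w‖ * (Pb * ((∏ n ∈ Vn L \ Wn L b, ‖w - n‖) * ∏ n ∈ Wn L b, ‖w - n‖)) :=
          mul_le_mul_of_nonneg_left e (norm_nonneg _)
      _ = Pb * ‖Complex.sin (Real.pi * w)‖ := by rw [hQ]; ring
      _ ≤ _ := by gcongr
  have hSPm : ∀ m ∈ Wn L b, A * ‖S w * P ((Wn L b).erase m) w‖ ≤ 2 * (Pb * Real.exp Real.pi) := by
    intro m hm
    have e := box_ratio L b T ξ hL hbL hT hξ w hw ((Wn L b).erase m) (Finset.erase_subset _ _)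
    have e4 : ‖P ((Wn L b).erase m) w‖ = ∏ n ∈ (Wn L b).erase m, ‖w - ξ n‖ := norm_prod _ _
    have e5 := (box_dist L m w hw).2.2
    rw [norm_mul, e4]
    have e6 : ∏ n ∈ (Wn L b).erase m, ‖w - n‖ ≤ 2 * ∏ n ∈ Wn L b, ‖w - n‖ := by
      rw [← Finset.mul_prod_erase (Wn L b) (fun n : ℕ => ‖w - n‖) hm]
      have : 0 ≤ ∏ n ∈ (Wn L b).erase m, ‖w - n‖ := Finset.prod_nonneg fun _ _ => norm_nonneg _
      nlinarith
    have e7 : 0 ≤ ∏ n ∈ Vn L \ Wn L b, ‖w - n‖ := Finset.prod_nonneg fun _ _ => norm_nonneg _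
    calc A * (‖S w‖ * ∏ n ∈ (Wn L b).erase m, ‖w - ξ n‖) = ‖S w‖ * (A * ∏ n ∈ (Wn L b).erase m, ‖w - ξ n‖) := by ring
      _ ≤ ‖S w‖ * (Pb * ((∏ n ∈ Vn L \ Wn L b, ‖w - n‖) * ∏ n ∈ (Wn L b).erase m, ‖w - n‖)) :=
          mul_le_mul_of_nonneg_left e (norm_nonneg _)
      _ ≤ ‖S w‖ * (Pb * ((∏ n ∈ Vn L \ Wn L b, ‖w - n‖) * (2 * ∏ n ∈ Wn L b, ‖w - n‖))) := by
          gcongr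
      _ = 2 * (Pb * ‖Complex.sin (Real.pi * w)‖) := by rw [hQ]; ring
      _ ≤ _ := by gcongr
  have hfin : h w = (q w / S w) * (S w * P (Wn L b) w) +
      ∑ m ∈ Wn L b, (h (ξ m) / c m) * (S w * P ((Wn L b).erase m) w) := by
    have : h w = N w + ∑ m ∈ Wn L b, (h (ξ m) / c m) * (S w * P ((Wn L b).erase m) w) := by
      show h w = h w - _ + _
      ring
    rw [this, hqe' w]
    congr 1
    field_simp
  have hK0 : 0 ≤ K := by positivity
  have hAh : A * ‖h w‖ ≤ K * (Pb * Real.exp Real.pi) +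
      (2 * L + 1) * ((y * (T * (4 * L) ^ (2 * b) * Pb)) * (2 * (Pb * Real.exp Real.pi))) := by
    have hle : ‖h w‖ ≤ ‖(q w / S w)‖ * ‖(S w * P (Wn L b) w)‖ +
      ∑ m ∈ Wn L b, ‖(h (ξ m) / c m)‖ * ‖(S w * P ((Wn L b).erase m) w)‖ := by
      conv_lhs => rw [hfin]
      refine (norm_add_le _ _).trans ?_
      rw [norm_mul]
      gcongr
      refine (norm_sum_le _ _).trans (Finset.sum_le_sum fun m _ => ?_)
      rw [norm_mul]
    calc A * ‖h w‖ ≤ A * (‖(q w / S w)‖ * ‖(S w * P (Wn L b) w)‖ +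
      ∑ m ∈ Wn L b, ‖(h (ξ m) / c m)‖ * ‖(S w * P ((Wn L b).erase m) w)‖) := by gcongr
      _ = ‖(q w / S w)‖ * (A * ‖(S w * P (Wn L b) w)‖) +
      ∑ m ∈ Wn L b, ‖(h (ξ m) / c m)‖ * (A * ‖(S w * P ((Wn L b).erase m) w)‖) := by
          rw [mul_add, Finset.mul_sum]
          congr 1
          · ring
          · apply Finset.sum_congr rfl; intro m _; ring
      _ ≤ K * (Pb * Real.exp Real.pi) +
          ∑ m ∈ Wn L b, ((y * (T * (4 * L) ^ (2 * b) * Pb)) * (2 * (Pb * Real.exp Real.pi))) := by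
          apply add_le_add
          · exact mul_le_mul hqS hSP (by positivity) hK0
          · apply Finset.sum_le_sum
            intro m hm
            exact mul_le_mul (hcinv m hm) (hSPm m hm) (by positivity) (by positivity)
      _ ≤ _ := by
          rw [Finset.sum_const, nsmul_eq_mul]
          gcongr
  have hAA : (4 * (L : ℝ)) ^ (2 * b) = 16 ^ (2 * b) * A := by
    rw [hA, ← mul_pow]; congr 1; ring
  refine le_of_mul_le_mul_left (hAh.trans (le_of_eq ?_)) hA0
  rw [hK, hAA]; ring


lemma norm_gauss (c : ℝ) (L : ℕ) (w : ℂ) :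
    ‖Complex.exp (-((c / L : ℝ) : ℂ) * (w - (2 * L : ℕ)) ^ 2)‖
      = Real.exp (-(c / L) * ((w.re - 2 * L) ^ 2 - w.im ^ 2)) := by
  rw [Complex.norm_exp]
  congr 1
  rw [← Complex.ofReal_neg, Complex.re_ofReal_mul, pow_two, Complex.mul_re]
  simp
  ring_nf
  simp

set_option maxHeartbeats 4000000 in
lemma step_large (M τ β C : ℝ) (hτ0 : 0 < τ) (hτ1 : τ ≤ 1) (hτM : τ ≤ (Real.pi - M) / 2)
    (hβ0 : 0 < β) (hβ : β = τ / 284) (hC : 0 < C)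
    (ξ : ℕ → ℝ) (hsep : ∀ m n : ℕ, (1 / 2) * |(m : ℝ) - n| ≤ |ξ m - ξ n|)
    (g : ℂ → ℂ) (hg : Differentiable ℂ g)
    (hgM : ∀ z : ℂ, 0 ≤ z.re → ‖g z‖ ≤ C * Real.exp (M * |z.im|))
    (hgξ : ∀ n, ‖g (ξ n)‖ ≤ C * Real.exp (-τ * ξ n))
    (L : ℕ) (hL6 : 6 ≤ L) (hLβ : 1 ≤ β ^ 2 * L)
    (hξ : ∀ n, L ≤ n → n ≤ 3 * L → |ξ n - n| ≤ β ^ 2 * L)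
    (w : ℂ) (hw : BoxBdry L w) :
    ‖g w‖ ≤ Real.exp (3 * ((Real.pi - M) / 2)) *
      (Real.exp Real.pi * (4 * C + 24 / β ^ 2 * C)) * Real.exp (-(τ / 2) * L) := by
  obtain ⟨c, hc⟩ : ∃ c, c = (Real.pi - M) / 2 := ⟨_, rfl⟩
  rw [← hc] at hτM ⊢
  have hc0 : 0 < c := by linarith
  have hL' : (6 : ℝ) ≤ L := by exact_mod_cast hL6
  have hβ1 : β ≤ 1 / 284 := by rw [hβ]; linarith
  have hLβ1 : 1 ≤ β * L := by nlinarith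
  set b := ⌈β * L⌉₊ with hb
  have hb1 : β * L ≤ b := Nat.le_ceil _
  have hb2 : (b : ℝ) ≤ 2 * β * L := by
    have := Nat.ceil_lt_add_one (show 0 ≤ β * L by positivity)
    linarith
  have hbpos : (0 : ℝ) < b := by linarith
  have hbn : 1 ≤ b := by exact_mod_cast hbpos
  have hbL : 2 * b ≤ L := by
    have : 2 * (b : ℝ) ≤ L := by nlinarith
    exact_mod_cast this
  obtain ⟨T, hT⟩ : ∃ T, T = β ^ 2 * L := ⟨_, rfl⟩
  rw [← hT] at hξ hLβ
  have hTb : 2 * T ≤ b := by rw [hT]; nlinarith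
  have hT0 : 0 < T := by linarith
  let E : ℂ → ℂ := fun w => Complex.exp (-((c / L : ℝ) : ℂ) * (w - (2 * L : ℕ)) ^ 2)
  have hE : ∀ w, ‖E w‖ = Real.exp (-(c / L) * ((w.re - 2 * L) ^ 2 - w.im ^ 2)) := norm_gauss c L
  have hEd : Differentiable ℂ E := by
    show Differentiable ℂ (fun w => Complex.exp (-((c / L : ℝ) : ℂ) * (w - (2 * L : ℕ)) ^ 2))
    fun_prop
  have main := local_bound L b T (4 * C * Real.exp (-τ * L)) (C * Real.exp (-τ * L + β * L)) ξ hL6 hbn hbL hLβ hTb hξ hsep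
    (fun z => g z * E z) (hg.mul hEd) (by positivity) (by positivity) (by
      intro z hz
      have hsin := sin_rect L (by omega) z hz
      have hgz := hgM z (by linarith [hz.1])
      show ‖g z * E z‖ ≤ _
      rw [norm_mul, hE]
      have key : M * |z.im| + -(c / L) * ((z.re - 2 * L) ^ 2 - z.im ^ 2) ≤ -τ * L + Real.pi * |z.im| := by
        have hM : M = Real.pi - 2 * c := by rw [hc]; ring
        have hv : |z.im| ≤ L := abs_le.2 ⟨by linarith [hz.2.2.1], hz.2.2.2.1⟩
        have hv0 := abs_nonneg z.im
        have hv2 : c / L * z.im ^ 2 ≤ c * |z.im| := by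
          rw [← sq_abs z.im, div_mul_eq_mul_div, div_le_iff₀ (by linarith)]
          nlinarith [mul_nonneg hc0.le hv0]
        have hu0 : 0 ≤ c / L * (z.re - 2 * L) ^ 2 := by positivity
        have hside : (z.re - 2 * L) ^ 2 = (L + 1 / 2) ^ 2 → c * L ≤ c / L * (z.re - 2 * L) ^ 2 := by
          intro h
          rw [h, div_mul_eq_mul_div, le_div_iff₀ (by linarith)]
          nlinarith
        have hτc : τ * L ≤ c * L := by nlinarith
        have htop : |z.im| = L → M * |z.im| + -(c / L) * ((z.re - 2 * L) ^ 2 - z.im ^ 2) ≤ -τ * L + Real.pi * |z.im| := by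
          intro h
          rw [hM]; rw [h] at hv2 ⊢
          nlinarith
        have hs2 : (z.re - 2 * L) ^ 2 = (L + 1 / 2) ^ 2 → M * |z.im| + -(c / L) * ((z.re - 2 * L) ^ 2 - z.im ^ 2) ≤ -τ * L + Real.pi * |z.im| := by
          intro h
          have := hside h
          rw [hM]
          nlinarith [mul_nonneg hc0.le hv0]
        obtain ⟨-, -, -, -, h | h | h | h⟩ := hz
        · apply hs2; rw [h]; ring
        · apply hs2; rw [h]; ring
        · apply htop; rw [h, abs_neg, abs_of_nonneg (by positivity)]
        · apply htop; rw [h, abs_of_nonneg (by positivity)]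
      calc ‖g z‖ * Real.exp (-(c / L) * ((z.re - 2 * L) ^ 2 - z.im ^ 2))
          ≤ (C * Real.exp (M * |z.im|)) * Real.exp (-(c / L) * ((z.re - 2 * L) ^ 2 - z.im ^ 2)) := by gcongr
        _ = C * Real.exp (M * |z.im| + -(c / L) * ((z.re - 2 * L) ^ 2 - z.im ^ 2)) := by
            rw [Real.exp_add]; ring
        _ ≤ C * Real.exp (-τ * L + Real.pi * |z.im|) := by gcongr
        _ = 4 * C * Real.exp (-τ * L) * (Real.exp (Real.pi * |z.im|) / 4) := by
            rw [Real.exp_add]; ring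
        _ ≤ _ := by gcongr) (by
      intro m hm1 hm2
      show ‖g (ξ m) * E (ξ m)‖ ≤ _
      rw [norm_mul, hE]
      have h1 := abs_le.1 (hξ m hm1 hm2)
      have hm1' : (L : ℝ) ≤ m := by exact_mod_cast hm1
      have h2 : Real.exp (-(c / L) * (((ξ m : ℂ).re - 2 * L) ^ 2 - (ξ m : ℂ).im ^ 2)) ≤ 1 := by
        rw [Real.exp_le_one_iff]
        simp only [ofReal_re, ofReal_im]
        have : 0 ≤ c / L * (ξ m - 2 * L) ^ 2 := by positivity
        nlinarith
      have h3 : Real.exp (-τ * ξ m) ≤ Real.exp (-τ * L + β * L) := by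
        apply Real.exp_le_exp.2
        have : τ * T ≤ β * L := by
          have : T ≤ β * L := by rw [hT]; nlinarith
          nlinarith
        nlinarith [h1.1]
      calc _ ≤ (C * Real.exp (-τ * ξ m)) * 1 := mul_le_mul (hgξ m) h2 (Real.exp_pos _).le (by positivity)
        _ ≤ _ := by rw [mul_one]; gcongr) w hw
  have main' : ‖g w‖ * ‖E w‖ ≤ _ := (norm_mul (g w) (E w)) ▸ main
  have k1 : Real.exp (32 * (√T * √(2 * L + 1))) ≤ Real.exp (64 * (β * L)) := by
    apply Real.exp_le_exp.2
    have : √T * √(2 * L + 1) ≤ 2 * (β * L) := by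
      rw [← Real.sqrt_mul (by positivity)]
      apply Real.sqrt_le_iff.2
      refine ⟨by positivity, ?_⟩
      rw [hT]
      have : 0 ≤ β ^ 2 * L := by positivity
      nlinarith
    linarith
  have k2 : (16 : ℝ) ^ (2 * b) ≤ Real.exp (12 * (β * L)) := by
    have h16 : (16 : ℝ) ≤ Real.exp 3 := by
      have := Real.exp_one_gt_d9
      have h3 : Real.exp 3 = Real.exp 1 ^ 3 := by rw [← Real.exp_nat_mul]; norm_num
      rw [h3]
      have : (2.7 : ℝ) ^ 3 ≤ Real.exp 1 ^ 3 := by gcongr; linarith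
      norm_num at this ⊢; linarith
    calc (16 : ℝ) ^ (2 * b) ≤ Real.exp 3 ^ (2 * b) := by gcongr
      _ = Real.exp (6 * b) := by rw [← Real.exp_nat_mul]; congr 1; push_cast; ring
      _ ≤ _ := by apply Real.exp_le_exp.2; linarith
  have k3 : (1 + 2 * T / b) ^ (2 * L + 1) ≤ Real.exp (6 * (β * L)) := by
    have hTb' : T / b ≤ β := by
      rw [div_le_iff₀ hbpos, hT]; nlinarith
    have h0 : 0 ≤ 2 * T / b := by positivity
    calc (1 + 2 * T / b) ^ (2 * L + 1) ≤ Real.exp (2 * β) ^ (2 * L + 1) := by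
          apply pow_le_pow_left₀ (by linarith)
          have := Real.add_one_le_exp (2 * β)
          have : 2 * T / b = 2 * (T / b) := by ring
          linarith
      _ = Real.exp ((2 * L + 1 : ℕ) * (2 * β)) := by rw [← Real.exp_nat_mul]
      _ ≤ _ := by
          apply Real.exp_le_exp.2; push_cast; nlinarith
  have k4 : 4 * T * (2 * L + 1) ≤ 24 / β ^ 2 * Real.exp (β * L) := by
    have h1 := Real.quadratic_le_exp_of_nonneg (show 0 ≤ β * L by positivity)
    have h2 : (β * L) ^ 2 / 2 ≤ Real.exp (β * L) := by
      have : 0 ≤ β * L := by positivity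
      linarith
    have h3 : 4 * T * (2 * L + 1) ≤ 12 * L ^ 2 := by
      have : T ≤ L := by rw [hT]; nlinarith
      nlinarith
    have h4 : 12 * (L : ℝ) ^ 2 = 24 / β ^ 2 * ((β * L) ^ 2 / 2) := by field_simp; norm_num
    calc _ ≤ _ := h3
      _ = _ := h4
      _ ≤ _ := by gcongr
  have hEw : Real.exp (-(3 * c)) ≤ ‖E w‖ := by
    rw [hE]
    apply Real.exp_le_exp.2
    obtain ⟨w1, w2, w3, w4, -⟩ := hw
    have hcL : c / L ≤ c := div_le_self hc0.le (by linarith)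
    have hcL0 : 0 ≤ c / L := by positivity
    have hu : (w.re - 2 * L) ^ 2 ≤ 3 := by nlinarith
    have : c / L * (w.re - 2 * L) ^ 2 ≤ c * 3 := mul_le_mul hcL hu (sq_nonneg _) hc0.le
    nlinarith [mul_nonneg hcL0 (sq_nonneg w.im)]
  have fin1 : ‖g w‖ * ‖E w‖ ≤ (Real.exp Real.pi * (4 * C + 24 / β ^ 2 * C)) * Real.exp (-(τ / 2) * L) := by
    refine main'.trans ?_
    calc _ ≤ Real.exp Real.pi * Real.exp (64 * (β * L)) * Real.exp (12 * (β * L)) *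
        (4 * C * Real.exp (-τ * L) * Real.exp (6 * (β * L)) +
          (24 / β ^ 2 * Real.exp (β * L)) * (C * Real.exp (-τ * L + β * L)) * Real.exp (64 * (β * L))) := by
          gcongr
      _ = Real.exp Real.pi * (4 * C * Real.exp (-τ * L + 82 * (β * L)) + 24 / β ^ 2 * C * Real.exp (-τ * L + 142 * (β * L))) := by
          have e1 : Real.exp (-τ * L + 82 * (β * L)) = Real.exp (64 * (β * L)) * Real.exp (12 * (β * L)) * Real.exp (-τ * L) * Real.exp (6 * (β * L)) := by
            rw [← Real.exp_add, ← Real.exp_add, ← Real.exp_add]; congr 1; ring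
          have e2 : Real.exp (-τ * L + 142 * (β * L)) = Real.exp (64 * (β * L)) * Real.exp (12 * (β * L)) * Real.exp (β * L) * Real.exp (-τ * L + β * L) * Real.exp (64 * (β * L)) := by
            rw [← Real.exp_add, ← Real.exp_add, ← Real.exp_add, ← Real.exp_add]; congr 1; ring
          rw [e1, e2]; ring
      _ ≤ Real.exp Real.pi * (4 * C * Real.exp (-(τ / 2) * L) + 24 / β ^ 2 * C * Real.exp (-(τ / 2) * L)) := by
          have : 284 * β = τ := by rw [hβ]; ring
          have hpos : 0 ≤ β * L := by positivity
          gcongr <;> nlinarith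
      _ = _ := by ring
  have fin2 : ‖g w‖ * Real.exp (-(3 * c)) ≤ (Real.exp Real.pi * (4 * C + 24 / β ^ 2 * C)) * Real.exp (-(τ / 2) * L) :=
    (mul_le_mul_of_nonneg_left hEw (norm_nonneg _)).trans fin1
  calc ‖g w‖ = Real.exp (3 * c) * (‖g w‖ * Real.exp (-(3 * c))) := by
        rw [mul_comm, mul_assoc, ← Real.exp_add]; simp
    _ ≤ Real.exp (3 * c) * ((Real.exp Real.pi * (4 * C + 24 / β ^ 2 * C)) * Real.exp (-(τ / 2) * L)) := by
        gcongr
    _ = _ := by ring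

lemma step (M τ C : ℝ) (hτ0 : 0 < τ) (hτ1 : τ ≤ 1) (hτM : τ ≤ (Real.pi - M) / 2) (hC : 0 < C)
    (ξ : ℕ → ℝ) (hsep : ∀ m n : ℕ, (1 / 2) * |(m : ℝ) - n| ≤ |ξ m - ξ n|)
    (hlim : Tendsto (fun n : ℕ => ξ n / n) atTop (nhds 1))
    (g : ℂ → ℂ) (hg : Differentiable ℂ g)
    (hgM : ∀ z : ℂ, 0 ≤ z.re → ‖g z‖ ≤ C * Real.exp (M * |z.im|))
    (hgξ : ∀ n, ‖g (ξ n)‖ ≤ C * Real.exp (-τ * ξ n)) :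
    ∃ C' : ℝ, 0 < C' ∧ ∀ x : ℝ, 0 ≤ x → ‖g x‖ ≤ C' * Real.exp (-(τ / 4) * x) := by
  set β := τ / 284 with hβ
  have hβ0 : 0 < β := by positivity
  have hev : ∀ᶠ n : ℕ in atTop, |ξ n / n - 1| ≤ β ^ 2 / 3 := by
    have := (Metric.tendsto_nhds.1 hlim) (β ^ 2 / 3) (by positivity)
    filter_upwards [this] with n hn
    rw [Real.dist_eq] at hn; exact hn.le
  obtain ⟨n0, hn0⟩ := eventually_atTop.1 hev
  set L0 := max (max 6 n0) ⌈1 / β ^ 2⌉₊ with hL0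
  set K := Real.exp (3 * ((Real.pi - M) / 2)) * (Real.exp Real.pi * (4 * C + 24 / β ^ 2 * C)) with hK
  have hK0 : 0 < K := by positivity
  set X0 : ℝ := 2 * L0 + 2 with hX0
  refine ⟨K * Real.exp τ + C * Real.exp (τ / 4 * X0), by positivity, fun x hx => ?_⟩
  rcases le_or_gt x X0 with h | h
  · have h1 := hgM x (by simpa using hx)
    simp only [ofReal_im, abs_zero, mul_zero, Real.exp_zero, mul_one] at h1
    have h2 : 1 ≤ Real.exp (τ / 4 * X0) * Real.exp (-(τ / 4) * x) := by
      rw [← Real.exp_add, Real.one_le_exp_iff]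
      nlinarith
    have h3 : 0 ≤ K * Real.exp τ * Real.exp (-(τ / 4) * x) := by positivity
    nlinarith
  · set L := ⌊(x + 1 / 2) / 2⌋₊ with hL
    have f1 : (L : ℝ) ≤ (x + 1 / 2) / 2 := Nat.floor_le (by linarith)
    have f2 : (x + 1 / 2) / 2 < L + 1 := Nat.lt_floor_add_one _
    have hLL0 : L0 ≤ L := by
      have : (L0 : ℝ) < L + 1 := by linarith
      have : L0 < L + 1 := by exact_mod_cast this
      omega
    have hL6 : 6 ≤ L := le_trans (le_trans (le_max_left _ _) (le_max_left _ _)) hLL0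
    have hLn : n0 ≤ L := le_trans (le_trans (le_max_right _ _) (le_max_left _ _)) hLL0
    have hLc : ⌈1 / β ^ 2⌉₊ ≤ L := le_trans (le_max_right _ _) hLL0
    have hL6' : (6 : ℝ) ≤ L := by exact_mod_cast hL6
    have hLβ : 1 ≤ β ^ 2 * L := by
      have h1 : 1 / β ^ 2 ≤ L := (Nat.le_ceil _).trans (by exact_mod_cast hLc)
      rw [div_le_iff₀ (by positivity)] at h1; linarith
    have hξ : ∀ n, L ≤ n → n ≤ 3 * L → |ξ n - n| ≤ β ^ 2 * L := by
      intro n h1 h2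
      have h1' : (L : ℝ) ≤ n := by exact_mod_cast h1
      have h2' : (n : ℝ) ≤ 3 * L := by exact_mod_cast h2
      have hnpos : (0 : ℝ) < n := by linarith
      have h3 := hn0 n (hLn.trans h1)
      have h4 : |ξ n - n| = |ξ n / n - 1| * n := by
        rw [← abs_of_pos hnpos, ← abs_mul, abs_of_pos hnpos]; congr 1; field_simp
      rw [h4]
      have : β ^ 2 / 3 * n ≤ β ^ 2 / 3 * (3 * L) := by gcongr
      nlinarith
    have hbox : ∀ w, BoxBdry L w → ‖g w‖ ≤ K * Real.exp (-(τ / 2) * L) := fun w hw =>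
      step_large M τ β C hτ0 hτ1 hτM hβ0 hβ hC ξ hsep g hg hgM hgξ L hL6 hLβ hξ w hw
    have h5 : ‖g x‖ ≤ K * Real.exp (-(τ / 2) * L) := by
      apply maxRect g (2 * (L : ℝ) - 3 / 2) (2 * L + 3 / 2) (-(1 / 2)) (1 / 2) _ (by linarith) (by norm_num)
        (fun z _ _ _ _ => hg z)
      · intro z h1 h2 h3 h4 h5
        exact hbox z ⟨h1, h2, h3, h4, h5⟩
      all_goals simp
      all_goals linarith
    have h6 : Real.exp (-(τ / 2) * L) ≤ Real.exp τ * Real.exp (-(τ / 4) * x) := by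
      rw [← Real.exp_add]; apply Real.exp_le_exp.2; nlinarith
    have h7 : 0 ≤ C * Real.exp (τ / 4 * X0) * Real.exp (-(τ / 4) * x) := by positivity
    nlinarith


lemma pl_growth (f : ℂ → ℂ) (A B : ℝ)
    (hexp : ∀ s : ℂ, ‖f s‖ ≤ A * Real.exp (B * ‖s‖)) (k : ℂ) (l : Filter ℂ) :
    ∃ c < (2 : ℝ), ∃ B' : ℝ,
      (fun z => f z * Complex.exp (k * z)) =O[l] fun z => Real.exp (B' * ‖z‖ ^ c) := by
  refine ⟨1, by norm_num, B + ‖k‖, ?_⟩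
  apply Asymptotics.IsBigO.of_bound A
  refine Eventually.of_forall fun z => ?_
  rw [norm_mul, Real.norm_eq_abs, abs_of_pos (Real.exp_pos _), Real.rpow_one]
  have h1 : ‖Complex.exp (k * z)‖ ≤ Real.exp (‖k‖ * ‖z‖) := by
    rw [Complex.norm_exp]
    apply Real.exp_le_exp.2
    rw [← norm_mul]
    exact Complex.re_le_norm _
  calc _ ≤ (A * Real.exp (B * ‖z‖)) * Real.exp (‖k‖ * ‖z‖) :=
        mul_le_mul (hexp z) h1 (norm_nonneg _) ((norm_nonneg _).trans (hexp z))
    _ = _ := by rw [add_mul, Real.exp_add]; ring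

lemma pl_half (f : ℂ → ℂ) (hf : Differentiable ℂ f) (A B C M h : ℝ)
    (hexp : ∀ s : ℂ, ‖f s‖ ≤ A * Real.exp (B * ‖s‖))
    (hup : ∀ y : ℝ, 0 ≤ y → ‖f (y * I)‖ ≤ C * Real.exp (M * y))
    (hdown : ∀ y : ℝ, 0 ≤ y → ‖f (-(y * I))‖ ≤ C * Real.exp (M * y))
    (hre : ∀ x : ℝ, 0 ≤ x → ‖f x‖ ≤ C * Real.exp (h * x)) (z : ℂ) (hz : 0 ≤ z.re) :
    ‖f z‖ ≤ C * Real.exp (h * z.re + M * |z.im|) := by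
  have conv : ∀ (k w : ℂ) (t : ℝ), (k * w).re = -t →
      (‖f w * Complex.exp (k * w)‖ ≤ C ↔ ‖f w‖ ≤ C * Real.exp t) := by
    intro k w t ht
    rw [norm_mul, Complex.norm_exp, ht, Real.exp_neg, ← div_eq_mul_inv, div_le_iff₀ (Real.exp_pos _)]
  rcases le_total 0 z.im with hi | hi
  · have hd : Differentiable ℂ (fun w => f w * Complex.exp ((-h + M * I) * w)) := by fun_prop
    have := PhragmenLindelof.quadrant_I (f := fun w => f w * Complex.exp ((-h + M * I) * w)) (C := C)
      (z := z) hd.diffContOnCl (pl_growth f A B hexp _ _) (by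
        intro x hx
        rw [conv _ _ (h * x) (by simp)]
        exact hre x hx) (by
        intro y hy
        rw [conv _ _ (M * y) (by simp)]
        exact hup y hy) hz hi
    rw [conv _ _ (h * z.re + M * |z.im|) (by simp [abs_of_nonneg hi]; ring)] at this
    exact this
  · have hd : Differentiable ℂ (fun w => f w * Complex.exp ((-h - M * I) * w)) := by fun_prop
    have := PhragmenLindelof.quadrant_IV (f := fun w => f w * Complex.exp ((-h - M * I) * w)) (C := C)
      (z := z) hd.diffContOnCl (pl_growth f A B hexp _ _) (by
        intro x hx
        rw [conv _ _ (h * x) (by simp)]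
        exact hre x hx) (by
        intro y hy
        rw [conv _ _ (M * (-y)) (by simp)]
        have := hdown (-y) (by linarith)
        simpa using this) hz hi
    rw [conv _ _ (h * z.re + M * |z.im|) (by simp [abs_of_nonpos hi]; ring)] at this
    exact this

lemma core_step (f : ℂ → ℂ) (hf : Differentiable ℂ f) (A B C M a τ h : ℝ)
    (hC : 0 < C) (hτ0 : 0 < τ) (hτ1 : τ ≤ 1) (hτM : τ ≤ (Real.pi - M) / 2)
    (hexp : ∀ s : ℂ, ‖f s‖ ≤ A * Real.exp (B * ‖s‖))
    (hup : ∀ y : ℝ, 0 ≤ y → ‖f (y * I)‖ ≤ C * Real.exp (M * y))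
    (hdown : ∀ y : ℝ, 0 ≤ y → ‖f (-(y * I))‖ ≤ C * Real.exp (M * y))
    (hre : ∀ x : ℝ, 0 ≤ x → ‖f x‖ ≤ C * Real.exp (h * x))
    (ξ : ℕ → ℝ) (hpos : ∀ n, 0 < ξ n)
    (hsep : ∀ m n : ℕ, (1 / 2) * |(m : ℝ) - n| ≤ |ξ m - ξ n|)
    (hlim : Tendsto (fun n : ℕ => ξ n / n) atTop (nhds 1))
    (hξ : ∀ n, ‖f (ξ n)‖ ≤ C * Real.exp (a * ξ n)) (hh : a + τ ≤ h) :
    ∃ C' : ℝ, 0 < C' ∧ ∀ x : ℝ, 0 ≤ x → ‖f x‖ ≤ C' * Real.exp ((h - τ / 4) * x) := by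
  have hn : ∀ w : ℂ, ‖f w * Complex.exp (-(h : ℂ) * w)‖ = ‖f w‖ * Real.exp (-(h * w.re)) := by
    intro w
    rw [norm_mul, Complex.norm_exp]; simp
  obtain ⟨C', hC', hb⟩ := step M τ C hτ0 hτ1 hτM hC ξ hsep hlim
    (fun w => f w * Complex.exp (-(h : ℂ) * w)) (by fun_prop) (by
      intro z hz
      rw [hn]
      have := pl_half f hf A B C M h hexp hup hdown hre z hz
      calc _ ≤ C * Real.exp (h * z.re + M * |z.im|) * Real.exp (-(h * z.re)) := by gcongr
        _ = _ := by rw [mul_assoc, ← Real.exp_add]; congr 2; ring) (by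
      intro n
      rw [hn, ofReal_re]
      calc _ ≤ C * Real.exp (a * ξ n) * Real.exp (-(h * ξ n)) := by gcongr; exact hξ n
        _ = C * Real.exp (a * ξ n -h * ξ n) := by rw [mul_assoc, ← Real.exp_add]; congr 2
        _ ≤ _ := by gcongr; nlinarith [hpos n])
  refine ⟨C', hC', fun x hx => ?_⟩
  have := hb x hx
  rw [hn, ofReal_re] at this
  calc ‖f x‖ = ‖f x‖ * Real.exp (-(h * x)) * Real.exp (h * x) := by
        rw [mul_assoc, ← Real.exp_add]; simp
    _ ≤ C' * Real.exp (-(τ / 4) * x) * Real.exp (h * x) := by gcongr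
    _ = _ := by rw [mul_assoc, ← Real.exp_add]; congr 2; ring

lemma core (f : ℂ → ℂ) (hf : Differentiable ℂ f) (A B C M a ε : ℝ)
    (hA : 0 < A) (hC : 0 < C) (hε : 0 < ε) (hM : M < Real.pi)
    (hexp : ∀ s : ℂ, ‖f s‖ ≤ A * Real.exp (B * ‖s‖))
    (hup : ∀ y : ℝ, 0 ≤ y → ‖f (y * I)‖ ≤ C * Real.exp (M * y))
    (hdown : ∀ y : ℝ, 0 ≤ y → ‖f (-(y * I))‖ ≤ C * Real.exp (M * y))
    (ξ : ℕ → ℝ) (hpos : ∀ n, 0 < ξ n)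
    (hsep : ∀ m n : ℕ, (1 / 2) * |(m : ℝ) - n| ≤ |ξ m - ξ n|)
    (hlim : Tendsto (fun n : ℕ => ξ n / n) atTop (nhds 1))
    (hξ : ∀ n, ‖f (ξ n)‖ ≤ C * Real.exp (a * ξ n)) :
    ∃ C' : ℝ, 0 < C' ∧ ∀ x : ℝ, 0 ≤ x → ‖f x‖ ≤ C' * Real.exp ((a + ε) * x) := by
  obtain ⟨τ, hτ⟩ : ∃ τ, τ = min (min 1 ((Real.pi - M) / 2)) ε := ⟨_, rfl⟩
  have hτ0 : 0 < τ := by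
    rw [hτ]; exact lt_min (lt_min one_pos (by linarith)) hε
  have hτ1 : τ ≤ 1 := hτ ▸ (min_le_left _ _).trans (min_le_left _ _)
  have hτM : τ ≤ (Real.pi - M) / 2 := hτ ▸ (min_le_left _ _).trans (min_le_right _ _)
  have hτε : τ ≤ ε := hτ ▸ min_le_right _ _
  have ind : ∀ k : ℕ, ∃ C' : ℝ, 0 < C' ∧ ∀ x : ℝ, 0 ≤ x →
      ‖f x‖ ≤ C' * Real.exp (max (B - k * (τ / 4)) (a + τ) * x) := by
    intro k
    induction k with
    | zero =>
      refine ⟨A, hA, fun x hx => (hexp x).trans ?_⟩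
      rw [Complex.norm_real, Real.norm_eq_abs, abs_of_nonneg hx]
      gcongr
      simp
    | succ k ih =>
      obtain ⟨C1, hC1, h1⟩ := ih
      have hm : ∀ u : ℝ, C * Real.exp u ≤ max C C1 * Real.exp u := fun u => by
        gcongr; exact le_max_left _ _
      have hm1 : ∀ u : ℝ, C1 * Real.exp u ≤ max C C1 * Real.exp u := fun u => by
        gcongr; exact le_max_right _ _
      obtain ⟨C2, hC2, h2⟩ := core_step f hf A B (max C C1) M a τ (max (B - k * (τ / 4)) (a + τ))
        (lt_max_of_lt_left hC) hτ0 hτ1 hτM hexp (fun y hy => (hup y hy).trans (hm _))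
        (fun y hy => (hdown y hy).trans (hm _)) (fun x hx => (h1 x hx).trans (hm1 _)) ξ hpos hsep hlim
        (fun n => (hξ n).trans (hm _)) (le_max_right _ _)
      refine ⟨C2, hC2, fun x hx => (h2 x hx).trans ?_⟩
      gcongr
      push_cast
      rcases max_cases (B - k * (τ / 4)) (a + τ) with ⟨e, h⟩ | ⟨e, h⟩
      · rw [e]; refine le_trans (le_of_eq ?_) (le_max_left _ _); ring
      · rw [e]; exact le_trans (by linarith) (le_max_right _ _)
  obtain ⟨k, hk⟩ := exists_nat_ge ((B - (a + τ)) / (τ / 4))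
  obtain ⟨C', hC', h⟩ := ind k
  refine ⟨C', hC', fun x hx => (h x hx).trans ?_⟩
  rw [div_le_iff₀ (by positivity)] at hk
  gcongr
  exact max_le (by linarith) (by linarith)

lemma core_scaled (f : ℂ → ℂ) (hf : Differentiable ℂ f) (A B C M a ε η : ℝ) (hη : 0 < η)
    (hA : 0 < A) (hC : 0 < C) (hε : 0 < ε) (hM : M * η < Real.pi)
    (hexp : ∀ s : ℂ, ‖f s‖ ≤ A * Real.exp (B * ‖s‖))
    (hup : ∀ y : ℝ, 0 ≤ y → ‖f (y * I)‖ ≤ C * Real.exp (M * y))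
    (hdown : ∀ y : ℝ, 0 ≤ y → ‖f (-(y * I))‖ ≤ C * Real.exp (M * y))
    (ξ : ℕ → ℝ) (hpos : ∀ n, 0 < ξ n)
    (hsep : ∀ m n : ℕ, (η / 2) * |(m : ℝ) - n| ≤ |ξ m - ξ n|)
    (hlim : Tendsto (fun n : ℕ => ξ n / n) atTop (nhds η))
    (hξ : ∀ n, ‖f (ξ n)‖ ≤ C * Real.exp (a * ξ n)) :
    ∃ C' : ℝ, 0 < C' ∧ ∀ x : ℝ, 0 ≤ x → ‖f x‖ ≤ C' * Real.exp ((a + ε) * x) := by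
  obtain ⟨C', hC', h⟩ := core (fun z => f ((η : ℂ) * z)) (by fun_prop) A (B * η) C (M * η) (a * η) (ε * η)
    hA hC (by positivity) hM (by
      intro s
      have := hexp (η * s)
      rwa [norm_mul, Complex.norm_real, Real.norm_eq_abs, abs_of_pos hη, ← mul_assoc] at this) (by
      intro y hy
      have := hup (η * y) (by positivity)
      push_cast at this
      rwa [mul_assoc, ← mul_assoc M] at this) (by
      intro y hy
      have := hdown (η * y) (by positivity)
      push_cast at this
      rw [mul_assoc, ← mul_assoc M, ← mul_neg] at this
      exact this) (fun n => ξ n / η) (fun n => div_pos (hpos n) hη) (by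
      intro m n
      rw [← sub_div, abs_div, abs_of_pos hη, le_div_iff₀ hη]
      have := hsep m n
      linarith) (by
      have := hlim.div_const η
      rw [div_self hη.ne'] at this
      refine this.congr fun n => ?_
      ring) (by
      intro n
      have hne : (η : ℂ) ≠ 0 := by exact_mod_cast hη.ne'
      have e1 : (η : ℂ) * ((ξ n / η : ℝ) : ℂ) = (ξ n : ℂ) := by
        push_cast; field_simp
      have e2 : a * η * (ξ n / η) = a * ξ n := by field_simp
      show ‖f ((η : ℂ) * ((ξ n / η : ℝ) : ℂ))‖ ≤ _
      rw [e1, e2]; exact hξ n)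
  refine ⟨C', hC', fun x hx => ?_⟩
  have := h (x / η) (by positivity)
  have hne : (η : ℂ) ≠ 0 := by exact_mod_cast hη.ne'
  have e1 : (η : ℂ) * ((x / η : ℝ) : ℂ) = (x : ℂ) := by
    push_cast; field_simp
  have e2 : (a * η + ε * η) * (x / η) = (a + ε) * x := by field_simp
  simp only [e1, e2] at this
  exact this

lemma elogDiv_lt_imp (x r b : ℝ) (hx : 0 ≤ x) (hr : 0 < r) (h : elogDiv x r < b) :
    x ≤ Real.exp (b * r) := by
  rcases hx.eq_or_lt with h0 | h0
  · rw [← h0]; positivity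
  · unfold elogDiv at h
    rw [if_neg h0.ne', ← EReal.coe_mul, EReal.coe_lt_coe_iff, inv_mul_lt_iff₀ hr] at h
    rw [← Real.log_le_iff_le_exp h0]
    linarith

lemma elogDiv_le_of (x r b : ℝ) (hx : 0 ≤ x) (hr : 0 < r) (h : x ≤ Real.exp (b * r)) :
    elogDiv x r ≤ b := by
  unfold elogDiv
  rcases hx.eq_or_lt with h0 | h0
  · rw [if_pos h0.symm, EReal.coe_mul_bot_of_pos (inv_pos.2 hr)]; exact bot_le
  · rw [if_neg h0.ne', ← EReal.coe_mul, EReal.coe_le_coe_iff, inv_mul_le_iff₀ hr]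
    rw [← Real.log_le_iff_le_exp h0] at h
    linarith

lemma ray_bound (g : ℝ → ℝ) (A B M M' : ℝ) (hg0 : ∀ y, 0 ≤ g y) (hA : 0 < A) (hB : 0 < B) (hM : 0 < M')
    (hMM : M < M')
    (hexp : ∀ y, 0 ≤ y → g y ≤ A * Real.exp (B * y))
    (hl : limsup (fun y : ℝ => elogDiv (g y) y) atTop ≤ (M : EReal)) :
    ∃ C : ℝ, 0 < C ∧ ∀ y : ℝ, 0 ≤ y → g y ≤ C * Real.exp (M' * y) := by
  have h1 : limsup (fun y : ℝ => elogDiv (g y) y) atTop < (M' : EReal) :=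
    hl.trans_lt (by exact_mod_cast hMM)
  obtain ⟨Y, hY⟩ := eventually_atTop.1 (eventually_lt_of_limsup_lt h1)
  have hYpos : 0 < max Y 1 := lt_max_of_lt_right one_pos
  refine ⟨A * Real.exp (B * max Y 1) + 1, by positivity, fun y hy => ?_⟩
  have he : 1 ≤ Real.exp (M' * y) := Real.one_le_exp (by positivity)
  have hp : 0 < A * Real.exp (B * max Y 1) := by positivity
  rcases le_or_gt y (max Y 1) with h | h
  · have h2 : g y ≤ A * Real.exp (B * max Y 1) := (hexp y hy).trans (by gcongr)
    nlinarith
  · have h2 := elogDiv_lt_imp _ _ _ (hg0 y) (hYpos.trans h) (hY y ((le_max_left _ _).trans h.le))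
    nlinarith

theorem bernstein_type_limsup
    (M η : ℝ) (hM : 0 < M) (hη : 0 < η) (hMη : M * η < Real.pi)
    (f : ℂ → ℂ) (hf : Differentiable ℂ f)
    (hexp : ∃ A B : ℝ, 0 < A ∧ 0 < B ∧ ∀ s : ℂ, ‖f s‖ ≤ A * Real.exp (B * ‖s‖))
    (hup : limsup (fun y : ℝ => elogDiv ‖f (y * I)‖ y) atTop ≤ (M : EReal))
    (hdown : limsup (fun y : ℝ => elogDiv ‖f (-(y * I))‖ y) atTop ≤ (M : EReal))
    (ξ : ℕ → ℝ) (hpos : ∀ n, 0 < ξ n)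
    (hsep : ∀ m n : ℕ, (η / 2) * |(m : ℝ) - n| ≤ |ξ m - ξ n|)
    (hlim : Tendsto (fun n : ℕ => ξ n / n) atTop (nhds η)) :
    limsup (fun n : ℕ => elogDiv ‖f (ξ n)‖ (ξ n)) atTop
      = limsup (fun r : ℝ => elogDiv ‖f r‖ r) atTop := by
  obtain ⟨A, B, hA, hB, hAB⟩ := hexp
  have hξtop : Tendsto ξ atTop atTop := by
    have h1 : Tendsto (fun n : ℕ => ξ n / n * n) atTop atTop :=
      hlim.pos_mul_atTop hη tendsto_natCast_atTop_atTop
    refine h1.congr' ?_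
    filter_upwards [eventually_gt_atTop 0] with n hn
    have : (n : ℝ) ≠ 0 := by positivity
    field_simp
  apply le_antisymm
  · exact hξtop.limsup_comp_le_limsup (u := fun r : ℝ => elogDiv ‖f r‖ r)
  obtain ⟨M', hMM', hM'π⟩ := exists_between ((lt_div_iff₀ hη).2 hMη)
  rw [lt_div_iff₀ hη] at hM'π
  have hM'0 : 0 < M' := hM.trans hMM'
  obtain ⟨C1, hC1, h1⟩ := ray_bound (fun y => ‖f (y * I)‖) A B M M' (fun y => norm_nonneg _) hA hB hM'0 hMM'
    (fun y hy => by
      have := hAB (y * I)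
      rwa [norm_mul, Complex.norm_I, mul_one, Complex.norm_real, Real.norm_eq_abs, abs_of_nonneg hy] at this) hup
  obtain ⟨C2, hC2, h2⟩ := ray_bound (fun y => ‖f (-(y * I))‖) A B M M' (fun y => norm_nonneg _) hA hB hM'0 hMM'
    (fun y hy => by
      have := hAB (-(y * I))
      rwa [norm_neg, norm_mul, Complex.norm_I, mul_one, Complex.norm_real, Real.norm_eq_abs, abs_of_nonneg hy] at this) hdown
  apply le_of_forall_gt_imp_ge_of_dense
  intro c hc
  obtain ⟨a, ha1, ha2⟩ := EReal.lt_iff_exists_real_btwn.1 hc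
  obtain ⟨b, hb1, hb2⟩ := EReal.lt_iff_exists_real_btwn.1 ha2
  refine le_trans ?_ hb2.le
  have hab : a < b := by exact_mod_cast hb1
  obtain ⟨N, hN⟩ := eventually_atTop.1 (eventually_lt_of_limsup_lt ha1)
  obtain ⟨C3, hC3, h3⟩ : ∃ C3 : ℝ, 0 < C3 ∧ ∀ n, ‖f (ξ n)‖ ≤ C3 * Real.exp (a * ξ n) := by
    refine ⟨1 + ∑ n ∈ Finset.range N, ‖f (ξ n)‖ * Real.exp (-(a * ξ n)), by positivity, fun n => ?_⟩
    have hs : 0 ≤ ∑ n ∈ Finset.range N, ‖f (ξ n)‖ * Real.exp (-(a * ξ n)) := by positivity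
    rcases le_or_gt N n with h | h
    · have := elogDiv_lt_imp _ _ _ (norm_nonneg _) (hpos n) (hN n h)
      nlinarith [Real.exp_pos (a * ξ n)]
    · have h4 : ‖f (ξ n)‖ * Real.exp (-(a * ξ n)) ≤ ∑ n ∈ Finset.range N, ‖f (ξ n)‖ * Real.exp (-(a * ξ n)) :=
        Finset.single_le_sum (f := fun n => ‖f (ξ n)‖ * Real.exp (-(a * ξ n)))
          (fun i _ => by positivity) (Finset.mem_range.2 h)
      calc ‖f (ξ n)‖ = ‖f (ξ n)‖ * Real.exp (-(a * ξ n)) * Real.exp (a * ξ n) := by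
            rw [mul_assoc, ← Real.exp_add]; simp
        _ ≤ _ := by gcongr; linarith
  have hm : ∀ (D u : ℝ), 0 < D → D ≤ C1 + C2 + C3 → D * Real.exp u ≤ (C1 + C2 + C3) * Real.exp u :=
    fun D u _ h => by gcongr
  obtain ⟨C', hC', h5⟩ := core_scaled f hf A B (C1 + C2 + C3) M' a ((b - a) / 2) η hη hA (by positivity)
    (by linarith) hM'π hAB (fun y hy => (h1 y hy).trans (hm _ _ hC1 (by linarith)))
    (fun y hy => (h2 y hy).trans (hm _ _ hC2 (by linarith))) ξ hpos hsep hlim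
    (fun n => (h3 n).trans (hm _ _ hC3 (by linarith)))
  refine limsup_le_of_le (by isBoundedDefault) ?_
  filter_upwards [eventually_gt_atTop 0, eventually_ge_atTop (Real.log C' / ((b - a) / 2))] with r hr hr2
  apply elogDiv_le_of _ _ _ (norm_nonneg _) hr
  rw [div_le_iff₀ (by linarith)] at hr2
  refine (h5 r hr.le).trans ?_
  calc C' * Real.exp ((a + (b - a) / 2) * r)
      = Real.exp (Real.log C' + (a + (b - a) / 2) * r) := by rw [Real.exp_add, Real.exp_log hC']
    _ ≤ _ := by apply Real.exp_le_exp.2; linarith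
end

section
/- Fix η > 0 and 0 < σ_R < 1, and a nonnegative integer m. Set α_n = exp((n - 1/4)η) and β_n = exp((n + 1/4)η) for n ∈ ℕ. Let A be the set of positive integers n for which there exists r ∈ ((n - 1/4)η, (n + 1/4)η] with |ρ(r)| ≤ e^{-σ_R r}, where ρ : [0,∞) → ℂ is any continuous function. If ∑_p |ρ(log p)| / (log p)^m < ∞ (sum over primes), then the complement ℕ \ A is finite. -/
open Filter

noncomputable def fej (L t : ℝ) : ℝ := ∫ u in (0:ℝ)..L, (1 - u / L) * Real.cos (u * t)

lemma fej_eq {L t : ℝ} (hL : 0 < L) (ht : t ≠ 0) :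
    fej L t = (1 - Real.cos (L * t)) / (L * t ^ 2) := by
  unfold fej
  have h : ∀ u ∈ Set.uIcc 0 L, HasDerivAt
      (fun u => (1 - u / L) * (Real.sin (u * t) / t) - Real.cos (u * t) / (L * t ^ 2))
      ((1 - u / L) * Real.cos (u * t)) u := by
    intro u _
    have h1 : HasDerivAt (fun u : ℝ => u * t) t u := by
      simpa using (hasDerivAt_id u).mul_const t
    have h2 : HasDerivAt (fun u : ℝ => 1 - u / L) (-(1 / L)) u := by
      simpa using ((hasDerivAt_id u).div_const L).const_sub 1
    have h3 := (h2.mul (h1.sin.div_const t)).sub (h1.cos.div_const (L * t ^ 2))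
    refine h3.congr_deriv ?_
    field_simp
    ring
  rw [intervalIntegral.integral_eq_sub_of_hasDerivAt h
    (Continuous.intervalIntegrable (by fun_prop) _ _)]
  simp
  field_simp
  ring

lemma wint {L : ℝ} (hL : 0 < L) : ∫ u in (0:ℝ)..L, (1 - u / L) = L / 2 := by
  have h : ∀ u ∈ Set.uIcc 0 L, HasDerivAt (fun u => u - u ^ 2 / (2 * L)) (1 - u / L) u := by
    intro u _
    have := (hasDerivAt_id u).sub (((hasDerivAt_id u).pow 2).div_const (2 * L))
    refine this.congr_deriv ?_
    simp
    field_simp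
  rw [intervalIntegral.integral_eq_sub_of_hasDerivAt h
    (Continuous.intervalIntegrable (by fun_prop) _ _)]
  field_simp
  ring

lemma wnn {L u : ℝ} (hL : 0 < L) (hu : u ∈ Set.Icc 0 L) : 0 ≤ 1 - u / L := by
  have := (div_le_one hL).2 hu.2
  linarith

lemma fej_le {L t : ℝ} (hL : 0 < L) : fej L t ≤ L / 2 := by
  rw [← wint hL]
  refine intervalIntegral.integral_mono_on hL.le
    (Continuous.intervalIntegrable (by fun_prop) _ _)
    (Continuous.intervalIntegrable (by fun_prop) _ _) fun u hu => ?_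
  nlinarith [wnn hL hu, Real.cos_le_one (u * t)]

lemma le_fej {L t : ℝ} (hL : 0 < L) (ht : |t| ≤ 1 / L) : L / 4 ≤ fej L t := by
  have : ∫ u in (0:ℝ)..L, (1 - u / L) * (1 / 2) = L / 4 := by
    rw [intervalIntegral.integral_mul_const, wint hL]; ring
  rw [← this]
  refine intervalIntegral.integral_mono_on hL.le
    (Continuous.intervalIntegrable (by fun_prop) _ _)
    (Continuous.intervalIntegrable (by fun_prop) _ _) fun u hu => ?_
  refine mul_le_mul_of_nonneg_left ?_ (wnn hL hu)
  have h1 : |u * t| ≤ 1 := by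
    rw [abs_mul, abs_of_nonneg hu.1]
    calc u * |t| ≤ L * (1 / L) := mul_le_mul hu.2 ht (abs_nonneg _) hL.le
      _ = 1 := by field_simp
  have h2 := Real.one_sub_sq_div_two_le_cos (x := u * t)
  have h3 : (u * t) ^ 2 ≤ 1 := by rwa [sq_le_one_iff_abs_le_one]
  linarith

lemma fej_nonneg {L t : ℝ} (hL : 0 < L) : 0 ≤ fej L t := by
  by_cases ht : t = 0
  · subst ht
    exact le_trans (by positivity) (le_fej (t := 0) hL (by simp; positivity))
  · rw [fej_eq hL ht]
    have := Real.cos_le_one (L * t)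
    exact div_nonneg (by linarith) (by positivity)

lemma fej_le' {L t : ℝ} (hL : 0 < L) (ht : t ≠ 0) : fej L t ≤ 2 / (L * t ^ 2) := by
  rw [fej_eq hL ht]
  have := Real.neg_one_le_cos (L * t)
  gcongr
  linarith

lemma fej_one_le (t : ℝ) : fej 1 t ≤ 4 * (1 + t ^ 2)⁻¹ := by
  rcases le_or_gt 1 |t| with h | h
  · have h0 : t ≠ 0 := by rintro rfl; norm_num at h
    have h1 : 1 ≤ t ^ 2 := by rwa [one_le_sq_iff_one_le_abs]
    refine (fej_le' one_pos h0).trans ?_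
    rw [← div_eq_mul_inv, div_le_div_iff₀ (by positivity) (by positivity)]
    nlinarith
  · have h1 : t ^ 2 < 1 := by rwa [sq_lt_one_iff_abs_lt_one]
    refine (fej_le one_pos).trans ?_
    rw [← div_eq_mul_inv, div_le_div_iff₀ (by positivity) (by positivity)]
    nlinarith

lemma fej_tail {L t δ : ℝ} (hL : 0 < L) (hδ : 0 < δ) (ht : δ < |t|) :
    fej L t ≤ (1 + Real.pi / δ) ^ 2 / L * (fej 1 t + fej 1 (t + Real.pi)) := by
  have h0 : t ≠ 0 := by rintro rfl; simp at ht; linarith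
  have hpi := Real.pi_pos
  have ht2 : 0 < t ^ 2 := by positivity
  have hC : 1 ≤ (1 + Real.pi / δ) ^ 2 := by
    have : 0 < Real.pi / δ := by positivity
    nlinarith
  have key : 2 / t ^ 2 ≤ (1 + Real.pi / δ) ^ 2 * (fej 1 t + fej 1 (t + Real.pi)) := by
    have e1 : fej 1 t = (1 - Real.cos t) / t ^ 2 := by rw [fej_eq one_pos h0]; simp
    by_cases h : t + Real.pi = 0
    · have h' : t = -Real.pi := by linarith
      have : fej 1 t = 2 / t ^ 2 := by rw [e1, h']; simp; norm_num
      have h3 := fej_nonneg (t := t + Real.pi) one_pos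
      have h4 := fej_nonneg (t := t) one_pos
      rw [← this]
      nlinarith
    · have e2 : fej 1 (t + Real.pi) = (1 + Real.cos t) / (t + Real.pi) ^ 2 := by
        rw [fej_eq one_pos h]; simp
      have hp : 0 < (t + Real.pi) ^ 2 := by positivity
      have hle : (t + Real.pi) ^ 2 ≤ (1 + Real.pi / δ) ^ 2 * t ^ 2 := by
        rw [← mul_pow]
        rw [sq_le_sq, abs_mul, abs_of_pos (show 0 < 1 + Real.pi / δ by positivity)]
        have h8 := abs_add_le t Real.pi
        rw [abs_of_pos hpi] at h8
        have h9 : Real.pi ≤ Real.pi / δ * |t| := by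
          rw [div_mul_eq_mul_div, le_div_iff₀ hδ]
          nlinarith
        linarith
      have h5 : (1 + Real.cos t) / t ^ 2 ≤ (1 + Real.pi / δ) ^ 2 * fej 1 (t + Real.pi) := by
        rw [e2, ← mul_div_assoc, div_le_div_iff₀ ht2 hp]
        nlinarith [Real.neg_one_le_cos t]
      have h6 : (1 - Real.cos t) / t ^ 2 ≤ (1 + Real.pi / δ) ^ 2 * fej 1 t := by
        rw [← e1]; nlinarith [fej_nonneg (t := t) one_pos]
      have h7 : 2 / t ^ 2 = (1 + Real.cos t) / t ^ 2 + (1 - Real.cos t) / t ^ 2 := by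
        rw [← add_div]; ring
      linarith
  calc fej L t ≤ 2 / (L * t ^ 2) := fej_le' hL h0
    _ = (2 / t ^ 2) / L := by field_simp
    _ ≤ ((1 + Real.pi / δ) ^ 2 * (fej 1 t + fej 1 (t + Real.pi))) / L := by gcongr
    _ = _ := by ring

lemma fej_cont {L : ℝ} : Continuous (fej L) := by
  unfold fej
  exact intervalIntegral.continuous_parametric_intervalIntegral_of_continuous' (by fun_prop) _ _

open ArithmeticFunction in
lemma exists_G : ∃ G : ℝ → ℝ → ℂ, Continuous (Function.uncurry G) ∧
    ∀ ε u : ℝ, 0 < ε → LSeries (fun n => (vonMangoldt n : ℂ)) (1 + ε + u * Complex.I)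
      = 1 / (ε + u * Complex.I) + G ε u := by
  refine ⟨fun ε u => vonMangoldt.LFunctionResidueClassAux (1 : ZMod 1)
    (1 + (|ε| : ℝ) + u * Complex.I), ?_, ?_⟩
  · refine (vonMangoldt.continuousOn_LFunctionResidueClassAux (1 : ZMod 1)).comp_continuous
      (f := fun p : ℝ × ℝ => (1 + (|p.1| : ℝ) + p.2 * Complex.I : ℂ)) (by fun_prop) ?_
    intro p
    simp
  · intro ε u hε
    have := vonMangoldt.eqOn_LFunctionResidueClassAux (a := (1 : ZMod 1)) isUnit_one
      (x := 1 + ε + u * Complex.I) (by simpa using hε)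
    simp only [abs_of_pos hε]
    rw [this]
    have h2 : (vonMangoldt.residueClass (1 : ZMod 1)) = fun n => vonMangoldt n := by
      ext n
      simp [vonMangoldt.residueClass, Set.indicator, Subsingleton.elim (n : ZMod 1) 1]
    rw [h2]
    simp
    ring

open MeasureTheory in
lemma pole_re {ε : ℝ} (hε : 0 < ε) (u y : ℝ) :
    (Complex.exp (u * y * Complex.I) * (1 / (ε + u * Complex.I))).re
      = ∫ v in Set.Ioi (0:ℝ), Real.exp (-ε * v) * Real.cos (u * (v - y)) := by
  have ha : (-(ε + u * Complex.I) : ℂ).re < 0 := by simpa using hε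
  have h1 := integral_exp_mul_complex_Ioi ha 0
  have hi := (integrableOn_exp_mul_complex_Ioi ha 0)
  have h2 : Complex.exp (u * y * Complex.I) * (1 / (ε + u * Complex.I))
      = ∫ v in Set.Ioi (0:ℝ), Complex.exp (u * y * Complex.I) *
        Complex.exp (-(ε + u * Complex.I) * v) := by
    rw [integral_const_mul, h1]
    congr 1
    rw [neg_div_neg_eq]
    simp
  have h3 := integral_re (μ := volume.restrict (Set.Ioi (0:ℝ))) (𝕜 := ℂ)
    (hi.const_mul (Complex.exp (u * y * Complex.I)))
  rw [h2]
  refine (Eq.symm h3).trans ?_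
  refine integral_congr_ae (Eventually.of_forall fun v => ?_)
  show (Complex.exp (u * y * Complex.I) * Complex.exp (-(ε + u * Complex.I) * v)).re = _
  rw [← Complex.exp_add, Complex.exp_re]
  have e1 : (u * y * Complex.I + -(ε + u * Complex.I) * v : ℂ).re = -ε * v := by simp
  have e2 : (u * y * Complex.I + -(ε + u * Complex.I) * v : ℂ).im = -(u * (v - y)) := by
    simp; ring
  rw [e1, e2, Real.cos_neg]

open MeasureTheory in
lemma pole_int {ε L : ℝ} (hε : 0 < ε) (hL : 0 < L) (y : ℝ) :
    ∫ u in (0:ℝ)..L, (1 - u / L) *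
        (Complex.exp (u * y * Complex.I) * (1 / (ε + u * Complex.I))).re
      = ∫ v in Set.Ioi (0:ℝ), Real.exp (-ε * v) * fej L (v - y) := by
  simp_rw [pole_re hε, ← integral_const_mul]
  unfold fej
  simp_rw [intervalIntegral.integral_of_le hL.le, ← integral_const_mul]
  rw [integral_integral_swap]
  · refine integral_congr_ae (Eventually.of_forall fun v => ?_)
    refine integral_congr_ae (Eventually.of_forall fun u => ?_)
    simp only
    ring
  · have h1 : Integrable (fun _ : ℝ => (1:ℝ)) (volume.restrict (Set.Ioc 0 L)) := by
      simp
    have h2 : Integrable (fun v : ℝ => Real.exp (-ε * v)) (volume.restrict (Set.Ioi 0)) :=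
      exp_neg_integrableOn_Ioi 0 hε
    have h3 := h1.mul_prod h2
    refine h3.mono' (Continuous.aestronglyMeasurable (by unfold Function.uncurry; fun_prop)) ?_
    rw [Measure.prod_restrict]
    refine (ae_restrict_iff' (measurableSet_Ioc.prod measurableSet_Ioi)).2
      (Eventually.of_forall ?_)
    rintro ⟨u, v⟩ ⟨hu, -⟩
    have hw := wnn hL ⟨hu.1.le, hu.2⟩
    have hw' : 1 - u / L ≤ 1 := by
      have : 0 ≤ u / L := div_nonneg hu.1.le hL.le
      linarith
    simp only [Function.uncurry, norm_mul, Real.norm_eq_abs, one_mul, Real.abs_exp,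
      abs_of_nonneg hw]
    have := Real.abs_cos_le_one (u * (v - y))
    have he := Real.exp_pos (-ε * v)
    calc (1 - u / L) * (Real.exp (-ε * v) * |Real.cos (u * (v - y))|)
        ≤ 1 * (Real.exp (-ε * v) * 1) := by gcongr
      _ = _ := by ring

open ArithmeticFunction in
lemma term_re {ε : ℝ} (u y : ℝ) (n : ℕ) :
    (Complex.exp (u * y * Complex.I) *
      LSeries.term (fun n => (vonMangoldt n : ℂ)) (1 + ε + u * Complex.I) n).re
      = vonMangoldt n / (n : ℝ) ^ (1 + ε) * Real.cos (u * (Real.log n - y)) := by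
  rcases eq_or_ne n 0 with rfl | hn
  · simp
  have hn' : (0:ℝ) < n := by positivity
  rw [LSeries.term_of_ne_zero hn, Complex.cpow_def_of_ne_zero (by exact_mod_cast hn),
    ← Complex.natCast_log, Real.rpow_def_of_pos hn', div_eq_mul_inv, ← Complex.exp_neg,
    mul_left_comm, ← Complex.exp_add, Complex.re_ofReal_mul, Complex.exp_re, div_eq_mul_inv,
    ← Real.exp_neg, mul_assoc (vonMangoldt n)]
  generalize Real.log n = l
  have e1 : (u * y * Complex.I + -((l : ℂ) * (1 + ε + u * Complex.I)) : ℂ).re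
    = -(l * (1 + ε)) := by simp
  have e2 : (u * y * Complex.I + -((l : ℂ) * (1 + ε + u * Complex.I)) : ℂ).im
    = -(u * (l - y)) := by simp; ring
  rw [e1, e2, Real.cos_neg]

open ArithmeticFunction in
lemma summable_a {ε : ℝ} (hε : 0 < ε) :
    Summable (fun n : ℕ => vonMangoldt n / (n : ℝ) ^ (1 + ε)) := by
  have h := LSeriesSummable_vonMangoldt (s := 1 + ε + (0:ℝ) * Complex.I) (by simpa using hε)
  have h2 := Complex.hasSum_re h.hasSum
  refine h2.summable.congr fun n => ?_
  have := term_re (ε := ε) 0 0 n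
  simpa using this

open ArithmeticFunction MeasureTheory in
lemma main_id {G : ℝ → ℝ → ℂ} (hG : Continuous (Function.uncurry G))
    (hGe : ∀ ε u : ℝ, 0 < ε → LSeries (fun n => (vonMangoldt n : ℂ)) (1 + ε + u * Complex.I)
      = 1 / (ε + u * Complex.I) + G ε u) {ε L : ℝ} (hε : 0 < ε) (hL : 0 < L) (y : ℝ) :
    HasSum (fun n : ℕ => vonMangoldt n / (n : ℝ) ^ (1 + ε) * fej L (Real.log n - y))
      ((∫ v in Set.Ioi (0:ℝ), Real.exp (-ε * v) * fej L (v - y)) +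
       ∫ u in (0:ℝ)..L, (1 - u / L) * (Complex.exp (u * y * Complex.I) * G ε u).re) := by
  have hne : ∀ u : ℝ, (ε + u * Complex.I : ℂ) ≠ 0 := by
    intro u h
    have := congrArg Complex.re h
    simp at this
    linarith
  have hGc : Continuous (G ε) := hG.comp (by fun_prop : Continuous fun u : ℝ => (ε, u))
  have hnn : ∀ n : ℕ, 0 ≤ vonMangoldt n / (n : ℝ) ^ (1 + ε) := fun n =>
    div_nonneg vonMangoldt_nonneg (Real.rpow_nonneg n.cast_nonneg _)
  rw [← pole_int hε hL, ← intervalIntegral.integral_add]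
  rotate_left
  · refine Continuous.intervalIntegrable ?_ _ _
    refine Continuous.mul (by fun_prop) (Complex.continuous_re.comp ?_)
    refine Continuous.mul (by fun_prop) ?_
    exact Continuous.div continuous_const (by fun_prop) hne
  · refine Continuous.intervalIntegrable ?_ _ _
    fun_prop
  unfold fej
  simp_rw [← intervalIntegral.integral_const_mul]
  refine intervalIntegral.hasSum_integral_of_dominated_convergence
    (fun n _ => vonMangoldt n / (n : ℝ) ^ (1 + ε)) ?_ ?_ ?_ ?_ ?_
  · intro n
    exact Continuous.aestronglyMeasurable (by fun_prop)
  · intro n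
    refine Eventually.of_forall fun u hu => ?_
    rw [Set.uIoc_of_le hL.le] at hu
    have hw := wnn hL ⟨hu.1.le, hu.2⟩
    have hw' : 1 - u / L ≤ 1 := by
      have : 0 ≤ u / L := div_nonneg hu.1.le hL.le
      linarith
    rw [norm_mul, norm_mul, Real.norm_of_nonneg (hnn n), Real.norm_of_nonneg hw, Real.norm_eq_abs]
    have := Real.abs_cos_le_one (u * (Real.log n - y))
    calc vonMangoldt n / (n : ℝ) ^ (1 + ε) * ((1 - u / L) * |Real.cos (u * (Real.log n - y))|)
        ≤ vonMangoldt n / (n : ℝ) ^ (1 + ε) * (1 * 1) := by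
          have := hnn n
          gcongr
      _ = _ := by ring
  · exact Eventually.of_forall fun u _ => summable_a hε
  · simp
  · refine Eventually.of_forall fun u _ => ?_
    have h := LSeriesSummable_vonMangoldt (s := 1 + ε + u * Complex.I) (by simpa using hε)
    have h2 := (Complex.hasSum_re (h.hasSum.mul_left
      (Complex.exp (u * y * Complex.I)))).mul_left (1 - u / L)
    have e : ∑' n, LSeries.term (fun n => (vonMangoldt n : ℂ)) (1 + ε + u * Complex.I) n
        = 1 / (ε + u * Complex.I) + G ε u := hGe ε u hε
    rw [e] at h2
    rw [← mul_add, ← Complex.add_re, ← mul_add]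
    refine h2.congr_fun fun n => ?_
    rw [term_re]
    ring

lemma R_bound {G : ℝ → ℝ → ℂ} (hG : Continuous (Function.uncurry G)) {L : ℝ} (hL : 0 < L) :
    ∃ B : ℝ, ∀ ε ∈ Set.Icc (0:ℝ) 1, ∀ y : ℝ,
      |∫ u in (0:ℝ)..L, (1 - u / L) * (Complex.exp (u * y * Complex.I) * G ε u).re| ≤ B := by
  obtain ⟨C, hC⟩ := (isCompact_Icc.prod isCompact_Icc :
    IsCompact (Set.Icc (0:ℝ) 1 ×ˢ Set.Icc (0:ℝ) L)).exists_bound_of_continuousOn hG.continuousOn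
  refine ⟨C * |L - 0|, fun ε hε y => ?_⟩
  rw [← Real.norm_eq_abs]
  refine intervalIntegral.norm_integral_le_of_norm_le_const fun u hu => ?_
  rw [Set.uIoc_of_le hL.le] at hu
  have hw := wnn hL ⟨hu.1.le, hu.2⟩
  have hw' : 1 - u / L ≤ 1 := by
    have : 0 ≤ u / L := div_nonneg hu.1.le hL.le
    linarith
  have h1 : ‖G ε u‖ ≤ C := hC (ε, u) ⟨hε, hu.1.le, hu.2⟩
  rw [norm_mul, Real.norm_of_nonneg hw, Real.norm_eq_abs]
  have h2 : |(Complex.exp (u * y * Complex.I) * G ε u).re| ≤ C := by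
    refine (Complex.abs_re_le_norm _).trans ?_
    rw [norm_mul]
    have := Complex.norm_exp_ofReal_mul_I (u * y)
    push_cast at this
    rwa [this, one_mul]
  have := abs_nonneg (Complex.exp (u * y * Complex.I) * G ε u).re
  nlinarith

lemma R_cont {G : ℝ → ℝ → ℂ} (hG : Continuous (Function.uncurry G)) (L y : ℝ) :
    Continuous fun ε : ℝ =>
      ∫ u in (0:ℝ)..L, (1 - u / L) * (Complex.exp (u * y * Complex.I) * G ε u).re := by
  refine intervalIntegral.continuous_parametric_intervalIntegral_of_continuous' ?_ _ _
  have : Continuous fun p : ℝ × ℝ => G p.1 p.2 := hG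
  unfold Function.uncurry
  fun_prop

open MeasureTheory in
lemma R_lim {g : ℝ → ℂ} (hg : Continuous g) {L : ℝ} (hL : 0 < L) :
    Tendsto (fun y : ℝ =>
      ∫ u in (0:ℝ)..L, (1 - u / L) * (Complex.exp (u * y * Complex.I) * g u).re)
      atTop (nhds 0) := by
  set f : ℝ → ℂ := (Set.Ioc 0 L).indicator (fun u => ((1 - u / L : ℝ) : ℂ) * g u) with hf
  have h := Real.tendsto_integral_exp_smul_cocompact f
  have hy : Tendsto (fun y : ℝ => -y / (2 * Real.pi)) atTop (cocompact ℝ) := by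
    have : Tendsto (fun y : ℝ => -y / (2 * Real.pi)) atTop atBot :=
      tendsto_neg_atTop_atBot.atBot_div_const (by positivity)
    exact this.mono_right atBot_le_cocompact
  have h2 := (Complex.continuous_re.tendsto 0).comp (h.comp hy)
  rw [Complex.zero_re] at h2
  refine h2.congr fun y => ?_
  simp only [Function.comp]
  have e : ∀ v : ℝ, Real.fourierChar (-(v * (-y / (2 * Real.pi)))) • f v
      = (Set.Ioc 0 L).indicator (fun u : ℝ => ((1 - u / L : ℝ) : ℂ) *
        (Complex.exp (u * y * Complex.I) * g u)) v := by
    intro v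
    rw [Circle.smul_def, Real.fourierChar_apply, hf]
    by_cases hv : v ∈ Set.Ioc 0 L
    · rw [Set.indicator_of_mem hv, Set.indicator_of_mem hv, smul_eq_mul]
      have : ((2 * Real.pi * -(v * (-y / (2 * Real.pi))) : ℝ) : ℂ) = v * y := by
        rw [← Complex.ofReal_mul]
        congr 1
        have := Real.pi_pos
        field_simp
      rw [this]
      ring
    · rw [Set.indicator_of_notMem hv, Set.indicator_of_notMem hv, smul_zero]
  simp_rw [e]
  rw [integral_indicator measurableSet_Ioc, intervalIntegral.integral_of_le hL.le]
  have hi : Integrable (fun u : ℝ => ((1 - u / L : ℝ) : ℂ) *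
        (Complex.exp (u * y * Complex.I) * g u)) (volume.restrict (Set.Ioc 0 L)) := by
    have : Continuous (fun u : ℝ => ((1 - u / L : ℝ) : ℂ) *
        (Complex.exp (u * y * Complex.I) * g u)) := by fun_prop
    exact (this.integrableOn_Icc).mono_set Set.Ioc_subset_Icc_self
  refine (integral_re (𝕜 := ℂ) hi).symm.trans ?_
  refine integral_congr_ae (Eventually.of_forall fun u => ?_)
  exact Complex.re_ofReal_mul _ _

open MeasureTheory in
lemma P_le {ε : ℝ} (hε : 0 < ε) (y : ℝ) :
    ∫ v in Set.Ioi (0:ℝ), Real.exp (-ε * v) * fej 1 (v - y)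
      ≤ ∫ t : ℝ, 4 * (1 + t ^ 2)⁻¹ := by
  have hI : Integrable (fun t : ℝ => 4 * (1 + t ^ 2)⁻¹) := integrable_inv_one_add_sq.const_mul 4
  have hI' : Integrable (fun t : ℝ => 4 * (1 + (t - y) ^ 2)⁻¹) := hI.comp_sub_right y
  rw [← integral_sub_right_eq_self (fun t : ℝ => 4 * (1 + t ^ 2)⁻¹) y]
  refine le_trans ?_ (setIntegral_le_integral (s := Set.Ioi 0) hI'
    (Eventually.of_forall fun t => by positivity))
  refine integral_mono_of_nonneg (Eventually.of_forall fun v => ?_) hI'.integrableOn ?_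
  · exact mul_nonneg (Real.exp_pos _).le (fej_nonneg one_pos)
  · refine (ae_restrict_iff' measurableSet_Ioi).2 (Eventually.of_forall fun v hv => ?_)
    have h1 : Real.exp (-ε * v) ≤ 1 := by
      rw [Real.exp_le_one_iff]
      have : 0 < v := hv
      nlinarith
    have h2 := fej_nonneg (t := v - y) one_pos
    have h3 := fej_one_le (v - y)
    simp only
    nlinarith

open MeasureTheory in
lemma le_P {ε L : ℝ} (hε : 0 < ε) (hL : 0 < L) {y : ℝ} (hy : 1 / L ≤ y) :
    Real.exp (-ε * (y + 1 / L)) / 2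
      ≤ ∫ v in Set.Ioi (0:ℝ), Real.exp (-ε * v) * fej L (v - y) := by
  have hI : IntegrableOn (fun v => Real.exp (-ε * v) * fej L (v - y)) (Set.Ioi 0) := by
    refine ((exp_neg_integrableOn_Ioi 0 hε).mul_const (L / 2)).mono'
      (Continuous.aestronglyMeasurable ?_) (Eventually.of_forall fun v => ?_)
    · have := fej_cont (L := L)
      fun_prop
    · have h2 := fej_nonneg (t := v - y) hL
      rw [Real.norm_of_nonneg (mul_nonneg (Real.exp_pos _).le h2)]
      exact mul_le_mul_of_nonneg_left (fej_le hL) (Real.exp_pos _).le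
  have hL' : 0 < 1 / L := by positivity
  have hsub : Set.Ioc (y - 1 / L) (y + 1 / L) ⊆ Set.Ioi 0 := by
    intro v hv
    have := hv.1
    simp only [Set.mem_Ioi]
    linarith
  refine le_trans ?_ (setIntegral_mono_set hI (Eventually.of_forall fun v =>
    mul_nonneg (Real.exp_pos _).le (fej_nonneg hL)) hsub.eventuallyLE)
  have hc : ∫ v in Set.Ioc (y - 1 / L) (y + 1 / L), Real.exp (-ε * (y + 1 / L)) * (L / 4)
      = Real.exp (-ε * (y + 1 / L)) / 2 := by
    rw [setIntegral_const, Real.volume_real_Ioc_of_le (by linarith), smul_eq_mul]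
    field_simp
    ring
  rw [← hc]
  refine setIntegral_mono_on continuous_const.integrableOn_Ioc (hI.mono_set hsub) measurableSet_Ioc fun v hv => ?_
  have h1 : Real.exp (-ε * (y + 1 / L)) ≤ Real.exp (-ε * v) := by
    rw [Real.exp_le_exp]
    nlinarith [hv.2]
  have h2 : L / 4 ≤ fej L (v - y) := le_fej hL (by
    rw [abs_le]; constructor <;> linarith [hv.1, hv.2])
  gcongr

open ArithmeticFunction in
lemma key {δ : ℝ} (hδ : 0 < δ) : ∃ c : ℝ, 0 < c ∧ ∀ᶠ y in atTop, ∃ T : Finset ℕ,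
    (∀ n ∈ T, n ≠ 0 ∧ |Real.log n - y| ≤ δ) ∧ c ≤ ∑ n ∈ T, vonMangoldt n / n := by
  obtain ⟨G, hG, hGe⟩ := exists_G
  have hG0 : Continuous (G 0) := hG.comp (by fun_prop : Continuous fun u : ℝ => ((0:ℝ), u))
  have hnn : ∀ (ε : ℝ) (n : ℕ), 0 ≤ vonMangoldt n / (n : ℝ) ^ (1 + ε) := fun ε n =>
    div_nonneg vonMangoldt_nonneg (Real.rpow_nonneg n.cast_nonneg _)
  obtain ⟨B0, hB0⟩ := R_bound hG one_pos
  obtain ⟨B, hBpos, hB⟩ : ∃ B : ℝ, 0 < B ∧ ∀ ε ∈ Set.Ioc (0:ℝ) 1, ∀ y : ℝ, 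
      ∑' n : ℕ, vonMangoldt n / (n : ℝ) ^ (1 + ε) * fej 1 (Real.log n - y) ≤ B := by
    refine ⟨max 1 ((∫ t : ℝ, 4 * (1 + t ^ 2)⁻¹) + B0), by positivity, fun ε hε y => ?_⟩
    rw [(main_id hG hGe hε.1 one_pos y).tsum_eq]
    refine le_trans ?_ (le_max_right _ _)
    exact add_le_add (P_le hε.1 y) ((le_abs_self _).trans (hB0 ε ⟨hε.1.le, hε.2⟩ y))
  set C := (1 + Real.pi / δ) ^ 2 with hC
  have hCpos : 0 < C := by have := Real.pi_pos; positivity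
  obtain ⟨L, hLdef⟩ : ∃ L : ℝ, L = 32 * B * C := ⟨_, rfl⟩
  have hL : 0 < L := by rw [hLdef]; positivity
  refine ⟨1 / (8 * L), by positivity, ?_⟩
  have hlim := R_lim hG0 hL
  have hev : ∀ᶠ y : ℝ in atTop, 
      |∫ u in (0:ℝ)..L, (1 - u / L) * (Complex.exp (u * y * Complex.I) * G 0 u).re| < 1 / 32 := by
    have := hlim.abs
    rw [abs_zero] at this
    exact this.eventually_lt_const (by norm_num)
  filter_upwards [hev, eventually_ge_atTop (1 / L)] with y hy1 hy2
  have hev2 : ∀ᶠ ε : ℝ in nhds 0, 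
      |∫ u in (0:ℝ)..L, (1 - u / L) * (Complex.exp (u * y * Complex.I) * G ε u).re| < 1 / 32 :=
    ((R_cont hG L y).abs.tendsto 0).eventually_lt_const hy1
  have hev3 : ∀ᶠ ε : ℝ in nhds 0, 1 / 2 < Real.exp (-ε * (y + 1 / L)) := by
    have : Continuous fun ε : ℝ => Real.exp (-ε * (y + 1 / L)) := by fun_prop
    refine (this.tendsto 0).eventually_const_lt ?_
    simp
    norm_num
  have hev4 : ∀ᶠ ε : ℝ in nhdsWithin 0 (Set.Ioi 0), ε ∈ Set.Ioc (0:ℝ) 1 :=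
    Ioc_mem_nhdsGT one_pos
  obtain ⟨ε, h1, h2, h3⟩ :=
    ((hev2.filter_mono nhdsWithin_le_nhds).and
      ((hev3.filter_mono nhdsWithin_le_nhds).and hev4)).exists
  have hmain := main_id hG hGe h3.1 hL y
  have hP := le_P h3.1 hL hy2
  have hS1 := (main_id hG hGe h3.1 one_pos y)
  have hS2 := (main_id hG hGe h3.1 one_pos (y - Real.pi))
  set T : Finset ℕ := (Finset.range (⌈Real.exp (y + δ)⌉₊ + 1)).filter
    (fun n => n ≠ 0 ∧ |Real.log n - y| ≤ δ) with hT
  have hTmem : ∀ n : ℕ, n ∈ T ↔ n ≠ 0 ∧ |Real.log n - y| ≤ δ := by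
    intro n
    rw [hT, Finset.mem_filter, and_iff_right_iff_imp]
    rintro ⟨hn, h⟩
    rw [Finset.mem_range, Nat.lt_succ_iff]
    have hn' : (0:ℝ) < n := by positivity
    have : Real.log n ≤ y + δ := by linarith [(abs_le.1 h).2]
    rw [Real.log_le_iff_le_exp hn'] at this
    exact_mod_cast this.trans (Nat.le_ceil _)
  refine ⟨T, fun n hn => (hTmem n).1 hn, ?_⟩
  have hTs : HasSum (fun n : ℕ => if n ∈ T then vonMangoldt n / (n : ℝ) * L else 0)
      (∑ n ∈ T, vonMangoldt n / (n : ℝ) * L) := by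
    have : HasSum (fun n : ℕ => if n ∈ T then vonMangoldt n / (n : ℝ) * L else 0)
      (∑ n ∈ T, if n ∈ T then vonMangoldt n / (n : ℝ) * L else 0) :=
      hasSum_sum_of_ne_finset_zero (fun n hn => if_neg hn)
    rwa [Finset.sum_congr rfl (fun n hn => if_pos hn)] at this
  have hle := hasSum_le (fun n => ?_) hmain (hTs.add ((hS1.add hS2).mul_left (C / L)))
  · rw [← hS1.tsum_eq, ← hS2.tsum_eq, ← Finset.sum_mul] at hle
    have hb1 := hB ε h3 y
    have hb2 := hB ε h3 (y - Real.pi)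
    have hCL : C / L * (B + B) = 1 / 16 := by
      rw [hLdef]; field_simp; norm_num
    have hb3 := mul_le_mul_of_nonneg_left (add_le_add hb1 hb2) (show 0 ≤ C / L by positivity)
    rw [hCL] at hb3
    have h1' := (abs_lt.1 h1).1
    rw [div_le_iff₀ (by positivity)]
    linarith
  · rcases eq_or_ne n 0 with rfl | hn
    · simp [hTmem]
    have hn' : (1:ℝ) ≤ n := by exact_mod_cast Nat.one_le_iff_ne_zero.2 hn
    have hf1 := fej_nonneg (t := Real.log n - y) one_pos
    have hf2 := fej_nonneg (t := Real.log n - (y - Real.pi)) one_pos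
    have ha := hnn ε n
    by_cases hnT : n ∈ T
    · rw [if_pos hnT]
      have hle1 : vonMangoldt n / (n : ℝ) ^ (1 + ε) ≤ vonMangoldt n / (n : ℝ) := by
        refine div_le_div_of_nonneg_left vonMangoldt_nonneg (by linarith) ?_
        calc (n : ℝ) = (n : ℝ) ^ (1 : ℝ) := (Real.rpow_one _).symm
          _ ≤ _ := Real.rpow_le_rpow_of_exponent_le hn' (by linarith [h3.1])
      have hle2 : fej L (Real.log n - y) ≤ L := (fej_le hL).trans (by linarith)
      have := mul_le_mul hle1 hle2 (fej_nonneg hL) (ha.trans hle1)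
      have h5 : 0 ≤ C / L * (vonMangoldt n / (n : ℝ) ^ (1 + ε) * fej 1 (Real.log n - y) +
        vonMangoldt n / (n : ℝ) ^ (1 + ε) * fej 1 (Real.log n - (y - Real.pi))) := by positivity
      linarith
    · rw [if_neg hnT, zero_add]
      have : δ < |Real.log n - y| := by
        by_contra h
        exact hnT ((hTmem n).2 ⟨hn, not_lt.1 h⟩)
      have h6 := mul_le_mul_of_nonneg_left (fej_tail hL hδ this) ha
      rw [show Real.log n - (y - Real.pi) = Real.log n - y + Real.pi by ring]
      refine h6.trans (le_of_eq ?_)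
      rw [← hC]
      ring

open ArithmeticFunction in
lemma summable_nonprime_s13 :
    Summable fun n : ℕ => (if n.Prime then 0 else vonMangoldt n) / (n : ℝ) := by
  have h2 : (vonMangoldt.residueClass (1 : ZMod 1)) = fun n => vonMangoldt n := by
    ext n
    simp [vonMangoldt.residueClass, Set.indicator, Subsingleton.elim (n : ZMod 1) 1]
  have := vonMangoldt.summable_residueClass_non_primes_div (1 : ZMod 1)
  rwa [h2] at this

open ArithmeticFunction in
theorem complement_of_small_value_set_finite
    (η σR : ℝ) (hη : 0 < η) (hσR : 0 < σR) (hσR' : σR < 1) (m : ℕ)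
    (ρ : ℝ → ℂ) (hρ : ContinuousOn ρ (Set.Ici (0 : ℝ)))
    (hsum : Summable (fun p : Nat.Primes =>
      ‖ρ (Real.log ((p : ℕ) : ℝ))‖ / (Real.log ((p : ℕ) : ℝ)) ^ m)) :
    {n : ℕ | 0 < n ∧
      ¬ ∃ r ∈ Set.Ioc (((n : ℝ) - 1 / 4) * η) (((n : ℝ) + 1 / 4) * η),
          ‖ρ r‖ ≤ Real.exp (-σR * r)}.Finite := by
  obtain ⟨c, hc, hkey⟩ := key (δ := η / 8) (by positivity)
  have hF : Summable (Set.indicator {p : ℕ | p.Prime}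
      (fun p : ℕ => ‖ρ (Real.log (p : ℝ))‖ / (Real.log (p : ℝ)) ^ m)) :=
    summable_subtype_iff_indicator.1 hsum
  have hQ := hF.add summable_nonprime_s13
  obtain ⟨s, hs⟩ := summable_iff_vanishing_norm.1 hQ c hc
  have hr : ∀ᶠ r : ℝ in atTop, r ^ (m + 1) ≤ Real.exp ((1 - σR) * r) := by
    have h1 := (isLittleO_pow_exp_pos_mul_atTop (k := m + 1)
      (show 0 < 1 - σR by linarith)).bound one_pos
    filter_upwards [h1] with r h1
    rw [one_mul, Real.norm_eq_abs, Real.norm_eq_abs, Real.abs_exp] at h1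
    exact (le_abs_self _).trans h1
  obtain ⟨r0, hr0⟩ := eventually_atTop.1 hr
  have hlim : Tendsto (fun n : ℕ => (n : ℝ) * η) atTop atTop :=
    tendsto_natCast_atTop_atTop.atTop_mul_const hη
  have hev := (hlim.eventually hkey).and ((hlim.eventually_ge_atTop (max r0 0 + η / 8 + 1)).and
    (hlim.eventually_gt_atTop (Real.log ((s.sup id : ℕ) + 1) + η / 8)))
  obtain ⟨N, hN⟩ := eventually_atTop.1 hev
  refine (Set.finite_lt_nat N).subset fun n hn => ?_
  by_contra hnN
  obtain ⟨⟨T, hT, hcT⟩, hy1, hy2⟩ := hN n (not_lt.1 hnN)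
  obtain ⟨-, hbad⟩ := hn
  push Not at hbad
  have hdisj : Disjoint T s := by
    rw [Finset.disjoint_left]
    intro k hk hks
    obtain ⟨hk0, hkl⟩ := hT k hk
    have h1 : k ≤ s.sup id := Finset.le_sup (f := id) hks
    have h2 : Real.log k ≤ Real.log ((s.sup id : ℕ) + 1) := by
      refine Real.log_le_log (by positivity) ?_
      have : (k : ℝ) ≤ (s.sup id : ℕ) := by exact_mod_cast h1
      linarith
    linarith [(abs_le.1 hkl).1]
  have hlt := (le_abs_self _).trans_lt (hs T hdisj)
  refine absurd (hcT.trans (Finset.sum_le_sum fun k hk => ?_)) (not_le.2 hlt)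
  obtain ⟨hk0, hkl⟩ := hT k hk
  have hk' : (0:ℝ) < k := by positivity
  by_cases hp : k.Prime
  · rw [Set.indicator_of_mem (show k ∈ {p : ℕ | p.Prime} from hp), if_pos hp, zero_div, add_zero,
      vonMangoldt_apply_prime hp]
    obtain ⟨hl1, hl2⟩ := abs_le.1 hkl
    have hb := hbad (Real.log k) ⟨by linarith, by linarith⟩
    have hl3 : max r0 0 + 1 ≤ Real.log k := by linarith
    have hlpos : 0 < Real.log k := by linarith [le_max_right r0 0]
    have h4 := hr0 (Real.log k) (by linarith [le_max_left r0 0])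
    refine le_trans ?_ (div_le_div_of_nonneg_right hb.le (pow_nonneg hlpos.le m))
    rw [div_le_div_iff₀ hk' (by positivity)]
    have h5 : Real.exp (-σR * Real.log k) * k = Real.exp ((1 - σR) * Real.log k) := by
      nth_rewrite 2 [← Real.exp_log hk']
      rw [← Real.exp_add]
      congr 1
      ring
    rw [h5, ← pow_succ']
    exact h4
  · rw [Set.indicator_of_notMem (show k ∉ {p : ℕ | p.Prime} from hp), if_neg hp, zero_add]
end
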